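/- arXiv:1607.04135 — 2 statements merged into one kernel-verified Lean document; each statement's English description precedes it below -/
import Mathlib

section
/- Let Δ ⊆ ℝ² be an LDP-polygon and let g_Δ denote its gauge function. Then v(Δ) + v(Δ*) = 12 · Σ_{n ∈ Δ ∩ ℤ²} (1 − g_Δ(n))², where the sum runs over all lattice points of Δ. (Equivalently, writing κ = −g_Δ for the piecewise linear function with value −1 on the boundary of Δ, one has v(Δ) + v(Δ*) = 12 · Σ_{n ∈ Δ ∩ ℤ²} (κ(n) + 1)².) -/
open MeasureTheory Filter Pointwise

noncomputable section

/-- The canonical embedding of a lattice point of `ℤ^d` into `ℝ^d`. -/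
def coeLat {d : ℕ} (n : Fin d → ℤ) : Fin d → ℝ := fun i => (n i : ℝ)

/-- The set of lattice points lying in a subset `S ⊆ ℝ^d`. -/
def latticePoints {d : ℕ} (S : Set (Fin d → ℝ)) : Set (Fin d → ℤ) :=
  {n | coeLat n ∈ S}

/-- A lattice polytope: the convex hull of finitely many points of `ℤ^d`. -/
def IsLatticePolytope {d : ℕ} (P : Set (Fin d → ℝ)) : Prop :=
  ∃ V : Finset (Fin d → ℤ), P = convexHull ℝ (coeLat '' (V : Set (Fin d → ℤ)))

/-- The dual (polar) body `P* = {y | ⟨y,x⟩ ≥ -1 ∀ x ∈ P}`. -/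
def polarDual {d : ℕ} (P : Set (Fin d → ℝ)) : Set (Fin d → ℝ) :=
  {y | ∀ x ∈ P, -1 ≤ ∑ i, y i * x i}

/-- Dimension of a subset of `ℝ^d`: the dimension of its affine span. -/
def dimSet {d : ℕ} (S : Set (Fin d → ℝ)) : ℕ :=
  Module.finrank ℝ (affineSpan ℝ S).direction

/-- An LDP-polygon: a 2-dimensional lattice polytope in `ℝ²` containing the origin
in its interior, all of whose vertices are primitive lattice vectors. -/
def IsLDP (Δ : Set (Fin 2 → ℝ)) : Prop :=
  IsLatticePolytope Δ ∧ dimSet Δ = 2 ∧ (0 : Fin 2 → ℝ) ∈ interior Δ ∧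
    ∀ x ∈ Set.extremePoints ℝ Δ, ∃ n : Fin 2 → ℤ, coeLat n = x ∧ Int.gcd (n 0) (n 1) = 1

/-- Normalized volume of a 2-dimensional compact convex set in `ℝ²`:
twice its Lebesgue area. -/
def v2 (P : Set (Fin 2 → ℝ)) : ℝ := 2 * (volume P).toReal


/-- Periodic first Bernoulli function on `ZMod N`. -/
def b1 (N : ℕ) (x : ZMod N) : ℝ := if x = 0 then 0 else (x.val : ℝ) / N - 1 / 2
/-- Periodic second Bernoulli function on `ZMod N`. -/
def b2 (N : ℕ) (x : ZMod N) : ℝ := ((x.val : ℝ) / N) ^ 2 - (x.val : ℝ) / N + 1 / 6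
/-- Indicator of zero. -/
def b0 (N : ℕ) (x : ZMod N) : ℝ := if x = 0 then 1 else 0

lemma b1_neg (N : ℕ) [NeZero N] (x : ZMod N) : b1 N (-x) = - b1 N x := by
  unfold b1
  by_cases h : x = 0
  · simp [h]
  · have hN : (N : ℝ) ≠ 0 := by exact_mod_cast NeZero.ne N
    simp only [neg_eq_zero, h, if_false]
    have : NeZero x := ⟨h⟩
    rw [ZMod.val_neg_of_ne_zero, Nat.cast_sub (ZMod.val_lt x).le]
    field_simp; ring

lemma b0_neg (N : ℕ) (x : ZMod N) : b0 N (-x) = b0 N x := by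
  simp [b0]

lemma b2_neg (N : ℕ) [NeZero N] (x : ZMod N) : b2 N (-x) = b2 N x := by
  unfold b2
  by_cases h : x = 0
  · simp [h]
  · have hN : (N : ℝ) ≠ 0 := by exact_mod_cast NeZero.ne N
    have : NeZero x := ⟨h⟩
    rw [ZMod.val_neg_of_ne_zero, Nat.cast_sub (ZMod.val_lt x).le]
    field_simp; ring

lemma b1_sq (N : ℕ) [NeZero N] (x : ZMod N) : b1 N x ^ 2 = b2 N x + 1 / 12 - b0 N x / 4 := by
  unfold b1 b2 b0
  split_ifs with h
  · simp [h]; norm_num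
  · ring

lemma b_three (N : ℕ) [NeZero N] (x y z : ZMod N) (h : x + y + z = 0) :
    b1 N x * b1 N y + b1 N y * b1 N z + b1 N z * b1 N x + (b2 N x + b2 N y + b2 N z) / 2
      = b0 N x * b0 N y / 4 := by
  have hN : (N : ℝ) ≠ 0 := by exact_mod_cast NeZero.ne N
  have hz : z = -(x + y) := by linear_combination h
  subst hz
  rw [b1_neg, b2_neg]
  by_cases hx : x = 0
  · subst hx
    by_cases hy : y = 0
    · subst hy; simp [b1, b2, b0]; norm_num
    · have := b1_sq N y
      have h0 : b0 N y = 0 := by simp [b0, hy]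
      have h1 : b1 N 0 = 0 := by simp [b1]
      have h2 : b2 N 0 = 1 / 6 := by simp [b2]
      rw [zero_add, h0, h1, h2]
      rw [h0] at this
      linear_combination -this
  · have hx0 : b0 N x = 0 := by simp [b0, hx]
    rw [hx0]
    by_cases hy : y = 0
    · subst hy
      have := b1_sq N x
      rw [hx0] at this
      have h1 : b1 N 0 = 0 := by simp [b1]
      have h2 : b2 N 0 = 1 / 6 := by simp [b2]
      rw [add_zero, h1, h2]
      linear_combination -this
    · by_cases hxy : x + y = 0
      · have hy' : y = -x := by linear_combination hxy
        subst hy'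
        have := b1_sq N x
        rw [hx0] at this
        have h1 : b1 N 0 = 0 := by simp [b1]
        have h2 : b2 N 0 = 1 / 6 := by simp [b2]
        rw [hxy, h1, h2, b1_neg, b2_neg]
        linear_combination -this
      · have hv := ZMod.val_add x y
        have hxl := ZMod.val_lt x
        have hyl := ZMod.val_lt y
        have : ((x + y).val : ℝ) = x.val + y.val ∨ ((x + y).val : ℝ) = x.val + y.val - N := by
          by_cases hlt : x.val + y.val < N
          · left; rw [hv, Nat.mod_eq_of_lt hlt]; push_cast; ring
          · right
            rw [hv, Nat.mod_eq_sub_mod (by omega), Nat.mod_eq_of_lt (by omega),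
              Nat.cast_sub (by omega)]; push_cast; ring
        simp only [b1, b2, hx, hy, hxy, if_false]
        rcases this with h | h <;> rw [h] <;> field_simp <;> ring

/-- Sum over multiples of `c` in a residue class. -/
lemma sum_prog (N a c : ℕ) [NeZero N] (hac : a * c = N) (f : ZMod N → ℝ) (y : ZMod N) :
    ∑ t : ZMod N, f (y + c * t) = c * ∑ j ∈ Finset.range a, f ((y.val % c + c * j : ℕ) : ZMod N) := by
  have hN := NeZero.ne N
  have ha : 0 < a := Nat.pos_of_ne_zero (by rintro rfl; simp at hac; exact hN hac.symm)
  have h1 : ∑ t : ZMod N, f (y + c * t) = ∑ t : ZMod N, f ((y.val % c : ℕ) + c * t) := by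
    refine Fintype.sum_equiv (Equiv.addRight ((y.val / c : ℕ) : ZMod N)) _ _ ?_
    intro t
    congr 1
    have : ((y.val : ℕ) : ZMod N) = y := ZMod.natCast_zmod_val y
    conv_lhs => rw [← this, ← Nat.mod_add_div y.val c]
    simp only [Equiv.coe_addRight]
    push_cast; ring
  rw [h1]
  have h2 : ∀ g : ZMod N → ℝ, ∑ t : ZMod N, g t = ∑ t ∈ Finset.range N, g (t : ZMod N) := by
    intro g
    refine Finset.sum_bij' (fun t _ => t.val) (fun t _ => (t : ZMod N)) ?_ ?_ ?_ ?_ ?_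
    · intro t _; simpa using ZMod.val_lt t
    · intro t _; simp
    · intro t _; simp
    · intro t ht; simpa using ZMod.val_cast_of_lt (by simpa using ht)
    · intro t _; simp
  rw [h2]
  have h3 : ∀ (n : ℕ) (g : ℕ → ℝ), (∀ t, g (t + a) = g t) →
      ∑ t ∈ Finset.range (a * n), g t = n * ∑ t ∈ Finset.range a, g t := by
    intro n g hg
    induction n with
    | zero => simp
    | succ n ih =>
      rw [mul_add, mul_one, Finset.sum_range_add, ih]
      have : ∀ x, g (a * n + x) = g x := by
        intro x
        clear ih
        induction n with
        | zero => simp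
        | succ n ih => rw [← ih, ← hg (a * n + x)]; congr 1; ring
      simp only [this]; push_cast; ring
  have h4 := h3 c (fun t => f ((y.val % c : ℕ) + c * (t : ZMod N))) ?_
  · rw [Finset.sum_congr (congrArg Finset.range hac.symm) (fun _ _ => rfl), h4]
    congr 1
    apply Finset.sum_congr rfl
    intro j _; congr 1; push_cast; ring
  · intro t
    congr 1
    have : (a : ZMod N) * c = 0 := by rw [← Nat.cast_mul, hac]; simp
    push_cast; linear_combination this

lemma dist_aux (N a c : ℕ) [NeZero N] (hac : a * c = N) (y : ZMod N) :
    0 < a ∧ 0 < c ∧ y.val % c < c ∧ ((a : ZMod N) * y) = ((a * (y.val % c) : ℕ) : ZMod N) ∧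
      a * (y.val % c) < N ∧ ∀ j < a, y.val % c + c * j < N := by
  have hN := NeZero.ne N
  have ha : 0 < a := Nat.pos_of_ne_zero (by rintro rfl; simp at hac; exact hN hac.symm)
  have hc : 0 < c := Nat.pos_of_ne_zero (by rintro rfl; simp at hac; exact hN hac.symm)
  have hr := Nat.mod_lt y.val hc
  refine ⟨ha, hc, hr, ?_, ?_, ?_⟩
  · have : ((y.val : ℕ) : ZMod N) = y := ZMod.natCast_zmod_val y
    conv_lhs => rw [← this, ← Nat.mod_add_div y.val c]
    have : (a : ZMod N) * c = 0 := by rw [← Nat.cast_mul, hac]; simp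
    push_cast; linear_combination (y.val / c : ℕ) * this
  · calc a * (y.val % c) < a * c := Nat.mul_lt_mul_of_pos_left hr ha
      _ = N := hac
  · intro j hj
    calc y.val % c + c * j < c + c * j := by omega
      _ = c * (j + 1) := by ring
      _ ≤ c * a := Nat.mul_le_mul_left _ hj
      _ = N := by rw [mul_comm, hac]

lemma natCast_eq_zero_of_lt (N n : ℕ) (h : n < N) : ((n : ℕ) : ZMod N) = 0 ↔ n = 0 := by
  rw [ZMod.natCast_eq_zero_iff]
  constructor
  · intro hd; exact Nat.eq_zero_of_dvd_of_lt hd h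
  · rintro rfl; simp

lemma b1_dist_nat (N a c : ℕ) [NeZero N] (hac : a * c = N) (y : ZMod N) :
    ∑ t : ZMod N, b1 N (y + c * t) = c * b1 N (a * y) := by
  obtain ⟨ha, hc, hr, hay, har, hj⟩ := dist_aux N a c hac y
  rw [sum_prog N a c hac, hay]
  congr 1
  set r := y.val % c
  have hN : (N : ℝ) = a * c := by exact_mod_cast hac.symm
  have ha' : (a : ℝ) ≠ 0 := by exact_mod_cast ha.ne'
  have hc' : (c : ℝ) ≠ 0 := by exact_mod_cast hc.ne'
  have e1 : ∀ n < N, b1 N (n : ZMod N) = (n : ℝ) / N - 1 / 2 + if n = 0 then 1 / 2 else 0 := by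
    intro n hn
    unfold b1
    simp only [natCast_eq_zero_of_lt N n hn]
    split_ifs with h
    · subst h; simp
    · rw [ZMod.val_cast_of_lt hn]; ring
  rw [e1 _ har, Finset.sum_congr rfl (fun j hjj => e1 _ (hj j (Finset.mem_range.mp hjj)))]
  rw [Finset.sum_add_distrib, Finset.sum_sub_distrib, ← Finset.sum_div]
  have e2 : ∑ j ∈ Finset.range a, (if r + c * j = 0 then (1 / 2 : ℝ) else 0) = if r = 0 then 1 / 2 else 0 := by
    rw [Finset.sum_eq_single 0]
    · simp
    · intro b _ hb; rw [if_neg]; have := Nat.mul_pos hc (Nat.pos_of_ne_zero hb); omega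
    · intro h; simp at h; omega
  have e3 : ∑ j ∈ Finset.range a, ((r + c * j : ℕ) : ℝ) = a * r + c * (a * (a - 1) / 2) := by
    push_cast
    rw [Finset.sum_add_distrib, ← Finset.mul_sum]
    have : ∑ j ∈ Finset.range a, (j : ℝ) = a * (a - 1) / 2 := by
      clear * -
      induction a with
      | zero => simp
      | succ n ih => rw [Finset.sum_range_succ, ih]; push_cast; ring
    rw [this]; simp
  rw [e2, e3]
  have e4 : (a * r = 0) = (r = 0) := by simp [ha.ne']
  simp only [e4]
  congr 1
  simp only [Finset.sum_const, Finset.card_range, nsmul_eq_mul]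
  push_cast
  rw [hN]; field_simp; ring

lemma b0_dist_nat (N a c : ℕ) [NeZero N] (hac : a * c = N) (y : ZMod N) :
    ∑ t : ZMod N, b0 N (y + c * t) = c * b0 N (a * y) := by
  obtain ⟨ha, hc, hr, hay, har, hj⟩ := dist_aux N a c hac y
  rw [sum_prog N a c hac, hay]
  congr 1
  set r := y.val % c
  unfold b0
  rw [Finset.sum_eq_single 0]
  · simp only [natCast_eq_zero_of_lt N _ har, natCast_eq_zero_of_lt N _ (hj 0 ha)]
    simp [ha.ne']
  · intro b hb' hb
    rw [if_neg]
    rw [natCast_eq_zero_of_lt N _ (hj b (Finset.mem_range.mp hb'))]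
    have := Nat.mul_pos hc (Nat.pos_of_ne_zero hb); omega
  · intro h; simp at h; omega

lemma b2_sum_nat (N a c : ℕ) [NeZero N] (hac : a * c = N) :
    ∑ t : ZMod N, b2 N (c * t) = (N : ℝ) / (6 * a ^ 2) := by
  obtain ⟨ha, hc, hr, hay, har, hj⟩ := dist_aux N a c hac 0
  have := sum_prog N a c hac (b2 N) 0
  simp only [zero_add, ZMod.val_zero, Nat.zero_mod] at this hj
  rw [this]
  have hN : (N : ℝ) = a * c := by exact_mod_cast hac.symm
  have ha' : (a : ℝ) ≠ 0 := by exact_mod_cast ha.ne'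
  have hc' : (c : ℝ) ≠ 0 := by exact_mod_cast hc.ne'
  have e1 : ∀ j ∈ Finset.range a, b2 N ((c * j : ℕ) : ZMod N)
      = ((j : ℝ) / a) ^ 2 - (j : ℝ) / a + 1 / 6 := by
    intro j hjj
    unfold b2
    rw [ZMod.val_cast_of_lt (hj j (Finset.mem_range.mp hjj)), hN]
    push_cast; field_simp
  rw [Finset.sum_congr rfl e1]
  have e2 : ∀ n : ℕ, ∑ j ∈ Finset.range n, (((j : ℝ) / a) ^ 2 - (j : ℝ) / a + 1 / 6)
      = ((n : ℝ) * (n - 1) * (2 * n - 1) / 6) / a ^ 2 - ((n : ℝ) * (n - 1) / 2) / a + n / 6 := by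
    intro n
    induction n with
    | zero => simp
    | succ n ih => rw [Finset.sum_range_succ, ih]; push_cast; field_simp; ring
  rw [e2, hN]; field_simp; ring

lemma sgn_split (N : ℕ) [NeZero N] (a c : ℤ) (hac : a * c = N) :
    ∃ a' c' : ℕ, a' * c' = N ∧ ((a = a' ∧ c = c') ∨ (a = -a' ∧ c = -c')) := by
  refine ⟨a.natAbs, c.natAbs, ?_, ?_⟩
  · rw [← Int.natAbs_mul, hac]; simp
  · have hN : (0 : ℤ) < N := by exact_mod_cast Nat.pos_of_ne_zero (NeZero.ne N)
    rw [← hac] at hN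
    rcases pos_and_pos_or_neg_and_neg_of_mul_pos hN with h | h
    · left; omega
    · right; omega

lemma b1_dist (N : ℕ) [NeZero N] (a c : ℤ) (hac : a * c = N) (y : ZMod N) :
    ∑ t : ZMod N, b1 N (y + c * t) = c * b1 N (a * y) := by
  obtain ⟨a', c', h, ⟨rfl, rfl⟩ | ⟨rfl, rfl⟩⟩ := sgn_split N a c hac
  · simpa using b1_dist_nat N a' c' h y
  · have := b1_dist_nat N a' c' h y
    rw [← Equiv.sum_comp (Equiv.neg (ZMod N))] at this
    simp only [Equiv.neg_apply] at this
    push_cast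
    simp only [neg_mul, b1_neg]
    simp only [mul_neg] at this
    rw [this]; ring

lemma b0_dist (N : ℕ) [NeZero N] (a c : ℤ) (hac : a * c = N) (y : ZMod N) :
    ∑ t : ZMod N, b0 N (y + c * t) = |(c : ℝ)| * b0 N (a * y) := by
  obtain ⟨a', c', h, ⟨rfl, rfl⟩ | ⟨rfl, rfl⟩⟩ := sgn_split N a c hac
  · simpa using b0_dist_nat N a' c' h y
  · have := b0_dist_nat N a' c' h y
    rw [← Equiv.sum_comp (Equiv.neg (ZMod N))] at this
    simp only [Equiv.neg_apply] at this
    push_cast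
    simp only [neg_mul, b0_neg]
    simp only [mul_neg] at this
    rw [this]; simp

lemma b2_sum (N : ℕ) [NeZero N] (a c : ℤ) (hac : a * c = N) :
    ∑ t : ZMod N, b2 N (c * t) = (N : ℝ) / (6 * a ^ 2) := by
  obtain ⟨a', c', h, ⟨rfl, rfl⟩ | ⟨rfl, rfl⟩⟩ := sgn_split N a c hac
  · simpa using b2_sum_nat N a' c' h
  · have := b2_sum_nat N a' c' h
    push_cast
    simp only [neg_mul, b2_neg]
    rw [this]; simp

/-- Determinant of integral vectors. -/
def dz (u w : Fin 2 → ℤ) : ℤ := u 0 * w 1 - u 1 * w 0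

/-- Determinant of an integral vector with a vector mod `N`. -/
def dm (N : ℕ) (u : Fin 2 → ℤ) (n : ZMod N × ZMod N) : ZMod N := u 0 * n.2 - u 1 * n.1

lemma avg_step (N : ℕ) [NeZero N] (f g : ZMod N × ZMod N → ZMod N) (F G : ZMod N → ℝ)
    (d : ZMod N × ZMod N) (a c : ZMod N) (lam : ℝ)
    (hf : ∀ n t, f (n + (t * d.1, t * d.2)) = f n)
    (hg : ∀ n t, g (n + (t * d.1, t * d.2)) = g n + c * t)
    (hG : ∀ y, ∑ t : ZMod N, G (y + c * t) = lam * G (a * y)) :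
    N * ∑ n, F (f n) * G (g n) = lam * ∑ n, F (f n) * G (a * g n) := by
  have h1 : ∀ t : ZMod N, ∑ n, F (f n) * G (g n) = ∑ n, F (f n) * G (g n + c * t) := by
    intro t
    rw [← Equiv.sum_comp (Equiv.addRight ((t * d.1, t * d.2) : ZMod N × ZMod N))]
    apply Finset.sum_congr rfl
    intro n _
    simp only [Equiv.coe_addRight]
    rw [hf, hg]
  have h2 : (N : ℝ) * ∑ n, F (f n) * G (g n) = ∑ t : ZMod N, ∑ n, F (f n) * G (g n + c * t) := by
    rw [← Finset.sum_congr rfl (fun t _ => h1 t)]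
    simp [ZMod.card]
  rw [h2, Finset.sum_comm, Finset.mul_sum]
  apply Finset.sum_congr rfl
  intro n _
  rw [← Finset.mul_sum, hG]; ring

lemma dm_add (N : ℕ) (u w : Fin 2 → ℤ) (n : ZMod N × ZMod N) (t : ZMod N) :
    dm N u (n + (t * (w 0 : ZMod N), t * (w 1 : ZMod N))) = dm N u n + (dz u w : ℤ) * t := by
  simp only [dm, dz, Prod.fst_add, Prod.snd_add]; push_cast; ring

lemma pair_b1 (N : ℕ) [NeZero N] (u w : Fin 2 → ℤ) (c1 c2 a1 a2 : ℤ)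
    (h1 : a1 * (c1 * dz u w) = N) (h2 : a2 * (c2 * dz u w) = N) :
    a1 * a2 * ∑ n, b1 N (c1 * dm N u n) * b1 N (c2 * dm N w n) =
      ∑ n, b1 N ((a1 * c1 : ℤ) * dm N u n) * b1 N ((a2 * c2 : ℤ) * dm N w n) := by
  have hN : (N : ℝ) ≠ 0 := by exact_mod_cast NeZero.ne N
  have h1' : (a1 : ℝ) * ((c1 * dz u w : ℤ) : ℝ) = N := by exact_mod_cast h1
  have h2' : (a2 : ℝ) * ((c2 * dz u w : ℤ) : ℝ) = N := by exact_mod_cast h2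
  have e1 := avg_step N (fun n => c1 * dm N u n) (fun n => c2 * dm N w n) (b1 N) (b1 N)
    (u 0, u 1) ((-a2 : ℤ) : ZMod N) ((-(c2 * dz u w) : ℤ)) ((-(c2 * dz u w) : ℤ) : ℝ)
    (by intro n t; simp only []; rw [dm_add]; simp only [dz]; push_cast; ring)
    (by intro n t; simp only []; rw [dm_add]; simp only [dz]; push_cast; ring)
    (by intro y; exact b1_dist N (-a2) (-(c2 * dz u w)) (by linarith) y)
  have e2 := avg_step N (fun n => (a2 * c2 : ℤ) * dm N w n) (fun n => c1 * dm N u n) (b1 N) (b1 N)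
    (w 0, w 1) ((a1 : ℤ) : ZMod N) (((c1 * dz u w) : ℤ)) (((c1 * dz u w) : ℤ) : ℝ)
    (by intro n t; simp only []; rw [dm_add]; simp only [dz]; push_cast; ring)
    (by intro n t; simp only []; rw [dm_add]; simp only [dz]; push_cast; ring)
    (by intro y; exact b1_dist N (a1) ((c1 * dz u w)) (by linarith) y)
  have e3 : ∀ n, b1 N (((-a2 : ℤ) : ZMod N) * (c2 * dm N w n)) = - b1 N ((a2 * c2 : ℤ) * dm N w n) := by
    intro n; rw [← b1_neg]; congr 1; push_cast; ring
  have e4 : ∀ n, b1 N (((a1 : ℤ) : ZMod N) * (c1 * dm N u n)) = b1 N ((a1 * c1 : ℤ) * dm N u n) := by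
    intro n; congr 1; push_cast; ring
  simp only [e3, mul_neg, Finset.sum_neg_distrib] at e1
  simp only [e4] at e2
  set A := ∑ n, b1 N (c1 * dm N u n) * b1 N (c2 * dm N w n)
  have e5 : ∑ n, b1 N (c1 * dm N u n) * b1 N ((a2 * c2 : ℤ) * dm N w n) = 
    ∑ n, b1 N ((a2 * c2 : ℤ) * dm N w n) * b1 N (c1 * dm N u n) := by
    simp only [mul_comm]
  rw [e5] at e1
  set B := ∑ n, b1 N ((a2 * c2 : ℤ) * dm N w n) * b1 N (c1 * dm N u n)
  have e6 : ∑ n, b1 N ((a1 * c1 : ℤ) * dm N u n) * b1 N ((a2 * c2 : ℤ) * dm N w n) = 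
    ∑ n, b1 N ((a2 * c2 : ℤ) * dm N w n) * b1 N ((a1 * c1 : ℤ) * dm N u n) := by
    simp only [mul_comm]
  rw [e6]
  set C := ∑ n, b1 N ((a2 * c2 : ℤ) * dm N w n) * b1 N ((a1 * c1 : ℤ) * dm N u n)
  have f1 : a2 * A = B := by
    apply mul_left_cancel₀ hN
    push_cast at e1 h2' ⊢
    linear_combination (a2 : ℝ) * e1 + B * h2'
  have f2 : a1 * B = C := by
    apply mul_left_cancel₀ hN
    push_cast at e2 h1' ⊢
    linear_combination (a1 : ℝ) * e2 + C * h1'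
  rw [mul_assoc, f1, f2]

lemma pair_b0 (N : ℕ) [NeZero N] (u w : Fin 2 → ℤ) (c1 c2 a1 a2 : ℤ)
    (h1 : a1 * (c1 * dz u w) = N) (h2 : a2 * (c2 * dz u w) = N) :
    |(a1 : ℝ)| * |(a2 : ℝ)| * ∑ n, b0 N (c1 * dm N u n) * b0 N (c2 * dm N w n) =
      ∑ n, b0 N ((a1 * c1 : ℤ) * dm N u n) * b0 N ((a2 * c2 : ℤ) * dm N w n) := by
  have hN : (N : ℝ) ≠ 0 := by exact_mod_cast NeZero.ne N
  have h1' : |(a1 : ℝ)| * |((c1 * dz u w : ℤ) : ℝ)| = N := by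
    rw [← abs_mul, ← Int.cast_mul, h1]; simp
  have h2' : |(a2 : ℝ)| * |((-(c2 * dz u w) : ℤ) : ℝ)| = N := by
    rw [← abs_mul, ← Int.cast_mul, mul_neg, h2]; simp
  have e1 := avg_step N (fun n => c1 * dm N u n) (fun n => c2 * dm N w n) (b0 N) (b0 N)
    (u 0, u 1) ((-a2 : ℤ) : ZMod N) ((-(c2 * dz u w) : ℤ)) |((-(c2 * dz u w) : ℤ) : ℝ)|
    (by intro n t; simp only []; rw [dm_add]; simp only [dz]; push_cast; ring)
    (by intro n t; simp only []; rw [dm_add]; simp only [dz]; push_cast; ring)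
    (by intro y; exact b0_dist N (-a2) (-(c2 * dz u w)) (by linarith) y)
  have e2 := avg_step N (fun n => (a2 * c2 : ℤ) * dm N w n) (fun n => c1 * dm N u n) (b0 N) (b0 N)
    (w 0, w 1) ((a1 : ℤ) : ZMod N) (((c1 * dz u w) : ℤ)) |(((c1 * dz u w) : ℤ) : ℝ)|
    (by intro n t; simp only []; rw [dm_add]; simp only [dz]; push_cast; ring)
    (by intro n t; simp only []; rw [dm_add]; simp only [dz]; push_cast; ring)
    (by intro y; exact b0_dist N (a1) ((c1 * dz u w)) (by linarith) y)
  have e3 : ∀ n, b0 N (((-a2 : ℤ) : ZMod N) * (c2 * dm N w n)) = b0 N ((a2 * c2 : ℤ) * dm N w n) := by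
    intro n; rw [← b0_neg]; congr 1; push_cast; ring
  have e4 : ∀ n, b0 N (((a1 : ℤ) : ZMod N) * (c1 * dm N u n)) = b0 N ((a1 * c1 : ℤ) * dm N u n) := by
    intro n; congr 1; push_cast; ring
  simp only [e3] at e1
  simp only [e4] at e2
  set A := ∑ n, b0 N (c1 * dm N u n) * b0 N (c2 * dm N w n)
  have e5 : ∑ n, b0 N (c1 * dm N u n) * b0 N ((a2 * c2 : ℤ) * dm N w n) = 
    ∑ n, b0 N ((a2 * c2 : ℤ) * dm N w n) * b0 N (c1 * dm N u n) := by
    simp only [mul_comm]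
  rw [e5] at e1
  set B := ∑ n, b0 N ((a2 * c2 : ℤ) * dm N w n) * b0 N (c1 * dm N u n)
  have e6 : ∑ n, b0 N ((a1 * c1 : ℤ) * dm N u n) * b0 N ((a2 * c2 : ℤ) * dm N w n) = 
    ∑ n, b0 N ((a2 * c2 : ℤ) * dm N w n) * b0 N ((a1 * c1 : ℤ) * dm N u n) := by
    simp only [mul_comm]
  rw [e6]
  set C := ∑ n, b0 N ((a2 * c2 : ℤ) * dm N w n) * b0 N ((a1 * c1 : ℤ) * dm N u n)
  have f1 : |(a2 : ℝ)| * A = B := by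
    apply mul_left_cancel₀ hN
    linear_combination |(a2 : ℝ)| * e1 + B * h2'
  have f2 : |(a1 : ℝ)| * B = C := by
    apply mul_left_cancel₀ hN
    linear_combination |(a1 : ℝ)| * e2 + C * h1'
  rw [mul_assoc, f1, f2]

lemma sum_basis (N : ℕ) [NeZero N] (u v w : Fin 2 → ℤ) (huv : dz u v = 1)
    (F : ZMod N → ZMod N → ℝ) :
    ∑ n, F (dm N u n) (dm N w n) =
      ∑ i : ZMod N, ∑ j : ZMod N, F j (-((dz u w : ℤ) * i + (dz v w : ℤ) * j)) := by
  have huv' : (u 0 : ZMod N) * v 1 - u 1 * v 0 = 1 := by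
    have := congrArg (fun z : ℤ => (z : ZMod N)) huv
    simpa [dz] using this
  let E : ZMod N × ZMod N ≃ ZMod N × ZMod N :=
    { toFun := fun p => (p.1 * u 0 + p.2 * v 0, p.1 * u 1 + p.2 * v 1)
      invFun := fun n => (n.1 * v 1 - n.2 * v 0, u 0 * n.2 - u 1 * n.1)
      left_inv := by
        rintro ⟨i, j⟩
        ext
        · simp only []; linear_combination i * huv'
        · simp only []; linear_combination j * huv'
      right_inv := by
        rintro ⟨i, j⟩
        ext
        · simp only []; linear_combination i * huv'
        · simp only []; linear_combination j * huv' }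
  rw [← Equiv.sum_comp E, Fintype.sum_prod_type]
  refine Finset.sum_congr rfl fun i _ => Finset.sum_congr rfl fun j _ => ?_
  congr 1
  · simp only [dm, E, Equiv.coe_fn_mk]; linear_combination j * huv'
  · simp only [dm, dz, E, Equiv.coe_fn_mk]; push_cast; ring

lemma exists_compl (u : Fin 2 → ℤ) (hu : Int.gcd (u 0) (u 1) = 1) : ∃ v : Fin 2 → ℤ, dz u v = 1 := by
  refine ⟨![-Int.gcdB (u 0) (u 1), Int.gcdA (u 0) (u 1)], ?_⟩
  have := Int.gcd_eq_gcd_ab (u 0) (u 1)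
  rw [hu] at this
  simp [dz]; push_cast at this; linarith

lemma sum_single (N : ℕ) [NeZero N] (u : Fin 2 → ℤ) (hu : Int.gcd (u 0) (u 1) = 1)
    (F : ZMod N → ℝ) : ∑ n, F (dm N u n) = N * ∑ j, F j := by
  obtain ⟨v, hv⟩ := exists_compl u hu
  rw [sum_basis N u v u hv (fun x _ => F x)]
  simp [ZMod.card]

lemma sum_b2 (N : ℕ) [NeZero N] (u : Fin 2 → ℤ) (hu : Int.gcd (u 0) (u 1) = 1) (a c : ℤ)
    (hac : a * c = N) : ∑ n, b2 N (c * dm N u n) = (N : ℝ) ^ 2 / (6 * a ^ 2) := by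
  rw [sum_single N u hu (fun x => b2 N (c * x)), b2_sum N a c hac]; ring

lemma sum_b0 (N : ℕ) [NeZero N] (u : Fin 2 → ℤ) (hu : Int.gcd (u 0) (u 1) = 1) (a c : ℤ)
    (hac : a * c = N) : ∑ n, b0 N (c * dm N u n) = (N : ℝ) ^ 2 / |(a : ℝ)| := by
  rw [sum_single N u hu (fun x => b0 N (c * x))]
  have := b0_dist N a c hac 0
  simp only [zero_add] at this
  rw [this]
  have h : |(a : ℝ)| * |(c : ℝ)| = N := by rw [← abs_mul, ← Int.cast_mul, hac]; simp
  have hN : (N : ℝ) ≠ 0 := by exact_mod_cast NeZero.ne N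
  have h0 : |(a : ℝ)| ≠ 0 := by intro h0; rw [h0] at h; simp at h; exact hN h.symm
  simp [b0]; field_simp; linear_combination h

lemma sum_b0b0 (N : ℕ) [NeZero N] (u w : Fin 2 → ℤ) (hu : Int.gcd (u 0) (u 1) = 1) (c : ℤ)
    (hac : dz u w * c = N) :
    ∑ n, b0 N (c * dm N u n) * b0 N (c * dm N w n) = (N : ℝ) ^ 2 / |(dz u w : ℝ)| := by
  obtain ⟨v, hv⟩ := exists_compl u hu
  rw [← sum_b0 N u hu _ c hac, sum_basis N u v w hv (fun x y => b0 N (c * x) * b0 N (c * y)),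
    sum_basis N u v w hv (fun x y => b0 N (c * x))]
  refine Finset.sum_congr rfl fun i _ => Finset.sum_congr rfl fun j _ => ?_
  by_cases h : (c : ZMod N) * j = 0
  · have h2 : (dz u w : ZMod N) * c = 0 := by
      rw [← Int.cast_mul, hac]; simp
    have : (c : ZMod N) * -(dz u w * i + dz v w * j) = 0 := by
      linear_combination (-i) * h2 - (dz v w : ZMod N) * h
    rw [this, h]; simp [b0]
  · simp [b0, h]

/-- The Dedekind-type sum. -/
def HH (N : ℕ) [NeZero N] (M : ℤ) (u w : Fin 2 → ℤ) : ℝ :=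
  ∑ n, b1 N (M * dm N u n) * b1 N (M * dm N w n)

lemma HH_neg (N : ℕ) [NeZero N] (M : ℤ) (u w : Fin 2 → ℤ) : HH N (-M) u w = HH N M u w := by
  unfold HH
  refine Finset.sum_congr rfl fun n _ => ?_
  push_cast
  rw [neg_mul, neg_mul, b1_neg, b1_neg]; ring

/-- Three-term reciprocity. -/
lemma three_term (N : ℕ) [NeZero N] (e u w : Fin 2 → ℤ) (he : Int.gcd (e 0) (e 1) = 1)
    (hu : Int.gcd (u 0) (u 1) = 1) (hw : Int.gcd (w 0) (w 1) = 1) (m h k q : ℤ)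
    (hm : dz u w = m) (hh : dz e u = h) (hk : dz e w = k) (hN : q * m * h * k = N) :
    -(m * HH N (q * h * k) u w) + k * HH N (q * h * m) w e - h * HH N (q * m * k) u e
      + (N : ℝ) ^ 2 / 12 * (m ^ 2 + h ^ 2 + k ^ 2) / (m * h * k)
      = (N : ℝ) ^ 2 / 4 * (m * h * k) / |(m * h * k : ℝ)| := by
  have hN0 : (N : ℝ) ≠ 0 := by exact_mod_cast NeZero.ne N
  have hNr : (q * m * h * k : ℝ) = N := by exact_mod_cast hN
  have hm0 : (m : ℝ) ≠ 0 := by intro h0; rw [h0] at hNr; simp at hNr; exact hN0 hNr.symm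
  have hh0 : (h : ℝ) ≠ 0 := by intro h0; rw [h0] at hNr; simp at hNr; exact hN0 hNr.symm
  have hk0 : (k : ℝ) ≠ 0 := by intro h0; rw [h0] at hNr; simp at hNr; exact hN0 hNr.symm
  have hwe : dz w e = -k := by rw [← hk]; simp [dz]; ring
  have hue : dz u e = -h := by rw [← hh]; simp [dz]; ring
  have p12 := pair_b1 N u w (q * k) (q * h) h k (by rw [hm, ← hN]; ring) (by rw [hm, ← hN]; ring)
  have p23 := pair_b1 N w e (q * h) (q * m) (-m) (-h) (by rw [hwe, ← hN]; ring)
    (by rw [hwe, ← hN]; ring)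
  have p13 := pair_b1 N u e (q * k) (q * m) (-m) (-k) (by rw [hue, ← hN]; ring)
    (by rw [hue, ← hN]; ring)
  have r12 : ∑ n, b1 N ((h * (q * k) : ℤ) * dm N u n) * b1 N ((k * (q * h) : ℤ) * dm N w n)
      = HH N (q * h * k) u w := by
    unfold HH; rw [show h * (q * k) = q * h * k by ring, show k * (q * h) = q * h * k by ring]
  have r23 : ∑ n, b1 N ((-m * (q * h) : ℤ) * dm N w n) * b1 N ((-h * (q * m) : ℤ) * dm N e n)
      = HH N (q * h * m) w e := by
    rw [← HH_neg]
    unfold HH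
    rw [show -m * (q * h) = -(q * h * m) by ring, show -h * (q * m) = -(q * h * m) by ring]
  have r13 : ∑ n, b1 N ((-m * (q * k) : ℤ) * dm N u n) * b1 N ((-k * (q * m) : ℤ) * dm N e n)
      = HH N (q * m * k) u e := by
    rw [← HH_neg]
    unfold HH
    rw [show -m * (q * k) = -(q * m * k) by ring, show -k * (q * m) = -(q * m * k) by ring]
  rw [r12] at p12
  rw [r23] at p23
  rw [r13] at p13
  have c0 := pair_b0 N u w (q * k) (q * h) h k (by rw [hm, ← hN]; ring) (by rw [hm, ← hN]; ring)
  rw [show h * (q * k) = q * h * k by ring, show k * (q * h) = q * h * k by ring,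
    sum_b0b0 N u w hu (q * h * k) (by rw [hm, ← hN]; ring), hm] at c0
  have s1 := sum_b2 N u hu (h * m) (q * k) (by rw [← hN]; ring)
  have s2 := sum_b2 N w hw (k * m) (q * h) (by rw [← hN]; ring)
  have s3 := sum_b2 N e he (h * k) (q * m) (by rw [← hN]; ring)
  have key : ∀ n : ZMod N × ZMod N, 
      -(b1 N ((q * k : ℤ) * dm N u n) * b1 N ((q * h : ℤ) * dm N w n)) 
      + b1 N ((q * h : ℤ) * dm N w n) * b1 N ((q * m : ℤ) * dm N e n)
      - b1 N ((q * k : ℤ) * dm N u n) * b1 N ((q * m : ℤ) * dm N e n)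
      + (b2 N ((q * k : ℤ) * dm N u n) + b2 N ((q * h : ℤ) * dm N w n)
          + b2 N ((q * m : ℤ) * dm N e n)) / 2
      = b0 N ((q * k : ℤ) * dm N u n) * b0 N ((q * h : ℤ) * dm N w n) / 4 := by
    intro n
    have := b_three N ((q * k : ℤ) * dm N u n) (-((q * h : ℤ) * dm N w n))
      (-((q * m : ℤ) * dm N e n)) (by
        rw [← hm, ← hh, ← hk]; simp only [dz, dm]; push_cast; ring)
    rw [b1_neg, b1_neg, b2_neg, b2_neg, b0_neg] at this
    linear_combination this
  have key2 := Finset.sum_congr (rfl : (Finset.univ : Finset (ZMod N × ZMod N)) = Finset.univ)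
    (fun n _ => key n)
  simp only [Finset.sum_add_distrib, Finset.sum_sub_distrib, Finset.sum_neg_distrib,
    ← Finset.sum_div] at key2
  rw [s1, s2, s3] at key2
  rw [← p12, ← p23, ← p13]
  set S12 := ∑ n, b1 N ((q * k : ℤ) * dm N u n) * b1 N ((q * h : ℤ) * dm N w n)
  set S23 := ∑ n, b1 N ((q * h : ℤ) * dm N w n) * b1 N ((q * m : ℤ) * dm N e n)
  set S13 := ∑ n, b1 N ((q * k : ℤ) * dm N u n) * b1 N ((q * m : ℤ) * dm N e n)
  set S0 := ∑ n, b0 N ((q * k : ℤ) * dm N u n) * b0 N ((q * h : ℤ) * dm N w n)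
  have hS0 : S0 = (N : ℝ) ^ 2 / |(m * h * k : ℝ)| := by
    rw [abs_mul, abs_mul]
    have := abs_pos.mpr hm0
    have := abs_pos.mpr hh0
    have := abs_pos.mpr hk0
    field_simp
    field_simp at c0
    linear_combination c0
  have : (N : ℝ) ^ 2 / 4 * (m * h * k) / |(m * h * k : ℝ)| = m * h * k * (S0 / 4) := by
    rw [hS0]; ring
  rw [this, ← key2]
  push_cast
  field_simp
  ring


/-- Lattice points of the half-open triangle spanned by `u, w`. -/
def TZ (u w : Fin 2 → ℤ) : Set (Fin 2 → ℤ) :=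
  {n | 0 < dz n w ∧ 0 ≤ dz u n ∧ dz n w + dz u n ≤ dz u w}

/-- The squared height function on the triangle. -/
def FZ (u w n : Fin 2 → ℤ) : ℝ := (1 - ((dz n w : ℝ) + dz u n) / dz u w) ^ 2

lemma dz_decomp (u v n : Fin 2 → ℤ) (huv : dz u v = 1) : n = dz n v • u + dz u n • v := by
  unfold dz at *
  funext i
  fin_cases i
  · simp; linear_combination (-n 0) * huv
  · simp; linear_combination (-n 1) * huv

lemma tri_finsum (u v w : Fin 2 → ℤ) (m : ℕ) (huv : dz u v = 1) (hm : dz u w = m) :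
    ∑ᶠ n ∈ TZ u w, FZ u w n =
      ∑ j ∈ (Finset.range m).filter (fun j : ℕ => 0 < j ∧ 0 < (dz v w * j) % m ∧ (j : ℤ) + (dz v w * j) % m < m),
        (1 - ((j : ℝ) + ((dz v w * j) % m : ℤ)) / m) ^ 2 := by
  classical
  set r := dz v w with hr
  let ψ : ℕ → (Fin 2 → ℤ) := fun j => (-(r * j / m)) • u + (j : ℤ) • v
  have dlin : ∀ (a b : ℤ), dz (a • u + b • v) w = a * m + b * r := by
    intro a b
    rw [← hm, hr]; simp [dz]; ring
  have dlin2 : ∀ (a b : ℤ), dz u (a • u + b • v) = b := by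
    intro a b
    have : dz u (a • u + b • v) = b * dz u v := by simp [dz]; ring
    rw [this, huv, mul_one]
  have hψ1 : ∀ j, dz (ψ j) w = (r * j) % m := by
    intro j
    simp only [ψ]
    rw [dlin, Int.emod_def]; ring
  have hψ2 : ∀ j, dz u (ψ j) = j := fun j => dlin2 _ _
  have hinj : Function.Injective ψ := by
    intro a b hab
    have := hψ2 a
    rw [hab, hψ2] at this
    exact_mod_cast this.symm
  set J := (Finset.range m).filter (fun j : ℕ => 0 < j ∧ 0 < (r * j) % m ∧ (j : ℤ) + (r * j) % m < m) with hJ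
  rw [finsum_mem_eq_sum_of_inter_support_eq (FZ u w) (t := J.image ψ)]
  · rw [Finset.sum_image (fun a _ b _ h => hinj h)]
    refine Finset.sum_congr rfl fun j _ => ?_
    unfold FZ
    rw [hψ1, hψ2, hm]; push_cast; ring
  · ext n
    simp only [Set.mem_inter_iff, Function.mem_support, Finset.coe_image]
    refine and_congr_left fun hF => ?_
    constructor
    · rintro ⟨h1, h2, h3⟩
      rw [hm] at h3
      have hm0 : 0 < (m : ℤ) := by omega
      have h4 : dz n w + dz u n ≠ m := by
        intro h
        apply hF
        unfold FZ
        have : (dz n w : ℝ) + dz u n = m := by exact_mod_cast h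
        have h0 : (m : ℝ) ≠ 0 := by exact_mod_cast hm0.ne'
        rw [this, hm]; simp [h0]
      have h5 := dz_decomp u v n huv
      set i := dz n v
      obtain ⟨j, hj⟩ := Int.eq_ofNat_of_zero_le h2
      rw [hj] at h5
      have h6 : dz n w = i * m + j * r := by
        conv_lhs => rw [h5]
        exact dlin i j
      have h7 : dz n w = (r * j) % m := by
        have : (r * j) % m = dz n w % m := by
          rw [h6, show i * (m : ℤ) + j * r = r * j + m * i by ring, Int.add_mul_emod_self_left]
        rw [this, Int.emod_eq_of_lt h1.le (by omega)]
      refine ⟨j, ?_, ?_⟩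
      · rw [hJ]
        simp only [Finset.coe_filter, Finset.mem_range, Set.mem_ofPred_eq]
        have hjpos : 0 < j := by
          by_contra hj0
          have : j = 0 := by omega
          subst this
          simp at h7; omega
        refine ⟨by omega, hjpos, by omega, by omega⟩
      · have h8 : i = -(r * j / m) := by
          have := Int.mul_ediv_add_emod (r * j) m
          have h9 : (m : ℤ) * i = m * -(r * j / m) := by rw [← h7] at this; linarith
          exact mul_left_cancel₀ hm0.ne' h9
        rw [h5, h8]
    · rintro ⟨j, hj, rfl⟩
      rw [hJ] at hj
      simp only [Finset.coe_filter, Finset.mem_range, Set.mem_ofPred_eq] at hj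
      refine ⟨?_, ?_, ?_⟩
      · rw [hψ1]; exact hj.2.2.1
      · rw [hψ2]; omega
      · rw [hψ1, hψ2, hm]; omega

lemma half_sum (m : ℕ) (r : ℤ) (hr : IsCoprime r (m : ℤ)) :
    ∑ j ∈ (Finset.range m).filter (fun j : ℕ => 0 < j),
        (1 - ((j : ℝ) + ((r * j) % m : ℤ)) / m) ^ 2
    = 2 * ∑ j ∈ (Finset.range m).filter (fun j : ℕ => 0 < j ∧ 0 < (r * j) % m ∧ (j : ℤ) + (r * j) % m < m),
        (1 - ((j : ℝ) + ((r * j) % m : ℤ)) / m) ^ 2 := by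
  have hρ : ∀ j : ℕ, 0 < j → j < m → 0 < (r * j) % m := by
    intro j h1 h2
    have := Int.emod_nonneg (r * j) (b := (m : ℤ)) (by omega)
    rcases this.lt_or_eq with h | h
    · exact h
    · exfalso
      have hd : (m : ℤ) ∣ r * j := Int.dvd_of_emod_eq_zero h.symm
      have hd2 : (m : ℤ) ∣ j := hr.symm.dvd_of_dvd_mul_left hd
      have := Nat.le_of_dvd h1 (Int.natCast_dvd_natCast.mp hd2)
      omega
  have hsym : ∀ j : ℕ, 0 < j → j < m → (r * ((m - j : ℕ) : ℤ)) % m = m - (r * j) % m := by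
    intro j h1 h2
    have e1 := hρ j h1 h2
    have e2 := Int.emod_lt_of_pos (r * j) (b := (m : ℤ)) (by omega)
    have : r * ((m - j : ℕ) : ℤ) = (m - (r * j) % m) + m * (r - 1 - r * j / m) := by
      have := Int.mul_ediv_add_emod (r * j) m
      rw [Nat.cast_sub h2.le]; linear_combination this
    rw [this, Int.add_mul_emod_self_left, Int.emod_eq_of_lt (by omega) (by omega)]
  set g : ℕ → ℝ := fun j => (1 - ((j : ℝ) + ((r * j) % m : ℤ)) / m) ^ 2 with hg
  set A := (Finset.range m).filter (fun j : ℕ => 0 < j)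
  have hfil : (Finset.range m).filter (fun j : ℕ => 0 < j ∧ 0 < (r * j) % m ∧ (j : ℤ) + (r * j) % m < m)
      = A.filter (fun j : ℕ => (j : ℤ) + (r * j) % m < m) := by
    ext j
    simp only [A, Finset.mem_filter, Finset.mem_range]
    constructor
    · rintro ⟨a, b, c, d⟩; exact ⟨⟨a, b⟩, d⟩
    · rintro ⟨⟨a, b⟩, d⟩; exact ⟨a, b, hρ j b a, d⟩
  rw [hfil, ← Finset.sum_filter_add_sum_filter_not A (fun j : ℕ => (j : ℤ) + (r * j) % m < m)]
  rw [two_mul]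
  congr 1
  have h1 : ∑ j ∈ A.filter (fun j : ℕ => ¬ ((j : ℤ) + (r * j) % m < m)), g j
      = ∑ j ∈ A.filter (fun j : ℕ => (m : ℤ) < (j : ℤ) + (r * j) % m), g j := by
    symm
    apply Finset.sum_subset
    · intro j; simp only [Finset.mem_filter]; rintro ⟨a, b⟩; exact ⟨a, by omega⟩
    · intro j hj hj'
      simp only [Finset.mem_filter, A, Finset.mem_range] at hj hj'
      have : (j : ℤ) + (r * j) % m = m := by omega
      have h2 : (j : ℝ) + ((r * j) % m : ℤ) = m := by exact_mod_cast this
      have h0 : (m : ℝ) ≠ 0 := by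
        have : m ≠ 0 := by omega
        exact_mod_cast this
      simp only [hg]
      rw [h2]; simp [h0]
  rw [h1]
  refine Finset.sum_bij' (fun j _ => m - j) (fun j _ => m - j) ?_ ?_ ?_ ?_ ?_
  · intro j hj
    simp only [Finset.mem_filter, A, Finset.mem_range] at hj ⊢
    rw [hsym j hj.1.2 hj.1.1]; omega
  · intro j hj
    simp only [Finset.mem_filter, A, Finset.mem_range] at hj ⊢
    rw [hsym j hj.1.2 hj.1.1]; omega
  · intro j hj; simp only [Finset.mem_filter, A, Finset.mem_range] at hj; omega
  · intro j hj; simp only [Finset.mem_filter, A, Finset.mem_range] at hj; omega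
  · intro j hj
    simp only [Finset.mem_filter, A, Finset.mem_range] at hj
    simp only [hg]
    rw [hsym j hj.1.2 hj.1.1]
    have h0 : (m : ℝ) ≠ 0 := by
      have : m ≠ 0 := by omega
      exact_mod_cast this
    rw [Nat.cast_sub (by omega)]
    push_cast
    field_simp
    ring

lemma dz_coprime (u v w : Fin 2 → ℤ) (huv : dz u v = 1) (hw : Int.gcd (w 0) (w 1) = 1) :
    IsCoprime (dz v w) (dz u w) := by
  obtain ⟨z, hz⟩ := exists_compl w hw
  refine ⟨- dz u z, dz v z, ?_⟩
  have : -dz u z * dz v w + dz v z * dz u w = dz u v * dz w z := by simp only [dz]; ring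
  rw [this, huv, hz]; rfl

lemma b1_mul (N M m : ℕ) [NeZero N] (hMm : m * M = N) (x : ℤ) :
    b1 N (M * x) = if x % m = 0 then 0 else ((x % m : ℤ) : ℝ) / m - 1 / 2 := by
  have hN := NeZero.ne N
  have hm : 0 < m := Nat.pos_of_ne_zero (by rintro rfl; simp at hMm; exact hN hMm.symm)
  have hM : 0 < M := Nat.pos_of_ne_zero (by rintro rfl; simp at hMm; exact hN hMm.symm)
  have h1 := Int.emod_nonneg x (b := (m : ℤ)) (by omega)
  have h2 := Int.emod_lt_of_pos x (b := (m : ℤ)) (by omega)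
  obtain ⟨ρ, hρ⟩ := Int.eq_ofNat_of_zero_le h1
  have h3 : (M : ZMod N) * x = ((M * ρ : ℕ) : ZMod N) := by
    have : (M : ZMod N) * (m : ZMod N) = 0 := by rw [mul_comm, ← Nat.cast_mul, hMm]; simp
    have hx := Int.mul_ediv_add_emod x m
    rw [hρ] at hx
    conv_lhs => rw [← hx]
    push_cast; linear_combination (x / m : ℤ) * this
  have h4 : M * ρ < N := by
    rw [← hMm, mul_comm m M]; apply Nat.mul_lt_mul_of_pos_left _ hM; omega
  rw [h3, hρ]
  unfold b1
  simp only [natCast_eq_zero_of_lt N _ h4]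
  have h5 : (M * ρ = 0) ↔ ((ρ : ℤ) = 0) := by simp [hM.ne']
  simp only [h5]
  split_ifs with h
  · rfl
  · rw [ZMod.val_cast_of_lt h4, ← hMm]
    have : (M : ℝ) ≠ 0 := by exact_mod_cast hM.ne'
    have : (m : ℝ) ≠ 0 := by exact_mod_cast hm.ne'
    push_cast
    field_simp

lemma cone_sum (N M m : ℕ) [NeZero N] (hMm : m * M = N) (u w : Fin 2 → ℤ)
    (hu : Int.gcd (u 0) (u 1) = 1) (hw : Int.gcd (w 0) (w 1) = 1) (hm : dz u w = m) :
    ∑ n, (b1 N (M * dm N u n) - b1 N (M * dm N w n)) ^ 2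
      = N * M * (2 * ∑ᶠ n ∈ TZ u w, FZ u w n) := by
  obtain ⟨v, hv⟩ := exists_compl u hu
  have hcop := dz_coprime u v w hv hw
  rw [hm] at hcop
  rw [tri_finsum u v w m hv hm, ← half_sum m _ hcop]
  rw [sum_basis N u v w hv (fun x y => (b1 N (M * x) - b1 N (M * y)) ^ 2)]
  set r := dz v w
  have hN := NeZero.ne N
  have hm0 : 0 < m := Nat.pos_of_ne_zero (by rintro rfl; simp at hMm; exact hN hMm.symm)
  have h1 : ∀ i j : ZMod N, (b1 N (M * j) - b1 N (M * -((dz u w : ℤ) * i + (r : ℤ) * j))) ^ 2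
      = (b1 N (0 + M * j) + b1 N (r * (0 + M * j))) ^ 2 := by
    intro i j
    have : (m : ZMod N) * (M : ZMod N) = 0 := by rw [← Nat.cast_mul, hMm]; simp
    have h2 : (M : ZMod N) * -((dz u w : ℤ) * i + (r : ℤ) * j) = -(r * (0 + M * j)) := by
      rw [hm]; push_cast; linear_combination (-i) * this
    rw [h2, b1_neg, zero_add]; ring
  simp only [h1]
  rw [sum_prog N m M hMm (fun x => (b1 N x + b1 N (r * x)) ^ 2) 0]
  simp only [ZMod.val_zero, Nat.zero_mod, zero_add]
  simp only [Finset.sum_const, Finset.card_univ, ZMod.card, nsmul_eq_mul]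
  rw [mul_assoc]
  congr 2
  rw [Finset.sum_filter]
  refine Finset.sum_congr rfl fun j hj => ?_
  have hj' := Finset.mem_range.mp hj
  have e1 := b1_mul N M m hMm j
  have e2 := b1_mul N M m hMm (r * j)
  have e3 : (r : ZMod N) * ((M * j : ℕ) : ZMod N) = M * ((r * j : ℤ) : ZMod N) := by push_cast; ring
  have e4 : ((M * j : ℕ) : ZMod N) = M * ((j : ℤ) : ZMod N) := by push_cast; ring
  rw [e3, e4, e1, e2, Int.emod_eq_of_lt (by omega) (by omega)]
  by_cases hj0 : j = 0
  · subst hj0; simp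
  · have hρ : ¬ ((r * j) % (m : ℤ) = 0) := by
      intro h0
      have hd : (m : ℤ) ∣ r * j := Int.dvd_of_emod_eq_zero h0
      have hd2 : (m : ℤ) ∣ j := hcop.symm.dvd_of_dvd_mul_left hd
      have := Nat.le_of_dvd (by omega) (Int.natCast_dvd_natCast.mp hd2)
      omega
    rw [if_neg (by omega), if_neg hρ, if_pos (by omega)]
    push_cast; ring

/-- Dual-free cone formula. -/
lemma cone_formula (N : ℕ) [NeZero N] (M : ℕ) (m : ℕ) (hMm : m * M = N) (u w : Fin 2 → ℤ)
    (hu : Int.gcd (u 0) (u 1) = 1) (hw : Int.gcd (w 0) (w 1) = 1) (hm : dz u w = m) :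
    12 * ∑ᶠ n ∈ TZ u w, FZ u w n = m - 3 + 2 / m - 12 * m * HH N M u w / N ^ 2 := by
  have h := cone_sum N M m hMm u w hu hw hm
  have hN : (N : ℝ) ≠ 0 := by exact_mod_cast NeZero.ne N
  have hMm' : (m : ℝ) * M = N := by exact_mod_cast hMm
  have hm0 : (m : ℝ) ≠ 0 := by intro h0; rw [h0] at hMm'; simp at hMm'; exact hN hMm'.symm
  have hMm'' : (m : ℤ) * (M : ℤ) = N := by exact_mod_cast hMm
  have sq : ∀ z : Fin 2 → ℤ, Int.gcd (z 0) (z 1) = 1 →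
      ∑ n, b1 N (M * dm N z n) ^ 2 = (N : ℝ) ^ 2 / (6 * m ^ 2) + N ^ 2 / 12 - N ^ 2 / (4 * m) := by
    intro z hz
    have s2 := sum_b2 N z hz m M hMm''
    have s0 := sum_b0 N z hz m M hMm''
    simp only [Int.cast_natCast, Nat.abs_cast] at s2 s0
    simp only [b1_sq, Finset.sum_add_distrib, Finset.sum_sub_distrib, ← Finset.sum_div]
    rw [s2, s0]
    simp [ZMod.card]
    field_simp
  have hHH : HH N M u w = ∑ n, b1 N (M * dm N u n) * b1 N (M * dm N w n) := by
    simp [HH]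
  have : ∑ n, (b1 N (M * dm N u n) - b1 N (M * dm N w n)) ^ 2
      = ∑ n, b1 N (M * dm N u n) ^ 2 + ∑ n, b1 N (M * dm N w n) ^ 2 - 2 * HH N M u w := by
    rw [hHH, Finset.mul_sum, ← Finset.sum_add_distrib, ← Finset.sum_sub_distrib]
    refine Finset.sum_congr rfl fun n _ => ?_
    ring
  rw [this, sq u hu, sq w hw] at h
  set S := ∑ᶠ n ∈ TZ u w, FZ u w n
  have hM : (M : ℝ) = N / m := by field_simp; linarith
  rw [hM] at h
  field_simp at h ⊢
  linear_combination (-1 / 48) * h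

/-- The telescoping term. -/
def tau (N : ℕ) [NeZero N] (e u : Fin 2 → ℤ) : ℝ := 12 * dz e u * HH N (N / dz e u) u e / N ^ 2

lemma cone_final (N : ℕ) [NeZero N] (e u w : Fin 2 → ℤ) (he : Int.gcd (e 0) (e 1) = 1)
    (hu : Int.gcd (u 0) (u 1) = 1) (hw : Int.gcd (w 0) (w 1) = 1)
    (hm : 0 < dz u w) (hN : dz u w * dz e u * dz e w ∣ N) :
    12 * ∑ᶠ n ∈ TZ u w, FZ u w n = (dz u w : ℝ) - 3 + 2 / dz u w
      + 3 * SignType.sign ((dz e u : ℝ) * dz e w)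
      - ((dz u w : ℝ) ^ 2 + dz e u ^ 2 + dz e w ^ 2) / (dz u w * dz e u * dz e w)
      + tau N e u - tau N e w := by
  obtain ⟨q, hq⟩ := hN
  have hN0 : (N : ℝ) ≠ 0 := by exact_mod_cast NeZero.ne N
  have hN0' : (N : ℤ) ≠ 0 := by exact_mod_cast NeZero.ne N
  have ht := three_term N e u w he hu hw _ _ _ q rfl rfl rfl (by rw [hq]; ring)
  set h := dz e u with hh
  set k := dz e w with hk
  obtain ⟨m, hmm⟩ := Int.eq_ofNat_of_zero_le hm.le
  rw [hmm] at ht hq hm ⊢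
  have hh0 : h ≠ 0 := by intro h0; rw [h0] at hq; simp at hq; exact NeZero.ne N hq
  have hk0 : k ≠ 0 := by intro h0; rw [h0] at hq; simp at hq; exact NeZero.ne N hq
  have hpos : 0 < h * k * q := by
    have h1 : (0 : ℤ) < N := by positivity
    rw [hq] at h1
    have : (m : ℤ) * h * k * q = m * (h * k * q) := by ring
    rw [this] at h1
    exact (pos_iff_pos_of_mul_pos h1).mp hm
  obtain ⟨M, hM⟩ := Int.eq_ofNat_of_zero_le hpos.le
  have hMN : m * M = N := by
    have : (m : ℤ) * M = N := by rw [hq, ← hM]; ring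
    exact_mod_cast this
  have hc := cone_formula N M m hMN u w hu hw hmm
  have d1 : (N : ℤ) / h = q * m * k := by
    rw [hq]; apply Int.ediv_eq_of_eq_mul_left hh0; ring
  have d2 : (N : ℤ) / k = q * h * m := by
    rw [hq]; apply Int.ediv_eq_of_eq_mul_left hk0; ring
  have d3 : (M : ℤ) = q * h * k := by rw [← hM]; ring
  simp only [tau]
  rw [← hh, ← hk, d1, d2, hc, d3]
  have hsgn : ((m : ℤ) * h * k : ℝ) / |((m : ℤ) * h * k : ℝ)| = SignType.sign ((h : ℝ) * k) := by
    have hmr : (0 : ℝ) < (m : ℤ) := by exact_mod_cast hm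
    have hhk : (h : ℝ) * k ≠ 0 := by
      have : h * k ≠ 0 := mul_ne_zero hh0 hk0
      exact_mod_cast this
    rw [mul_assoc, abs_mul, abs_of_pos hmr]
    rcases lt_or_gt_of_ne hhk with h1 | h1
    · rw [abs_of_neg h1, sign_neg h1, div_eq_iff (mul_ne_zero hmr.ne' (by linarith))]
      simp
    · rw [abs_of_pos h1, sign_pos h1, div_eq_iff (mul_ne_zero hmr.ne' (by linarith))]
      simp
  have h3 : (N : ℝ) ^ 2 / 4 * ((m : ℤ) * h * k) / |((m : ℤ) * h * k : ℝ)|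
      = (N : ℝ) ^ 2 / 4 * SignType.sign ((h : ℝ) * k) := by
    rw [← hsgn]; ring
  rw [h3] at ht
  have hmr : (m : ℝ) ≠ 0 := by
    have : (m : ℤ) ≠ 0 := hm.ne'
    exact_mod_cast this
  have hhr : (h : ℝ) ≠ 0 := by exact_mod_cast hh0
  have hkr : (k : ℝ) ≠ 0 := by exact_mod_cast hk0
  push_cast at ht ⊢
  have e1 : 12 * (m : ℝ) * HH N (q * h * k) u w / N ^ 2 = 
     (12 / (N : ℝ) ^ 2) * (m * HH N (q * h * k) u w) := by ring
  have ht' := congrArg (fun x => 12 / (N : ℝ) ^ 2 * x) ht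
  have e2 : 12 / (N : ℝ) ^ 2 * ((N : ℝ) ^ 2 / 4 * (SignType.sign ((h : ℝ) * k) : ℝ)) = 3 * (SignType.sign ((h : ℝ) * k) : ℝ) := by
    field_simp; ring
  have e3 : 12 / (N : ℝ) ^ 2 * ((N : ℝ) ^ 2 / 12 * ((m : ℝ) ^ 2 + h ^ 2 + k ^ 2) / (m * h * k))
     = ((m : ℝ) ^ 2 + h ^ 2 + k ^ 2) / (m * h * k) := by
    field_simp
  rw [e2, mul_add, e3] at ht'
  rw [← ht']
  ring

/-- Determinant of real vectors. -/
def dr (u w : Fin 2 → ℝ) : ℝ := u 0 * w 1 - u 1 * w 0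
/-- Dot product. -/
def dp (u w : Fin 2 → ℝ) : ℝ := u 0 * w 0 + u 1 * w 1

/-- Combinatorial data of a convex polygon around the origin. -/
structure Fan (X : Finset (Fin 2 → ℝ)) (nx : (Fin 2 → ℝ) → (Fin 2 → ℝ)) : Prop where
  mem : ∀ u ∈ X, nx u ∈ X
  pos : ∀ u ∈ X, 0 < dr u (nx u)
  le : ∀ u ∈ X, ∀ x ∈ X, dr u x + dr x (nx u) ≤ dr u (nx u)
  eq : ∀ u ∈ X, ∀ x ∈ X, dr u x + dr x (nx u) = dr u (nx u) → x = u ∨ x = nx u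
  full : ∀ y, y ≠ 0 → ∃ x ∈ X, 0 < dr y x

/-- The half open cone. -/
def Cn (u w y : Fin 2 → ℝ) : Prop := 0 < dr y w ∧ 0 ≤ dr u y

lemma dp_self_pos (y : Fin 2 → ℝ) (hy : y ≠ 0) : 0 < dp y y := by
  have h : y 0 ≠ 0 ∨ y 1 ≠ 0 := by
    by_contra! h
    apply hy; funext i; fin_cases i
    · exact h.1
    · exact h.2
  unfold dp
  rcases h with h | h
  · have := mul_self_pos.mpr h; have := mul_self_nonneg (y 1); linarith
  · have := mul_self_pos.mpr h; have := mul_self_nonneg (y 0); linarith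

lemma lin_le {X : Finset (Fin 2 → ℝ)} {Δ : Set (Fin 2 → ℝ)} (hΔ : Δ = convexHull ℝ (X : Set (Fin 2 → ℝ)))
    (a b c : ℝ) (h : ∀ x ∈ X, a * x 0 + b * x 1 ≤ c) : ∀ x ∈ Δ, a * x 0 + b * x 1 ≤ c := by
  have : Δ ⊆ {x : Fin 2 → ℝ | a * x 0 + b * x 1 ≤ c} := by
    rw [hΔ]
    apply convexHull_min
    · intro x hx; exact h x hx
    · intro x hx y hy s t hs ht hst
      simp only [Set.mem_ofPred_eq, Pi.add_apply, Pi.smul_apply, smul_eq_mul] at *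
      calc a * (s * x 0 + t * y 0) + b * (s * x 1 + t * y 1)
          = s * (a * x 0 + b * x 1) + t * (a * y 0 + b * y 1) := by ring
        _ ≤ s * c + t * c := by gcongr
        _ = c := by rw [← add_mul, hst, one_mul]
  exact this

lemma small_mem {Δ : Set (Fin 2 → ℝ)} (h0 : (0 : Fin 2 → ℝ) ∈ interior Δ) (p : Fin 2 → ℝ) :
    ∃ t : ℝ, 0 < t ∧ t • p ∈ Δ ∧ (-t) • p ∈ Δ := by
  have hn : Δ ∈ nhds (0 : Fin 2 → ℝ) := mem_interior_iff_mem_nhds.mp h0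
  have hc : Continuous (fun t : ℝ => t • p) := by fun_prop
  have hc' : Continuous (fun t : ℝ => (-t) • p) := by fun_prop
  have h1 : ∀ᶠ t in nhds (0 : ℝ), t • p ∈ Δ := by
    apply hc.continuousAt.eventually_mem; simpa using hn
  have h2 : ∀ᶠ t in nhds (0 : ℝ), (-t) • p ∈ Δ := by
    apply hc'.continuousAt.eventually_mem; simpa using hn
  obtain ⟨ε, hε, h⟩ := Metric.eventually_nhds_iff.mp (h1.and h2)
  have := h (y := ε / 2) (by simp [abs_of_pos hε, hε])
  exact ⟨ε / 2, by positivity, this.1, this.2⟩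

lemma fan_full {X : Finset (Fin 2 → ℝ)} {Δ : Set (Fin 2 → ℝ)} (hΔ : Δ = convexHull ℝ (X : Set (Fin 2 → ℝ)))
    (h0 : (0 : Fin 2 → ℝ) ∈ interior Δ) (y : Fin 2 → ℝ) (hy : y ≠ 0) : ∃ x ∈ X, 0 < dr y x := by
  by_contra! h
  obtain ⟨t, ht, hm, -⟩ := small_mem h0 ![-y 1, y 0]
  have := lin_le hΔ (-y 1) (y 0) 0 (fun x hx => by have := h x hx; unfold dr at this; linarith) _ hm
  simp at this
  have hp := dp_self_pos y hy
  unfold dp at hp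
  have : t * (y 0 * y 0 + y 1 * y 1) ≤ 0 := by linarith
  have := mul_pos ht hp
  linarith

lemma ext_ne_zero {Δ : Set (Fin 2 → ℝ)} (h0 : (0 : Fin 2 → ℝ) ∈ interior Δ) (u : Fin 2 → ℝ)
    (hu : u ∈ Set.extremePoints ℝ Δ) : u ≠ 0 := by
  rintro rfl
  obtain ⟨t, ht, hm, hm'⟩ := small_mem h0 ![1, 0]
  have := (mem_extremePoints.mp hu).2 _ hm _ hm' ⟨1 / 2, 1 / 2, by norm_num, by norm_num, by norm_num, by
    simp⟩
  have h := congrFun this.1 0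
  simp at h
  exact ht.ne' h

lemma exists_fan {X : Finset (Fin 2 → ℝ)} {Δ : Set (Fin 2 → ℝ)} (hΔ : Δ = convexHull ℝ (X : Set (Fin 2 → ℝ)))
    (h0 : (0 : Fin 2 → ℝ) ∈ interior Δ) (hX : ∀ x ∈ X, x ∈ Set.extremePoints ℝ Δ) :
    ∃ nx, Fan X nx := by
  classical
  have hconv : Convex ℝ Δ := by rw [hΔ]; exact convex_convexHull ℝ _
  have hsub : ∀ x ∈ X, x ∈ Δ := fun x hx => (hX x hx).1
  have h0m : (0 : Fin 2 → ℝ) ∈ Δ := interior_subset h0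
  have hext : ∀ x ∈ X, ∀ p ∈ Δ, ∀ q ∈ Δ, ∀ s t : ℝ, 0 < s → 0 < t → s + t = 1 →
      x 0 = s * p 0 + t * q 0 → x 1 = s * p 1 + t * q 1 → p = x ∧ q = x := by
    intro x hx p hp q hq s t hs ht hst e0 e1
    refine (mem_extremePoints.mp (hX x hx)).2 p hp q hq ⟨s, t, hs, ht, hst, ?_⟩
    funext i; fin_cases i
    · simp [e0]
    · simp [e1]
  have hne : ∀ u ∈ X, ∃ w ∈ X, 0 < dr u w ∧ ∀ x ∈ X, dr u x + dr x w ≤ dr u w := by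
    intro u hu
    have hu0 := ext_ne_zero h0 u (hX u hu)
    have hpu := dp_self_pos u hu0
    obtain ⟨x0, hx0, hx0'⟩ := fan_full hΔ h0 u hu0
    obtain ⟨w, hw, hmin⟩ := Finset.exists_min_image (X.filter fun x => 0 < dr u x)
      (fun x => (dp u u - dp x u) / dr u x) ⟨x0, by simp [hx0, hx0']⟩
    simp only [Finset.mem_filter] at hw hmin
    refine ⟨w, hw.1, hw.2, ?_⟩
    intro x hx
    by_cases hpos : 0 < dr u x
    · have := hmin x ⟨hx, hpos⟩
      rw [div_le_div_iff₀ hw.2 hpos] at this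
      have h2 : dp u u * (dr u x + dr x w - dr u w) ≤ 0 := by
        have : dp u u * (dr u x + dr x w - dr u w) = 
          (dp u u - dp w u) * dr u x - (dp u u - dp x u) * dr u w := by
          simp only [dp, dr]; ring
        linarith
      have := nonpos_of_mul_nonpos_right h2 hpu
      linarith
    · by_contra! hcon
      push Not at hpos
      set d := dr u w with hd
      set b := dr u x with hb
      have hdb : 0 < d - b := by linarith [hw.2]
      have hc : 0 < dr x w := by linarith
      -- the point P
      have hP : (d / (d - b)) • x + (-b / (d - b)) • w ∈ Δ := by
        apply hconv (hsub x hx) (hsub w hw.1)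
        · exact div_nonneg hw.2.le hdb.le
        · exact div_nonneg (by linarith) hdb.le
        · field_simp; ring
      have hcc := hext u hu 0 h0m _ hP (1 - (d - b) / dr x w) ((d - b) / dr x w) (by
          rw [sub_pos, div_lt_one hc]; linarith) (by positivity) (by ring) 
          (by simp; field_simp; rw [hd, hb]; simp only [dr]; ring) 
          (by simp; field_simp; rw [hd, hb]; simp only [dr]; ring)
      exact hu0 hcc.1.symm
  choose! nx h1 h2 h3 using hne
  refine ⟨nx, h1, h2, h3, ?_, fan_full hΔ h0⟩
  intro u hu x hx he
  have hd := h2 u hu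
  have hw := h1 u hu
  set w := nx u
  set d := dr u w with hdd
  have hu0 := ext_ne_zero h0 u (hX u hu)
  have huw : u ≠ w := by intro h; rw [hdd, ← h] at hd; simp [dr] at hd; linarith
  have hx0 : d * x 0 = dr x w * u 0 + dr u x * w 0 := by rw [hdd]; simp only [dr]; ring
  have hx1 : d * x 1 = dr x w * u 1 + dr u x * w 1 := by rw [hdd]; simp only [dr]; ring
  have ha : dr x w = d - dr u x := by linarith
  rw [ha] at hx0 hx1
  set t := dr u x
  rcases lt_trichotomy t 0 with ht | ht | ht
  · -- u between x and w
    have := hext u hu x (hsub x hx) w (hsub w hw) (d / (d - t)) (-t / (d - t))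
      (div_pos hd (by linarith)) (div_pos (by linarith) (by linarith)) (by
        have : d - t ≠ 0 := by linarith
        field_simp; ring)
      (by
        have : d - t ≠ 0 := by linarith
        field_simp; linarith)
      (by
        have : d - t ≠ 0 := by linarith
        field_simp; linarith)
    exact absurd this.2.symm huw
  · left
    rw [ht] at hx0 hx1
    funext i; fin_cases i
    · exact mul_left_cancel₀ hd.ne' (by linarith : d * x 0 = d * u 0)
    · exact mul_left_cancel₀ hd.ne' (by linarith : d * x 1 = d * u 1)
  · rcases lt_trichotomy t d with ht2 | ht2 | ht2
    · have := hext x hx u (hsub u hu) w (hsub w hw) ((d - t) / d) (t / d)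
        (div_pos (by linarith) hd) (div_pos ht hd) (by field_simp; ring)
        (by field_simp; linarith) (by field_simp; linarith)
      left; exact this.1.symm
    · right
      rw [ht2] at hx0 hx1
      funext i; fin_cases i
      · exact mul_left_cancel₀ hd.ne' (by linarith : d * x 0 = d * w 0)
      · exact mul_left_cancel₀ hd.ne' (by linarith : d * x 1 = d * w 1)
    · have := hext w hw u (hsub u hu) x (hsub x hx) ((t - d) / t) (d / t)
        (div_pos (by linarith) ht) (div_pos hd ht) (by field_simp; ring)
        (by field_simp; linarith) (by field_simp; linarith)
      exact absurd this.1 huw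

namespace Fan
variable {X : Finset (Fin 2 → ℝ)} {nx : (Fin 2 → ℝ) → (Fin 2 → ℝ)}

lemma ne_zero (F : Fan X nx) {u : Fin 2 → ℝ} (hu : u ∈ X) : u ≠ 0 := by
  rintro rfl
  have := F.pos _ hu
  simp [dr] at this

lemma inj (F : Fan X nx) : Set.InjOn nx X := by
  intro u hu u' hu' h
  have h1 := F.le u hu u' hu'
  have h2 := F.le u' hu' u hu
  have p2 := F.pos u' hu'
  have h3 : dr u u' = - dr u' u := by simp only [dr]; ring
  rw [← h] at h2 p2
  rcases F.eq u hu u' hu' (by linarith) with h4 | h4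
  · exact h4.symm
  · rw [h4] at p2; exfalso; simp only [dr] at p2; linarith

lemma sum_nx (F : Fan X nx) (f : (Fin 2 → ℝ) → ℝ) : ∑ u ∈ X, f (nx u) = ∑ u ∈ X, f u := by
  classical
  have himg : X.image nx = X := by
    apply Finset.eq_of_subset_of_card_le
    · intro x hx
      obtain ⟨u, hu, rfl⟩ := Finset.mem_image.mp hx
      exact F.mem u hu
    · rw [Finset.card_image_of_injOn F.inj]
  conv_rhs => rw [← himg]
  rw [Finset.sum_image F.inj]

lemma surj (F : Fan X nx) {w : Fin 2 → ℝ} (hw : w ∈ X) : ∃ u ∈ X, nx u = w := by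
  classical
  have himg : X.image nx = X := by
    apply Finset.eq_of_subset_of_card_le
    · intro x hx
      obtain ⟨u, hu, rfl⟩ := Finset.mem_image.mp hx
      exact F.mem u hu
    · rw [Finset.card_image_of_injOn F.inj]
  rw [← himg] at hw
  simpa using hw

lemma cover (F : Fan X nx) (y : Fin 2 → ℝ) (hy : y ≠ 0) : ∃ u ∈ X, Cn u (nx u) y := by
  classical
  have hpy := dp_self_pos y hy
  by_cases hpar : ∃ u ∈ X, dr u y = 0 ∧ 0 < dp u y
  · obtain ⟨u, hu, h1, h2⟩ := hpar
    refine ⟨u, hu, ?_, h1.ge⟩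
    have hpu := dp_self_pos u (F.ne_zero hu)
    have h3 : dp u u * dr y (nx u) = dp u y * dr u (nx u) - dr u y * dp u (nx u) := by
      simp only [dp, dr]; ring
    rw [h1, zero_mul, sub_zero] at h3
    have := mul_pos h2 (F.pos u hu)
    rw [← h3] at this
    exact (pos_iff_pos_of_mul_pos this).mp hpu
  · push Not at hpar
    obtain ⟨x0, hx0, hx0'⟩ := F.full (-y) (by simpa using hy)
    have hx0'' : 0 < dr x0 y := by simp only [dr, Pi.neg_apply] at *; linarith
    obtain ⟨u, hu, hmax⟩ := Finset.exists_max_image (X.filter fun x => 0 < dr x y)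
      (fun x => dp x y / dr x y) ⟨x0, by simp [hx0, hx0'']⟩
    simp only [Finset.mem_filter] at hu hmax
    refine ⟨u, hu.1, ?_, hu.2.le⟩
    by_contra! hcon
    have hw := F.mem u hu.1
    have hp := F.pos u hu.1
    set w := nx u
    have hwy : 0 ≤ dr w y := by simp only [dr] at *; linarith
    have hid : dr u w * dp y y = dr u y * dp w y - dr w y * dp u y := by simp only [dr, dp]; ring
    have hidp := mul_pos hp hpy
    rcases hwy.lt_or_eq with h | h
    · have := hmax w ⟨hw, h⟩
      rw [div_le_div_iff₀ h hu.2] at this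
      linarith
    · rw [← h] at hid
      have : 0 < dr u y * dp w y := by linarith
      have := (pos_iff_pos_of_mul_pos this).mp hu.2
      have := hpar w hw h.symm
      linarith

lemma expand (u w y z : Fin 2 → ℝ) : dr u w * dr z y = dr y w * dr z u + dr u y * dr z w := by
  simp only [dr]; ring

lemma uniq (F : Fan X nx) (y : Fin 2 → ℝ) {u u' : Fin 2 → ℝ} (hu : u ∈ X) (hu' : u' ∈ X)
    (h : Cn u (nx u) y) (h' : Cn u' (nx u') y) : u = u' := by
  have key : ∀ u ∈ X, ∀ u' ∈ X, Cn u (nx u) y → 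
      dr u (nx u) * (dr u' y + dr y (nx u')) ≤ 
        dr y (nx u) * (dr u' u + dr u (nx u')) + dr u y * dr u' (nx u') := by
    intro u hu u' hu' h
    have e1 := F.le u' hu' (nx u) (F.mem u hu)
    have : dr u (nx u) * (dr u' y + dr y (nx u')) = dr y (nx u) * (dr u' u + dr u (nx u'))
        + dr u y * (dr u' (nx u) + dr (nx u) (nx u')) := by simp only [dr]; ring
    rw [this]
    have := mul_le_mul_of_nonneg_left e1 h.2
    linarith
  have k1 := key u hu u' hu' h
  have k2 := key u' hu' u hu h'
  have l1 := F.le u' hu' u hu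
  have l2 := F.le u hu u' hu'
  have p1 := F.pos u hu
  have p2 := F.pos u' hu'
  have m1 := mul_le_mul_of_nonneg_left l1 h.1.le
  have m2 := mul_le_mul_of_nonneg_left l2 h'.1.le
  have q1 : dr u' u + dr u (nx u') = dr u' (nx u') := by
    by_contra hne
    have := mul_lt_mul_of_pos_left (lt_of_le_of_ne l1 hne) h.1
    nlinarith
  have q2 : dr u u' + dr u' (nx u) = dr u (nx u) := by
    by_contra hne
    have := mul_lt_mul_of_pos_left (lt_of_le_of_ne l2 hne) h'.1
    nlinarith
  rcases F.eq u' hu' u hu q1 with e | e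
  · exact e
  · rcases F.eq u hu u' hu' q2 with e' | e'
    · exact e'.symm
    · exfalso
      rw [← e'] at p1
      rw [← e] at p2
      simp only [dr] at p1 p2; linarith

lemma sum_ind (F : Fan X nx) (y : Fin 2 → ℝ) (hy : y ≠ 0) : 
    ∑ u ∈ X, (open Classical in if Cn u (nx u) y then (1 : ℝ) else 0) = 1 := by
  classical
  obtain ⟨u, hu, h⟩ := F.cover y hy
  rw [Finset.sum_eq_single u]
  · simp [h]
  · intro b hb hbu; rw [if_neg]; intro h'; exact hbu (F.uniq y hb hu h' h)
  · intro h; exact absurd hu h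

lemma sum_sign (F : Fan X nx) (e : Fin 2 → ℝ) (he : ∀ u ∈ X, dr e u ≠ 0) (he0 : e ≠ 0) :
    ∑ u ∈ X, ((3 : ℝ) * SignType.sign (dr e u * dr e (nx u)) - 3) = -12 := by
  classical
  have h1 := F.sum_ind e he0
  have h2 := F.sum_ind (-e) (by simpa using he0)
  have : ∀ u ∈ X, (3 : ℝ) * SignType.sign (dr e u * dr e (nx u)) - 3 = 
     -6 * (if Cn u (nx u) e then (1 : ℝ) else 0) - 6 * (if Cn u (nx u) (-e) then (1 : ℝ) else 0) := by
    intro u hu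
    have a1 := he u hu
    have a2 := he _ (F.mem u hu)
    have c1 : Cn u (nx u) e ↔ 0 < dr e (nx u) ∧ dr e u < 0 := by
      unfold Cn
      have : dr u e = - dr e u := by simp only [dr]; ring
      rw [this]
      constructor
      · rintro ⟨a, b⟩; exact ⟨a, lt_of_le_of_ne (by linarith) a1⟩
      · rintro ⟨a, b⟩; exact ⟨a, by linarith⟩
    have c2 : Cn u (nx u) (-e) ↔ dr e (nx u) < 0 ∧ 0 < dr e u := by
      unfold Cn
      have h1 : dr u (-e) = dr e u := by simp only [dr, Pi.neg_apply]; ring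
      have h2 : dr (-e) (nx u) = - dr e (nx u) := by simp only [dr, Pi.neg_apply]; ring
      rw [h1, h2]
      constructor
      · rintro ⟨a, b⟩; exact ⟨by linarith, lt_of_le_of_ne b a1.symm⟩
      · rintro ⟨a, b⟩; exact ⟨by linarith, by linarith⟩
    simp only [c1, c2]
    rcases lt_or_gt_of_ne a1 with p | p <;> rcases lt_or_gt_of_ne a2 with q | q
    · rw [sign_pos (mul_pos_of_neg_of_neg p q)]
      simp [p, q, p.le, q.le, not_lt.mpr p.le, not_lt.mpr q.le]
    · rw [sign_neg (mul_neg_of_neg_of_pos p q)]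
      simp [p, q, not_lt.mpr p.le, not_lt.mpr q.le]; norm_num
    · rw [sign_neg (mul_neg_of_pos_of_neg p q)]
      simp [p, q, not_lt.mpr p.le, not_lt.mpr q.le]; norm_num
    · rw [sign_pos (mul_pos p q)]
      simp [p, q, not_lt.mpr p.le, not_lt.mpr q.le]
  rw [Finset.sum_congr rfl this, Finset.sum_sub_distrib, ← Finset.mul_sum, ← Finset.mul_sum]
  rw [h1, h2]; norm_num

end Fan


lemma vol_line (a b : ℝ) (h : a ≠ 0 ∨ b ≠ 0) : volume {z : Fin 2 → ℝ | a * z 0 + b * z 1 = 0} = 0 := by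
  let L : (Fin 2 → ℝ) →ₗ[ℝ] ℝ := a • LinearMap.proj 0 + b • LinearMap.proj 1
  have hL : {z : Fin 2 → ℝ | a * z 0 + b * z 1 = 0} = (LinearMap.ker L : Set (Fin 2 → ℝ)) := by
    ext z; simp [L]
  rw [hL]
  apply Measure.addHaar_submodule
  intro ht
  rw [LinearMap.ker_eq_top] at ht
  rcases h with h | h
  · apply h
    have := congrArg (fun f => f ![1, 0]) ht
    simpa [L] using this
  · apply h
    have := congrArg (fun f => f ![0, 1]) ht
    simpa [L] using this

lemma vol_std : volume {p : Fin 2 → ℝ | 0 ≤ p 0 ∧ 0 ≤ p 1 ∧ p 0 + p 1 ≤ 1} = ENNReal.ofReal (1 / 2) := by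
  have hm : MeasurableSet {p : ℝ × ℝ | 0 ≤ p.1 ∧ 0 ≤ p.2 ∧ p.1 + p.2 ≤ 1} := by
    apply IsClosed.measurableSet
    exact IsClosed.and (isClosed_le (by fun_prop) (by fun_prop))
      (IsClosed.and (isClosed_le (by fun_prop) (by fun_prop)) (isClosed_le (by fun_prop) (by fun_prop)))
  have h1 : {p : Fin 2 → ℝ | 0 ≤ p 0 ∧ 0 ≤ p 1 ∧ p 0 + p 1 ≤ 1} = 
    (MeasurableEquiv.finTwoArrow (α := ℝ)) ⁻¹' {p : ℝ × ℝ | 0 ≤ p.1 ∧ 0 ≤ p.2 ∧ p.1 + p.2 ≤ 1} := by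
    ext p; simp [MeasurableEquiv.finTwoArrow]
  rw [h1, (volume_preserving_finTwoArrow ℝ).measure_preimage hm.nullMeasurableSet, Measure.volume_eq_prod,
    Measure.prod_apply hm]
  have h2 : ∀ x : ℝ, volume (Prod.mk x ⁻¹' {p : ℝ × ℝ | 0 ≤ p.1 ∧ 0 ≤ p.2 ∧ p.1 + p.2 ≤ 1}) = 
      (Set.Icc (0:ℝ) 1).indicator (fun x => ENNReal.ofReal (1 - x)) x := by
    intro x
    by_cases hx : x ∈ Set.Icc (0:ℝ) 1
    · rw [Set.indicator_of_mem hx]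
      have : Prod.mk x ⁻¹' {p : ℝ × ℝ | 0 ≤ p.1 ∧ 0 ≤ p.2 ∧ p.1 + p.2 ≤ 1} = Set.Icc 0 (1 - x) := by
        ext y
        simp only [Set.mem_preimage, Set.mem_ofPred_eq, Set.mem_Icc]
        constructor
        · rintro ⟨a, b, c⟩; exact ⟨b, by linarith⟩
        · rintro ⟨a, b⟩; exact ⟨hx.1, a, by linarith⟩
      rw [this, Real.volume_Icc, sub_zero]
    · rw [Set.indicator_of_notMem hx]
      have : Prod.mk x ⁻¹' {p : ℝ × ℝ | 0 ≤ p.1 ∧ 0 ≤ p.2 ∧ p.1 + p.2 ≤ 1} = ∅ := by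
        ext y
        simp only [Set.mem_preimage, Set.mem_ofPred_eq, Set.mem_empty_iff_false, iff_false]
        rintro ⟨a, b, c⟩; exact hx ⟨a, by linarith⟩
      rw [this, measure_empty]
  simp_rw [h2]
  rw [lintegral_indicator measurableSet_Icc, ← ofReal_integral_eq_lintegral_ofReal]
  · congr 1
    rw [integral_Icc_eq_integral_Ioc, ← intervalIntegral.integral_of_le (by norm_num)]
    rw [intervalIntegral.integral_sub (by simp) (by simp)]
    simp
    norm_num
  · apply Continuous.integrableOn_Icc; fun_prop
  · filter_upwards [ae_restrict_mem measurableSet_Icc] with x hx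
    simp; exact hx.2

lemma vol_tri (a b c d : ℝ) (hD : a * d - b * c ≠ 0) :
    volume {z : Fin 2 → ℝ | 0 ≤ a * z 0 + b * z 1 ∧ 0 ≤ c * z 0 + d * z 1 ∧
      (a * z 0 + b * z 1) + (c * z 0 + d * z 1) ≤ 1} = ENNReal.ofReal (1 / (2 * |a * d - b * c|)) := by
  let M : Matrix (Fin 2) (Fin 2) ℝ := !![a, b; c, d]
  have hM : M.det = a * d - b * c := by simp [M, Matrix.det_fin_two]
  have hdet : LinearMap.det (Matrix.toLin' M) = a * d - b * c := by rw [LinearMap.det_toLin', hM]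
  have := Measure.addHaar_preimage_linearMap (volume : Measure (Fin 2 → ℝ)) (f := Matrix.toLin' M)
    (by rw [hdet]; exact hD) {p : Fin 2 → ℝ | 0 ≤ p 0 ∧ 0 ≤ p 1 ∧ p 0 + p 1 ≤ 1}
  rw [hdet, vol_std, ← ENNReal.ofReal_mul (abs_nonneg _)] at this
  convert this using 2
  · ext z
    simp [M, Matrix.mulVec, dotProduct, Fin.sum_univ_two]
  · rw [abs_inv]; have := abs_pos.mpr hD; field_simp

lemma vol_tri_open (a b c d : ℝ) (hD : a * d - b * c ≠ 0) :
    volume {z : Fin 2 → ℝ | 0 < a * z 0 + b * z 1 ∧ 0 ≤ c * z 0 + d * z 1 ∧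
      (a * z 0 + b * z 1) + (c * z 0 + d * z 1) ≤ 1} = ENNReal.ofReal (1 / (2 * |a * d - b * c|)) := by
  rw [← vol_tri a b c d hD]
  apply le_antisymm
  · apply measure_mono
    rintro z ⟨h1, h2, h3⟩
    exact ⟨h1.le, h2, h3⟩
  · have hl : volume {z : Fin 2 → ℝ | a * z 0 + b * z 1 = 0} = 0 := by
      apply vol_line
      by_contra! h
      apply hD; rw [h.1, h.2]; ring
    refine (measure_mono (t := {z : Fin 2 → ℝ | 0 < a * z 0 + b * z 1 ∧ 0 ≤ c * z 0 + d * z 1 ∧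
      (a * z 0 + b * z 1) + (c * z 0 + d * z 1) ≤ 1} ∪ {z : Fin 2 → ℝ | a * z 0 + b * z 1 = 0}) ?_).trans
      ((measure_union_le _ _).trans (by rw [hl, add_zero]))
    rintro z ⟨h1, h2, h3⟩
    rcases h1.lt_or_eq with h | h
    · left; exact ⟨h, h2, h3⟩
    · right; exact h.symm

/-- Half open triangle. -/
def Tr (u w : Fin 2 → ℝ) : Set (Fin 2 → ℝ) :=
  {y | 0 < dr y w ∧ 0 ≤ dr u y ∧ dr y w + dr u y ≤ dr u w}

lemma vol_Tr (u w : Fin 2 → ℝ) (h : 0 < dr u w) : volume (Tr u w) = ENNReal.ofReal (dr u w / 2) := by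
  have hm : dr u w ≠ 0 := h.ne'
  have key : (w 1 / dr u w) * (u 0 / dr u w) - (-w 0 / dr u w) * (-u 1 / dr u w) = 1 / dr u w := by
    field_simp; simp only [dr]; ring
  have := vol_tri_open (w 1 / dr u w) (-w 0 / dr u w) (-u 1 / dr u w) (u 0 / dr u w)
    (by rw [key]; positivity)
  rw [key, abs_of_pos (by positivity)] at this
  convert this using 2
  · ext z
    have e1 : w 1 / dr u w * z 0 + -w 0 / dr u w * z 1 = dr z w / dr u w := by
      field_simp; simp only [dr]; ring
    have e2 : -u 1 / dr u w * z 0 + u 0 / dr u w * z 1 = dr u z / dr u w := by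
      field_simp; simp only [dr]; ring
    simp only [Set.mem_ofPred_eq, e1, e2, Tr]
    rw [div_pos_iff_of_pos_right h, le_div_iff₀ h, zero_mul, ← add_div, div_le_one h]
  · field_simp

lemma Tr_sub {Δ : Set (Fin 2 → ℝ)} (hc : Convex ℝ Δ) (h0 : 0 ∈ Δ) {u w : Fin 2 → ℝ} (hu : u ∈ Δ) (hw : w ∈ Δ)
    (h : 0 < dr u w) {y : Fin 2 → ℝ} (h1 : 0 ≤ dr y w) (h2 : 0 ≤ dr u y)  (c : ℝ) (hc0 : 0 < c)
    (h3 : dr y w + dr u y ≤ c * dr u w) : c⁻¹ • y ∈ Δ := by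
  have key : c⁻¹ • y = (dr y w / (c * dr u w)) • u + (dr u y / (c * dr u w)) • w +
      (1 - (dr y w + dr u y) / (c * dr u w)) • (0 : Fin 2 → ℝ) := by
    funext i; fin_cases i
    · simp; field_simp; simp only [dr]; ring
    · simp; field_simp; simp only [dr]; ring
  have hs : Convex ℝ Δ := hc
  have hcd : 0 < c * dr u w := by positivity
  rw [key]
  have := hc.sum_mem (t := Finset.univ) (w := ![dr y w / (c * dr u w), dr u y / (c * dr u w),
    1 - (dr y w + dr u y) / (c * dr u w)]) (z := ![u, w, 0]) (by
      intro i _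
      fin_cases i
      · exact div_nonneg h1 hcd.le
      · exact div_nonneg h2 hcd.le
      · simp only [Fin.reduceFinMk, Matrix.cons_val]; rw [sub_nonneg, div_le_one hcd]; exact h3)
      (by simp [Fin.sum_univ_three]; ring)
      (by intro i _; fin_cases i
          · exact hu
          · exact hw
          · exact h0)
  simpa [Fin.sum_univ_three] using this

section
variable {X : Finset (Fin 2 → ℝ)} {nx : (Fin 2 → ℝ) → (Fin 2 → ℝ)} {Δ : Set (Fin 2 → ℝ)}

lemma fan_lin (F : Fan X nx) (hΔ : Δ = convexHull ℝ (X : Set (Fin 2 → ℝ))) {u : Fin 2 → ℝ} (hu : u ∈ X) :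
    ∀ y ∈ Δ, dr y (nx u) + dr u y ≤ dr u (nx u) := by
  intro y hy
  have := lin_le hΔ (nx u 1 - u 1) (u 0 - nx u 0) (dr u (nx u)) (fun x hx => by
    have := F.le u hu x hx
    simp only [dr] at *; linarith) y hy
  simp only [dr] at *; linarith

lemma decomp (F : Fan X nx) (hΔ : Δ = convexHull ℝ (X : Set (Fin 2 → ℝ))) (h0 : 0 ∈ Δ) :
    Δ = {0} ∪ ⋃ u ∈ X, Tr u (nx u) := by
  have hc : Convex ℝ Δ := by rw [hΔ]; exact convex_convexHull ℝ _
  have hs : ∀ x ∈ X, x ∈ Δ := by rw [hΔ]; exact subset_convexHull ℝ _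
  ext y
  simp only [Set.mem_union, Set.mem_singleton_iff, Set.mem_iUnion, exists_prop]
  constructor
  · intro hy
    by_cases hy0 : y = 0
    · left; exact hy0
    · right
      obtain ⟨u, hu, h1, h2⟩ := F.cover y hy0
      exact ⟨u, hu, h1, h2, fan_lin F hΔ hu y hy⟩
  · rintro (rfl | ⟨u, hu, h1, h2, h3⟩)
    · exact h0
    · have := Tr_sub hc h0 (hs u hu) (hs _ (F.mem u hu)) (F.pos u hu) h1.le h2 1 one_pos (by linarith)
      simpa using this

lemma vol_Delta (F : Fan X nx) (hΔ : Δ = convexHull ℝ (X : Set (Fin 2 → ℝ))) (h0 : 0 ∈ Δ) :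
    2 * (volume Δ).toReal = ∑ u ∈ X, dr u (nx u) := by
  have hv : volume Δ = ∑ u ∈ X, volume (Tr u (nx u)) := by
    rw [← measure_biUnion_finset]
    · conv_lhs => rw [decomp F hΔ h0]
      apply le_antisymm
      · refine (measure_union_le _ _).trans ?_
        simp
      · exact measure_mono Set.subset_union_right
    · intro u hu u' hu' hne
      rw [Function.onFun, Set.disjoint_left]
      intro y hy hy'
      exact hne (F.uniq y hu hu' ⟨hy.1, hy.2.1⟩ ⟨hy'.1, hy'.2.1⟩)
    · intro u hu
      have m1 : Measurable fun y : Fin 2 → ℝ => dr y (nx u) := by unfold dr; fun_prop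
      have m2 : Measurable fun y : Fin 2 → ℝ => dr u y := by unfold dr; fun_prop
      exact (measurableSet_lt measurable_const m1).inter 
        ((measurableSet_le measurable_const m2).inter (measurableSet_le (m1.add m2) measurable_const))
  rw [hv, ENNReal.toReal_sum, Finset.mul_sum]
  · apply Finset.sum_congr rfl
    intro u hu
    have := F.pos u hu
    rw [vol_Tr _ _ this, ENNReal.toReal_ofReal (by positivity)]; ring
  · intro u hu
    rw [vol_Tr _ _ (F.pos u hu)]; exact ENNReal.ofReal_ne_top
end

section
variable {X : Finset (Fin 2 → ℝ)} {nx : (Fin 2 → ℝ) → (Fin 2 → ℝ)} {Δ : Set (Fin 2 → ℝ)}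

/-- Piece of the polar polygon belonging to the vertex `u` with neighbours `p`, `w`. -/
def Rg (p u w : Fin 2 → ℝ) : Set (Fin 2 → ℝ) :=
  {y | 0 ≤ dp y (p - u) ∧ 0 ≤ dp y (w - u) ∧ -1 ≤ dp y u}

lemma vol_Rg (p u w : Fin 2 → ℝ) (hA : 0 < dr p u) (hB : 0 < dr u w) (hk : 0 < dr p u + dr u w - dr p w) :
    volume (Rg p u w) = ENNReal.ofReal ((dr p u + dr u w - dr p w) / (2 * (dr p u * dr u w))) := by
  set k := dr p u + dr u w - dr p w with hkd
  set A := dr p u with hAd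
  set B := dr u w with hBd
  have key : (B / k * (p 0 - u 0)) * (A / k * (w 1 - u 1)) - (B / k * (p 1 - u 1)) * (A / k * (w 0 - u 0)) = 
      - (A * B / k) := by
    have : (p 0 - u 0) * (w 1 - u 1) - (p 1 - u 1) * (w 0 - u 0) = - k := by
      rw [hkd, hAd, hBd]; simp only [dr]; ring
    calc _ = A * B / k ^ 2 * ((p 0 - u 0) * (w 1 - u 1) - (p 1 - u 1) * (w 0 - u 0)) := by
          field_simp
      _ = _ := by rw [this]; field_simp
  have hp : 0 < A * B / k := by positivity
  have := vol_tri (B / k * (p 0 - u 0)) (B / k * (p 1 - u 1)) (A / k * (w 0 - u 0)) (A / k * (w 1 - u 1))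
    (by rw [key]; linarith)
  rw [key, abs_neg, abs_of_pos hp] at this
  convert this using 2
  · ext y
    have e1 : B / k * (p 0 - u 0) * y 0 + B / k * (p 1 - u 1) * y 1 = B / k * dp y (p - u) := by
      simp only [dp, Pi.sub_apply]; ring
    have e2 : A / k * (w 0 - u 0) * y 0 + A / k * (w 1 - u 1) * y 1 = A / k * dp y (w - u) := by
      simp only [dp, Pi.sub_apply]; ring
    have e3 : B / k * dp y (p - u) + A / k * dp y (w - u) = - dp y u := by
      have : B * dp y (p - u) + A * dp y (w - u) = - (k * dp y u) := by
        rw [hkd, hAd, hBd]; simp only [dp, dr, Pi.sub_apply]; ring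
      field_simp; linarith
    simp only [Set.mem_ofPred_eq, e1, e2, e3, Rg]
    rw [mul_nonneg_iff_of_pos_left (by positivity), mul_nonneg_iff_of_pos_left (by positivity), neg_le]
  · field_simp

lemma kappa_pos (F : Fan X nx) {p : Fin 2 → ℝ} (hp : p ∈ X) :
    0 < dr p (nx p) + dr (nx p) (nx (nx p)) - dr p (nx (nx p)) := by
  have hu := F.mem p hp
  have hw := F.mem _ hu
  have h1 := F.le p hp _ hw
  have a := F.pos p hp
  have b := F.pos _ hu
  have h2 : dr (nx (nx p)) (nx p) = - dr (nx p) (nx (nx p)) := by simp only [dr]; ring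
  rcases h1.lt_or_eq with h | h
  · linarith
  · rcases F.eq p hp _ hw h with h' | h'
    · rw [h'] at b; simp only [dr] at a b; linarith
    · rw [h'] at b; simp only [dr] at b; linarith

lemma Rg_min (F : Fan X nx) {p : Fin 2 → ℝ} (hp : p ∈ X) {y : Fin 2 → ℝ} (hy : y ∈ Rg p (nx p) (nx (nx p)))
    {x : Fin 2 → ℝ} (hx : x ∈ X) : dp y (nx p) ≤ dp y x := by
  have hk := kappa_pos F hp
  have l1 := F.le p hp x hx
  have l2 := F.le _ (F.mem p hp) x hx
  obtain ⟨h1, h2, -⟩ := hy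
  set u := nx p
  set w := nx u
  have key : (dr p u + dr u w - dr p w) * (dp y x - dp y u) = 
      (dr p u - dr x u - dr p x) * dp y (w - u) + (dr u w - dr x w - dr u x) * dp y (p - u) := by
    simp only [dr, dp, Pi.sub_apply]; ring
  have : 0 ≤ (dr p u + dr u w - dr p w) * (dp y x - dp y u) := by
    rw [key]
    apply add_nonneg (mul_nonneg (by linarith) h2) (mul_nonneg (by linarith) h1)
  have := nonneg_of_mul_nonneg_right this hk
  linarith

lemma polar_decomp (F : Fan X nx) (hne : X.Nonempty) :
    {y : Fin 2 → ℝ | ∀ x ∈ X, -1 ≤ dp y x} = ⋃ p ∈ X, Rg p (nx p) (nx (nx p)) := by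
  ext y
  simp only [Set.mem_iUnion, exists_prop, Set.mem_ofPred_eq]
  have hsub : ∀ a b : Fin 2 → ℝ, dp y (a - b) = dp y a - dp y b := by
    intro a b; simp only [dp, Pi.sub_apply]; ring
  constructor
  · intro h
    obtain ⟨u, hu, hmin⟩ := Finset.exists_min_image X (fun x => dp y x) hne
    obtain ⟨p, hp, rfl⟩ := F.surj hu
    refine ⟨p, hp, ?_, ?_, h _ hu⟩
    · rw [hsub]; have := hmin p hp; linarith
    · rw [hsub]; have := hmin _ (F.mem _ hu); linarith
  · rintro ⟨p, hp, hy⟩ x hx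
    exact hy.2.2.trans (Rg_min F hp hy hx)

lemma vol_polar (F : Fan X nx) (hne : X.Nonempty) :
    2 * (volume {y : Fin 2 → ℝ | ∀ x ∈ X, -1 ≤ dp y x}).toReal = 
    ∑ p ∈ X, (dr p (nx p) + dr (nx p) (nx (nx p)) - dr p (nx (nx p))) / (dr p (nx p) * dr (nx p) (nx (nx p))) := by
  have hR : ∀ p ∈ X, volume (Rg p (nx p) (nx (nx p))) = _ := fun p hp =>
    vol_Rg p (nx p) (nx (nx p)) (F.pos p hp) (F.pos _ (F.mem p hp)) (kappa_pos F hp)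
  rw [polar_decomp F hne, measure_biUnion_finset₀]
  · rw [ENNReal.toReal_sum, Finset.mul_sum]
    · apply Finset.sum_congr rfl
      intro p hp
      rw [hR p hp, ENNReal.toReal_ofReal]
      · have := F.pos p hp; have := F.pos _ (F.mem p hp)
        field_simp
      · have := F.pos p hp; have := F.pos _ (F.mem p hp); have := kappa_pos F hp
        positivity
    · intro p hp; rw [hR p hp]; exact ENNReal.ofReal_ne_top
  · intro p hp p' hp' hpp
    have hne' : nx p ≠ nx p' := fun h => hpp (F.inj hp hp' h)
    have hl : volume {z : Fin 2 → ℝ | (nx p 0 - nx p' 0) * z 0 + (nx p 1 - nx p' 1) * z 1 = 0} = 0 := by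
      apply vol_line
      by_contra! h
      apply hne'
      funext i; fin_cases i
      · exact sub_eq_zero.mp h.1
      · exact sub_eq_zero.mp h.2
    refine measure_mono_null ?_ hl
    rintro y ⟨hy, hy'⟩
    have h1 := Rg_min F hp hy (F.mem p' hp')
    have h2 := Rg_min F hp' hy' (F.mem p hp)
    simp only [dp, Set.mem_ofPred_eq] at *
    linarith
  · intro p hp
    apply MeasurableSet.nullMeasurableSet
    have m : ∀ a, Measurable fun y : Fin 2 → ℝ => dp y a := by intro a; unfold dp; fun_prop
    exact (measurableSet_le measurable_const (m _)).inter 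
        ((measurableSet_le measurable_const (m _)).inter (measurableSet_le measurable_const (m _)))

lemma polar_sum (F : Fan X nx) (e : Fin 2 → ℝ) (he : ∀ u ∈ X, dr e u ≠ 0) :
    ∑ p ∈ X, (dr p (nx p) + dr (nx p) (nx (nx p)) - dr p (nx (nx p))) / (dr p (nx p) * dr (nx p) (nx (nx p)))
    = ∑ u ∈ X, (2 / dr u (nx u) - dr e u / (dr e (nx u) * dr u (nx u)) - dr e (nx u) / (dr e u * dr u (nx u))) := by
  have h1 : ∀ p ∈ X, (dr p (nx p) + dr (nx p) (nx (nx p)) - dr p (nx (nx p))) / (dr p (nx p) * dr (nx p) (nx (nx p)))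
     = (1 / dr p (nx p) - dr e p / (dr e (nx p) * dr p (nx p))) +
       (fun u => 1 / dr u (nx u) - dr e (nx u) / (dr e u * dr u (nx u))) (nx p) := by
    intro p hp
    have a1 := F.pos p hp
    have a2 := F.pos _ (F.mem p hp)
    have a3 := he _ (F.mem p hp)
    have key : dr p (nx (nx p)) * dr e (nx p) = 
      dr e p * dr (nx p) (nx (nx p)) + dr e (nx (nx p)) * dr p (nx p) := by
      simp only [dr]; ring
    have : dr p (nx (nx p)) = 
      (dr e p * dr (nx p) (nx (nx p)) + dr e (nx (nx p)) * dr p (nx p)) / dr e (nx p) := by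
      rw [← key]; field_simp
    rw [this]
    field_simp
    ring
  rw [Finset.sum_congr rfl h1, Finset.sum_add_distrib, F.sum_nx (fun u => 1 / dr u (nx u) - dr e (nx u) / (dr e u * dr u (nx u))), 
    ← Finset.sum_add_distrib]
  apply Finset.sum_congr rfl
  intro u hu
  ring

/-- telescoping of `m/(hk)` -/
lemma tele (F : Fan X nx) (e : Fin 2 → ℝ) (he0 : e 0 = 1) (he : ∀ u ∈ X, dr e u ≠ 0) :
    ∑ u ∈ X, dr u (nx u) / (dr e u * dr e (nx u)) = 0 := by
  have h1 : ∀ u ∈ X, dr u (nx u) / (dr e u * dr e (nx u)) = 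
     (fun u => u 0 / dr e u) u - (fun u => u 0 / dr e u) (nx u) := by
    intro u hu
    have a1 := he u hu
    have a2 := he _ (F.mem u hu)
    simp only
    rw [div_sub_div _ _ a1 a2]
    congr 1
    simp only [dr, he0]; ring
  rw [Finset.sum_congr rfl h1, Finset.sum_sub_distrib, F.sum_nx (fun u => u 0 / dr e u), sub_self]
end

lemma dr_coe (a b : Fin 2 → ℤ) : dr (coeLat a) (coeLat b) = (dz a b : ℝ) := by
  simp [dr, dz, coeLat]

lemma coe_inj : Function.Injective (coeLat (d := 2)) := by
  intro a b h
  funext i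
  have := congrFun h i
  simpa [coeLat] using this

lemma coe_zero : coeLat (0 : Fin 2 → ℤ) = 0 := by funext i; simp [coeLat]

section
variable {X : Finset (Fin 2 → ℝ)} {nx : (Fin 2 → ℝ) → (Fin 2 → ℝ)} {Δ : Set (Fin 2 → ℝ)}

lemma gauge_Tr (F : Fan X nx) (hΔ : Δ = convexHull ℝ (X : Set (Fin 2 → ℝ))) (h0 : 0 ∈ interior Δ)
    {u : Fin 2 → ℝ} (hu : u ∈ X) {y : Fin 2 → ℝ} (hy : y ∈ Tr u (nx u)) :
    gauge Δ y = (dr y (nx u) + dr u y) / dr u (nx u) := by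
  have hc : Convex ℝ Δ := by rw [hΔ]; exact convex_convexHull ℝ _
  have hs : ∀ x ∈ X, x ∈ Δ := by rw [hΔ]; exact subset_convexHull ℝ _
  obtain ⟨h1, h2, h3⟩ := hy
  have hm := F.pos u hu
  have hspos : 0 < (dr y (nx u) + dr u y) / dr u (nx u) := by
    apply div_pos _ hm; linarith
  apply le_antisymm
  · apply gauge_le_of_mem hspos.le
    rw [Set.mem_smul_set_iff_inv_smul_mem₀ hspos.ne']
    exact Tr_sub hc (interior_subset h0) (hs u hu) (hs _ (F.mem u hu)) hm h1.le h2 _ hspos 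
      (by field_simp; rfl)
  · by_contra! hlt
    obtain ⟨b, hb, hb', hm'⟩ := exists_lt_of_gauge_lt 
      (absorbent_nhds_zero (mem_interior_iff_mem_nhds.mp h0)) hlt
    rw [Set.mem_smul_set_iff_inv_smul_mem₀ hb.ne'] at hm'
    have := fan_lin F hΔ hu _ hm'
    have e : dr (b⁻¹ • y) (nx u) + dr u (b⁻¹ • y) = b⁻¹ * (dr y (nx u) + dr u y) := by
      simp only [dr, Pi.smul_apply, smul_eq_mul]; ring
    rw [e, inv_mul_le_iff₀ hb] at this
    rw [lt_div_iff₀ hm] at hb'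
    linarith

lemma lat_fin (hb : Bornology.IsBounded Δ) : (latticePoints Δ).Finite := by
  obtain ⟨R, hR⟩ := hb.subset_closedBall 0
  apply (Set.finite_Icc (fun _ => -⌈R⌉ : Fin 2 → ℤ) (fun _ => ⌈R⌉)).subset
  intro n hn
  have h := hR hn
  rw [mem_closedBall_zero_iff] at h
  have h2 : ∀ i, |(n i : ℝ)| ≤ R := fun i => by
    have := (norm_le_pi_norm (coeLat n) i).trans h
    simpa [coeLat] using this
  have h3 : ∀ i, |n i| ≤ ⌈R⌉ := fun i => by
    have := (h2 i).trans (Int.le_ceil R)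
    exact_mod_cast this
  constructor
  · intro i; exact (abs_le.mp (h3 i)).1
  · intro i; exact (abs_le.mp (h3 i)).2

lemma lat_sum (F : Fan X nx) (hΔ : Δ = convexHull ℝ (X : Set (Fin 2 → ℝ))) (h0 : 0 ∈ interior Δ)
    (hb : Bornology.IsBounded Δ) (ι : (Fin 2 → ℝ) → (Fin 2 → ℤ)) (hι : ∀ u ∈ X, coeLat (ι u) = u) :
    ∑ᶠ n ∈ latticePoints Δ, (1 - gauge Δ (coeLat n)) ^ 2 = 
      1 + ∑ u ∈ X, ∑ᶠ n ∈ TZ (ι u) (ι (nx u)), FZ (ι u) (ι (nx u)) n := by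
  have hT : ∀ u ∈ X, ∀ n, n ∈ TZ (ι u) (ι (nx u)) ↔ coeLat n ∈ Tr u (nx u) := by
    intro u hu n
    have e1 : dr (coeLat n) (nx u) = (dz n (ι (nx u)) : ℝ) := by rw [← dr_coe, hι _ (F.mem u hu)]
    have e2 : dr u (coeLat n) = (dz (ι u) n : ℝ) := by rw [← dr_coe, hι _ hu]
    have e3 : dr u (nx u) = (dz (ι u) (ι (nx u)) : ℝ) := by rw [← dr_coe, hι _ hu, hι _ (F.mem u hu)]
    simp only [TZ, Tr, Set.mem_ofPred_eq, e1, e2, e3]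
    norm_cast
  have hlat : latticePoints Δ = {0} ∪ ⋃ u ∈ (X : Set (Fin 2 → ℝ)), TZ (ι u) (ι (nx u)) := by
    ext n
    have : n ∈ latticePoints Δ ↔ coeLat n ∈ Δ := Iff.rfl
    rw [this, decomp F hΔ (interior_subset h0)]
    simp only [Set.mem_union, Set.mem_singleton_iff, Set.mem_iUnion, exists_prop, Finset.mem_coe]
    apply or_congr
    · rw [← coe_zero]; exact coe_inj.eq_iff
    · constructor
      · rintro ⟨u, hu, h⟩; exact ⟨u, hu, (hT u hu n).mpr h⟩
      · rintro ⟨u, hu, h⟩; exact ⟨u, hu, (hT u hu n).mp h⟩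
  have hfin := lat_fin hb
  have hfT : ∀ u ∈ (X : Set (Fin 2 → ℝ)), (TZ (ι u) (ι (nx u))).Finite := by
    intro u hu
    apply hfin.subset
    rw [hlat]
    exact (Set.subset_biUnion_of_mem (u := fun u => TZ (ι u) (ι (nx u))) hu).trans Set.subset_union_right
  rw [hlat, finsum_mem_union, finsum_mem_singleton, finsum_mem_biUnion, finsum_mem_coe_finset]
  · congr 1
    · rw [coe_zero, gauge_zero]; norm_num
    · apply Finset.sum_congr rfl
      intro u hu
      apply finsum_mem_congr rfl
      intro n hn
      rw [gauge_Tr F hΔ h0 hu ((hT u hu n).mp hn), FZ]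
      rw [← dr_coe, ← dr_coe, ← dr_coe, hι _ hu, hι _ (F.mem u hu)]
  · intro u hu u' hu' hne
    rw [Function.onFun, Set.disjoint_left]
    intro n hn hn'
    have a := (hT u hu n).mp hn
    have b := (hT u' hu' n).mp hn'
    exact hne (F.uniq _ hu hu' ⟨a.1, a.2.1⟩ ⟨b.1, b.2.1⟩)
  · exact X.finite_toSet
  · exact hfT
  · rw [Set.disjoint_left]
    intro n hn hn'
    simp only [Set.mem_singleton_iff] at hn
    subst hn
    simp only [Set.mem_iUnion, exists_prop] at hn'
    obtain ⟨u, hu, h⟩ := hn'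
    have := h.1
    simp [dz] at this
  · exact Set.finite_singleton _
  · exact X.finite_toSet.biUnion hfT

lemma polar_eq (hΔ : Δ = convexHull ℝ (X : Set (Fin 2 → ℝ))) :
    polarDual Δ = {y : Fin 2 → ℝ | ∀ x ∈ X, -1 ≤ dp y x} := by
  have hs : ∀ x ∈ X, x ∈ Δ := by rw [hΔ]; exact subset_convexHull ℝ _
  ext y
  simp only [polarDual, Set.mem_ofPred_eq, Fin.sum_univ_two]
  constructor
  · intro h x hx; exact h x (hs x hx)
  · intro h x hx
    have := lin_le hΔ (-y 0) (-y 1) 1 (fun x hx => by have := h x hx; unfold dp at this; linarith) x hx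
    linarith

lemma main_fan (F : Fan X nx) (hne : X.Nonempty) (hΔ : Δ = convexHull ℝ (X : Set (Fin 2 → ℝ))) (h0 : 0 ∈ interior Δ)
    (hb : Bornology.IsBounded Δ) (ι : (Fin 2 → ℝ) → (Fin 2 → ℤ)) (hι : ∀ u ∈ X, coeLat (ι u) = u)
    (hprim : ∀ u ∈ X, Int.gcd (ι u 0) (ι u 1) = 1) : 
    v2 Δ + v2 (polarDual Δ) =
      12 * ∑ᶠ n ∈ latticePoints Δ, (1 - gauge Δ (coeLat n)) ^ 2 := by
  classical
  -- generic direction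
  obtain ⟨K, hK⟩ : ∃ K : ℤ, ∀ u ∈ X, |ι u 1| < K := by
    refine ⟨∑ u ∈ X, |ι u 1| + 1, fun u hu => ?_⟩
    have := Finset.single_le_sum (f := fun u => |ι u 1|) (fun _ _ => abs_nonneg _) hu
    omega
  let e : Fin 2 → ℤ := ![1, K]
  have hgcd : Int.gcd (e 0) (e 1) = 1 := by simp [e]
  have hez : ∀ u ∈ X, dz e (ι u) ≠ 0 := by
    intro u hu h
    have hk := hK u hu
    have h1 : ι u 1 = K * ι u 0 := by simp [dz, e] at h; linarith
    have hKp : 0 < K := lt_of_le_of_lt (abs_nonneg _) hk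
    by_cases hz : ι u 0 = 0
    · rw [hz, mul_zero] at h1
      have := hprim u hu
      rw [hz, h1] at this
      simp at this
    · rw [h1, abs_mul, abs_of_pos hKp] at hk
      have := Int.one_le_abs hz
      nlinarith
  have der : ∀ u ∈ X, dr (coeLat e) u = (dz e (ι u) : ℝ) := by
    intro u hu; rw [← dr_coe, hι u hu]
  have her : ∀ u ∈ X, dr (coeLat e) u ≠ 0 := by
    intro u hu; rw [der u hu]; exact_mod_cast hez u hu
  have dm' : ∀ u ∈ X, dr u (nx u) = (dz (ι u) (ι (nx u)) : ℝ) := by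
    intro u hu; rw [← dr_coe, hι u hu, hι _ (F.mem u hu)]
  have hpos : ∀ u ∈ X, 0 < dz (ι u) (ι (nx u)) := by
    intro u hu; have := F.pos u hu; rw [dm' u hu] at this; exact_mod_cast this
  let PP : ℤ := ∏ u ∈ X, (dz (ι u) (ι (nx u)) * dz e (ι u) * dz e (ι (nx u)))
  have hPP : PP ≠ 0 := by
    apply Finset.prod_ne_zero_iff.mpr
    intro u hu
    exact mul_ne_zero (mul_ne_zero (hpos u hu).ne' (hez u hu)) (hez _ (F.mem u hu))
  let N : ℕ := PP.natAbs
  have : NeZero N := ⟨Int.natAbs_ne_zero.mpr hPP⟩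
  have hN : ∀ u ∈ X, dz (ι u) (ι (nx u)) * dz e (ι u) * dz e (ι (nx u)) ∣ (N : ℤ) := by
    intro u hu
    exact (Finset.dvd_prod_of_mem (fun u => dz (ι u) (ι (nx u)) * dz e (ι u) * dz e (ι (nx u))) hu).trans
      Int.dvd_natAbs_self
  have hcone := fun u (hu : u ∈ X) => cone_final N e (ι u) (ι (nx u)) hgcd (hprim u hu) (hprim _ (F.mem u hu))
    (hpos u hu) (hN u hu)
  rw [lat_sum F hΔ h0 hb ι hι, mul_add, Finset.mul_sum, Finset.sum_congr rfl hcone]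
  unfold v2
  rw [polar_eq hΔ, vol_polar F hne, polar_sum F (coeLat e) her, vol_Delta F hΔ (interior_subset h0)]
  have hsgn := F.sum_sign (coeLat e) her (by
    intro h; have := congrFun h 0; simp [coeLat, e] at this)
  have htel := tele F (coeLat e) (by simp [coeLat, e]) her
  have htau := F.sum_nx (fun u => tau N e (ι u))
  have hterm : ∀ u ∈ X, (dz (ι u) (ι (nx u)) : ℝ) - 3 + 2 / dz (ι u) (ι (nx u)) 
      + 3 * SignType.sign ((dz e (ι u) : ℝ) * dz e (ι (nx u))) 
      - ((dz (ι u) (ι (nx u)) : ℝ)^2 + dz e (ι u)^2 + dz e (ι (nx u))^2) / (dz (ι u) (ι (nx u)) * dz e (ι u) * dz e (ι (nx u))) 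
      + tau N e (ι u) - tau N e (ι (nx u)) = 
      dr u (nx u) + (2 / dr u (nx u) - dr (coeLat e) u / (dr (coeLat e) (nx u) * dr u (nx u)) - dr (coeLat e) (nx u) / (dr (coeLat e) u * dr u (nx u)))
      + ((3 : ℝ) * SignType.sign (dr (coeLat e) u * dr (coeLat e) (nx u)) - 3) 
      - dr u (nx u) / (dr (coeLat e) u * dr (coeLat e) (nx u))
      + (tau N e (ι u) - tau N e (ι (nx u))) := by
    intro u hu
    have a1 := her u hu
    have a2 := her _ (F.mem u hu)
    have a3 := (F.pos u hu).ne'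
    rw [← der u hu, ← der _ (F.mem u hu), ← dm' u hu]
    have : (dr u (nx u) ^ 2 + dr (coeLat e) u ^ 2 + dr (coeLat e) (nx u) ^ 2) / (dr u (nx u) * dr (coeLat e) u * dr (coeLat e) (nx u))
      = dr u (nx u) / (dr (coeLat e) u * dr (coeLat e) (nx u)) + dr (coeLat e) u / (dr (coeLat e) (nx u) * dr u (nx u)) + dr (coeLat e) (nx u) / (dr (coeLat e) u * dr u (nx u)) := by
      field_simp
    rw [this]; ring
  rw [Finset.sum_congr rfl hterm]
  simp only [Finset.sum_add_distrib, Finset.sum_sub_distrib] at hsgn htel htau ⊢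
  linarith
end

theorem LDP_twelve_gauge (Δ : Set (Fin 2 → ℝ)) (hΔ : IsLDP Δ) :
    v2 Δ + v2 (polarDual Δ) =
      12 * ∑ᶠ n ∈ latticePoints Δ, (1 - gauge Δ (coeLat n)) ^ 2 := by
  classical
  obtain ⟨⟨V, hV⟩, -, h0, hext⟩ := hΔ
  have hfinV : (coeLat '' (V : Set (Fin 2 → ℤ))).Finite := V.finite_toSet.image _
  have hcomp : IsCompact Δ := by rw [hV]; exact hfinV.isCompact_convexHull ℝ
  have hconv : Convex ℝ Δ := by rw [hV]; exact convex_convexHull ℝ _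
  have hfin : (Set.extremePoints ℝ Δ).Finite := by
    apply hfinV.subset; rw [hV]; exact extremePoints_convexHull_subset
  let X := hfin.toFinset
  have hX : Δ = convexHull ℝ (X : Set (Fin 2 → ℝ)) := by
    have := closure_convexHull_extremePoints hcomp hconv
    rw [(hfin.isClosed_convexHull ℝ).closure_eq] at this
    rw [Set.Finite.coe_toFinset]; exact this.symm
  have hXm : ∀ x ∈ X, x ∈ Set.extremePoints ℝ Δ := by intro x hx; simpa [X] using hx
  obtain ⟨nx, F⟩ := exists_fan hX h0 hXm
  have hne : X.Nonempty := by
    rw [Finset.nonempty_iff_ne_empty]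
    intro h
    rw [h] at hX
    simp at hX
    rw [hX] at h0
    simp at h0
  have hι : ∀ u ∈ X, ∃ n : Fin 2 → ℤ, coeLat n = u ∧ Int.gcd (n 0) (n 1) = 1 := fun u hu => hext u (hXm u hu)
  choose! ι h1 h2 using hι
  exact main_fan F hne hX h0 hcomp.isBounded ι h1 h2

end
end

section
/- Let Δ ⊆ ℝ² be an LDP-polygon. Then v(Δ) + v(Δ*) ≥ 12, and equality v(Δ) + v(Δ*) = 12 holds if and only if Δ is a reflexive polygon (equivalently, if and only if the origin is the only interior lattice point of Δ). -/
open MeasureTheory Filter Pointwise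

noncomputable section

/-- A reflexive polytope: a lattice polytope containing the origin in its interior
whose dual is again a lattice polytope. -/
def IsReflexive {d : ℕ} (P : Set (Fin d → ℝ)) : Prop :=
  IsLatticePolytope P ∧ (0 : Fin d → ℝ) ∈ interior P ∧ IsLatticePolytope (polarDual P)

/-- A (nonempty, exposed) face of dimension `k` of a polytope `P`. -/
def IsFaceOfDim {d : ℕ} (P : Set (Fin d → ℝ)) (k : ℕ) (θ : Set (Fin d → ℝ)) : Prop :=
  IsExposed ℝ P θ ∧ θ.Nonempty ∧ dimSet θ = k

/-- The dual face `θ* = {y ∈ P* | ⟨y,x⟩ = -1 ∀ x ∈ θ}` of a face `θ` of `P`. -/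
def dualFace {d : ℕ} (P θ : Set (Fin d → ℝ)) : Set (Fin d → ℝ) :=
  {y ∈ polarDual P | ∀ x ∈ θ, ∑ i, y i * x i = -1}

/-- The normalized volume of a `k`-dimensional lattice polytope `θ ⊆ ℝ^d`:
`lim_{m → ∞} k! ⬝ |mθ ∩ ℤ^d| / m^k`. -/
def normVol {d : ℕ} (k : ℕ) (θ : Set (Fin d → ℝ)) : ℝ :=
  limUnder atTop
    (fun m : ℕ => (Nat.factorial k : ℝ) * (latticePoints ((m : ℝ) • θ)).ncard / (m : ℝ) ^ k)

/-! ### Arithmetic part -/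
/-- determinant of two integer vectors -/
def dZ (u w : Fin 2 → ℤ) : ℤ := u 0 * w 1 - u 1 * w 0
/-- inner product of two integer vectors -/
def iZ (u w : Fin 2 → ℤ) : ℤ := u 0 * w 0 + u 1 * w 1
/-- contribution of a cone to `v(Δ) + v(Δ*)` -/
def gZ (u w : Fin 2 → ℤ) : ℝ :=
  (dZ u w : ℝ) + 2 / (dZ u w : ℝ)
    - (iZ u w : ℝ) / (dZ u w : ℝ) * (1 / (iZ u u : ℝ) + 1 / (iZ w w : ℝ))
/-- the cone over the segment `[u,w]` is Gorenstein -/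
def GorZ (u w : Fin 2 → ℤ) : Prop := ∀ i, dZ u w ∣ w i - u i

lemma iZ_pos {u : Fin 2 → ℤ} (h : IsCoprime (u 0) (u 1)) : 0 < iZ u u := by
  unfold iZ
  by_contra hc
  have h0 : u 0 = 0 := by nlinarith [sq_nonneg (u 0), sq_nonneg (u 1)]
  have h1 : u 1 = 0 := by nlinarith [sq_nonneg (u 0), sq_nonneg (u 1)]
  rw [h0, h1] at h
  exact not_isCoprime_zero_zero h

lemma coprime_right {u x : Fin 2 → ℤ} (h : dZ u x = 1) : IsCoprime (x 0) (x 1) :=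
  ⟨-u 1, u 0, by unfold dZ at h; linarith⟩

/-- key splitting identity -/
lemma gZ_split {u w x : Fin 2 → ℤ} {q : ℤ} (hd : 0 < dZ u w) (hq : 0 < q)
    (hu : 0 < iZ u u) (hw : 0 < iZ w w) (hx : 0 < iZ x x)
    (hux : dZ u x = 1) (hxw : dZ x w = q) :
    gZ u w = gZ u x + gZ x w + ((dZ u w - 1 - q : ℤ) : ℝ)
      + ((dZ u w - 1 - q : ℤ) : ℝ) ^ 2 / ((q : ℝ) * (dZ u w : ℝ)) := by
  have e0 : dZ u w * x 0 = q * u 0 + w 0 := by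
    rw [← hxw]; unfold dZ at *; linear_combination (w 0) * hux
  have e1 : dZ u w * x 1 = q * u 1 + w 1 := by
    rw [← hxw]; unfold dZ at *; linear_combination (w 1) * hux
  have i1 : dZ u w * iZ u x = q * iZ u u + iZ u w := by
    unfold iZ; linear_combination u 0 * e0 + u 1 * e1
  have i2 : dZ u w * iZ x w = q * iZ u w + iZ w w := by
    unfold iZ; linear_combination w 0 * e0 + w 1 * e1
  have i3 : dZ u w * iZ x x = q * iZ u x + iZ x w := by
    unfold iZ; linear_combination x 0 * e0 + x 1 * e1
  unfold gZ
  rw [hux, hxw]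
  generalize dZ u w = d at *
  generalize iZ u u = A at *
  generalize iZ w w = B at *
  generalize iZ x x = X at *
  generalize iZ u w = c at *
  generalize iZ u x = a at *
  generalize iZ x w = b at *
  have i1' : (d : ℝ) * a = q * A + c := by exact_mod_cast i1
  have i2' : (d : ℝ) * b = q * c + B := by exact_mod_cast i2
  have i3' : (d : ℝ) * X = q * a + b := by exact_mod_cast i3
  have hd' : (0 : ℝ) < d := by exact_mod_cast hd
  have hq' : (0 : ℝ) < q := by exact_mod_cast hq
  have hA' : (0 : ℝ) < A := by exact_mod_cast hu
  have hB' : (0 : ℝ) < B := by exact_mod_cast hw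
  have hX' : (0 : ℝ) < X := by exact_mod_cast hx
  have k1 : (a : ℝ) / A = (q + c / A) / d := by
    field_simp; linarith
  have k2 : (b : ℝ) / B = (q * c / B + 1) / d := by
    field_simp; linarith
  have k3 : (a : ℝ) / X + b / (q * X) = d / q := by
    field_simp; linarith
  have : (a : ℝ) / 1 * (1 / A + 1 / X) + b / q * (1 / X + 1 / B) =
      (q + c / A) / d + (q * c / B + 1) / d / q + d / q := by
    rw [← k1, ← k2, ← k3]; field_simp; ring
  push_cast
  have e : ∀ s t : ℝ, (1 + 2 / 1 - (a : ℝ) / 1 * (1 / A + 1 / X)) +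
      (q + 2 / q - b / q * (1 / X + 1 / B)) + s + t = 3 + q + 2 / q -
      ((a : ℝ) / 1 * (1 / A + 1 / X) + b / q * (1 / X + 1 / B)) + s + t := by
    intros; ring
  rw [e, this]
  field_simp
  ring

/-- a leaf (at level N) -/
def LeafZ (N : ℤ) (l : (Fin 2 → ℤ) × (Fin 2 → ℤ)) : Prop :=
  dZ l.1 l.2 = 1 ∧ iZ l.1 l.1 ≤ N ∧ iZ l.2 l.2 ≤ N ∧ N < iZ (l.1 + l.2) (l.1 + l.2)

lemma iZ_add (u w : Fin 2 → ℤ) : iZ (u + w) (u + w) = iZ u u + iZ w w + 2 * iZ u w := by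
  simp only [iZ, Pi.add_apply]; ring

lemma lagrange (u w : Fin 2 → ℤ) : iZ u u * iZ w w = iZ u w ^ 2 + dZ u w ^ 2 := by
  simp only [iZ, dZ]; ring

lemma iZ_nonneg (u : Fin 2 → ℤ) : 0 ≤ iZ u u := by
  simp only [iZ]; nlinarith [sq_nonneg (u 0), sq_nonneg (u 1)]

lemma leaf_c {N : ℤ} {l : (Fin 2 → ℤ) × (Fin 2 → ℤ)} (h : LeafZ N l) : 0 ≤ iZ l.1 l.2 := by
  obtain ⟨h1, h2, h3, h4⟩ := h
  rw [iZ_add] at h4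
  have := lagrange l.1 l.2
  rw [h1] at this
  have p1 := iZ_nonneg l.1
  have p2 := iZ_nonneg l.2
  by_contra hc
  push Not at hc
  generalize iZ l.1 l.2 = c at *
  generalize iZ l.1 l.1 = A at *
  generalize iZ l.2 l.2 = B at *
  obtain ⟨k, rfl⟩ : ∃ k, c = -k := ⟨-c, by ring⟩
  have : 2 * k + 1 ≤ A := by linarith
  have : 2 * k + 1 ≤ B := by linarith
  nlinarith

lemma expand {u w : Fin 2 → ℤ} (h : dZ u w = 1) (x : Fin 2 → ℤ) (i : Fin 2) :
    x i = dZ x w * u i + dZ u x * w i := by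
  unfold dZ at *
  fin_cases i
  · show x 0 = _ * u 0 + _ * w 0
    linear_combination (-x 0) * h
  · show x 1 = _ * u 1 + _ * w 1
    linear_combination (-x 1) * h

lemma iZ_expand {u w : Fin 2 → ℤ} (h : dZ u w = 1) (x : Fin 2 → ℤ) :
    iZ x x = dZ x w ^ 2 * iZ u u + dZ u x ^ 2 * iZ w w + 2 * (dZ x w * dZ u x) * iZ u w := by
  have h0 := expand h x 0
  have h1 := expand h x 1
  generalize dZ x w = a at *
  generalize dZ u x = b at *
  unfold iZ
  rw [h0, h1]
  ring

/-- a short vector is not strictly inside a leaf -/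
lemma leaf_inside {N : ℤ} {l : (Fin 2 → ℤ) × (Fin 2 → ℤ)} (h : LeafZ N l)
    {x : Fin 2 → ℤ} (hx : iZ x x ≤ N) (h1 : 0 < dZ l.1 x) (h2 : 0 < dZ x l.2) : False := by
  have hc := leaf_c h
  obtain ⟨k1, k2, k3, k4⟩ := h
  rw [iZ_expand k1] at hx
  rw [iZ_add] at k4
  have p1 := iZ_nonneg l.1
  have p2 := iZ_nonneg l.2
  have q1 : 1 ≤ dZ l.1 x ^ 2 := by nlinarith
  have q2 : 1 ≤ dZ x l.2 ^ 2 := by nlinarith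
  have q3 : 1 ≤ dZ x l.2 * dZ l.1 x := by nlinarith
  nlinarith [mul_nonneg (sub_nonneg.2 q1) p2, mul_nonneg (sub_nonneg.2 q2) p1,
    mul_nonneg (sub_nonneg.2 q3) hc]

/-- a short nonzero vector is not proportional to the mediant of a leaf -/
lemma leaf_med {N : ℤ} {l : (Fin 2 → ℤ) × (Fin 2 → ℤ)} (h : LeafZ N l)
    {x : Fin 2 → ℤ} (hx : iZ x x ≤ N) (hx0 : 0 < iZ x x) : dZ x (l.1 + l.2) ≠ 0 := by
  intro h0
  obtain ⟨k1, k2, k3, k4⟩ := h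
  have e : dZ x (l.1 + l.2) = dZ x l.2 - dZ l.1 x := by
    simp only [dZ, Pi.add_apply]; ring
  have e' : dZ x l.2 = dZ l.1 x := by linarith
  rw [iZ_expand k1, e'] at hx hx0
  rw [iZ_add] at k4
  have : 0 ≤ iZ l.1 l.1 + iZ l.2 l.2 + 2 * iZ l.1 l.2 := by rw [← iZ_add]; exact iZ_nonneg _
  generalize dZ l.1 x = a at *
  have ha : a ≠ 0 := by rintro rfl; simp at hx0
  have : 1 ≤ a ^ 2 := by have := sq_nonneg a; have := pow_ne_zero 2 ha; omega
  nlinarith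

lemma leafSet_finite (N : ℤ) : {l | LeafZ N l}.Finite := by
  have hb : (Set.Icc (fun _ => -N) (fun _ => N) : Set (Fin 2 → ℤ)).Finite := Set.finite_Icc _ _
  refine (hb.prod hb).subset ?_
  have key : ∀ u : Fin 2 → ℤ, iZ u u ≤ N → u ∈ (Set.Icc (fun _ => -N) (fun _ => N) : Set (Fin 2 → ℤ)) := by
    intro u hu
    unfold iZ at hu
    constructor <;> intro i <;> fin_cases i <;> simp <;> 
      nlinarith [sq_nonneg (u 0), sq_nonneg (u 1), sq_nonneg (u 0 + 1), sq_nonneg (u 1 + 1), sq_nonneg (u 0 - 1), sq_nonneg (u 1 - 1)]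
  rintro l ⟨_, h2, h3, _⟩
  exact ⟨key _ h2, key _ h3⟩

/-- all leaves -/
def leaves (N : ℤ) : Finset ((Fin 2 → ℤ) × (Fin 2 → ℤ)) := (leafSet_finite N).toFinset

lemma mem_leaves {N : ℤ} {l} : l ∈ leaves N ↔ LeafZ N l := by simp [leaves]

/-- `m` is strictly inside the cone -/
def InZ (u w m : Fin 2 → ℤ) : Prop := 0 < dZ u m ∧ 0 < dZ m w

open Classical in
/-- leaf sum over a cone -/
def SZ (N : ℤ) (u w : Fin 2 → ℤ) : ℝ :=
  ∑ l ∈ (leaves N).filter (fun l => InZ u w (l.1 + l.2)), gZ l.1 l.2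

lemma SZ_split {N : ℤ} {u w x : Fin 2 → ℤ} (hd : 0 < dZ u w) (hux : 0 < dZ u x)
    (hxw : 0 < dZ x w) (hx : 0 < iZ x x) (hxN : iZ x x ≤ N) :
    SZ N u w = SZ N u x + SZ N x w := by
  classical
  unfold SZ
  rw [← Finset.sum_union]
  · apply Finset.sum_congr _ (fun _ _ => rfl)
    ext l
    simp only [Finset.mem_filter, Finset.mem_union, mem_leaves]
    simp only [InZ]
    have pl : dZ u (l.1 + l.2) * dZ x w = dZ u x * dZ (l.1 + l.2) w + dZ u w * dZ x (l.1 + l.2) := by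
      unfold dZ; ring
    have am : dZ (l.1 + l.2) x = - dZ x (l.1 + l.2) := by unfold dZ; ring
    constructor
    · rintro ⟨hl, h1, h2⟩
      have := leaf_med hl hxN hx
      rcases lt_or_gt_of_ne this with h | h
      · left; exact ⟨hl, h1, by linarith⟩
      · right; exact ⟨hl, h, h2⟩
    · rintro (⟨hl, h1, h2⟩ | ⟨hl, h1, h2⟩)
      · refine ⟨hl, h1, ?_⟩
        rw [am] at h2
        by_contra hc
        nlinarith [mul_pos h1 hxw]
      · refine ⟨hl, ?_, h2⟩
        by_contra hc
        nlinarith [mul_pos hux h2, mul_pos hd h1]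
  · rw [Finset.disjoint_left]
    simp only [Finset.mem_filter]
    simp only [InZ]
    rintro l ⟨_, _, h2⟩ ⟨_, h3, _⟩
    have am : dZ (l.1 + l.2) x = - dZ x (l.1 + l.2) := by unfold dZ; ring
    linarith

lemma SZ_leaf {N : ℤ} {u w : Fin 2 → ℤ} (h : LeafZ N (u, w)) : SZ N u w = gZ u w := by
  classical
  unfold SZ
  have : (leaves N).filter (fun l => InZ u w (l.1 + l.2)) = {(u, w)} := by
    ext l
    simp only [Finset.mem_filter, mem_leaves, Finset.mem_singleton]
    constructor
    · rintro ⟨hl, h1, h2⟩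
      have hd : dZ u w = 1 := h.1
      have hu : iZ u u ≤ N := h.2.1
      have hw : iZ w w ≤ N := h.2.2.1
      have e1 : dZ u (l.1 + l.2) = dZ u l.1 + dZ u l.2 := by simp only [dZ, Pi.add_apply]; ring
      have e2 : dZ (l.1 + l.2) w = dZ l.1 w + dZ l.2 w := by simp only [dZ, Pi.add_apply]; ring
      have e3 : dZ l.1 u = - dZ u l.1 := by unfold dZ; ring
      have e4 : dZ w l.2 = - dZ l.2 w := by unfold dZ; ring
      have e5 : dZ l.1 l.2 = dZ l.1 w * dZ u l.2 - dZ u l.1 * dZ l.2 w := by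
        have : dZ l.1 l.2 * dZ u w = dZ l.1 w * dZ u l.2 - dZ u l.1 * dZ l.2 w := by
          unfold dZ; ring
        rw [hd] at this; linarith
      rw [e1] at h1
      rw [e2] at h2
      rw [hl.1] at e5
      have a0 : 0 ≤ dZ u l.1 := by
        by_contra hc
        push Not at hc
        exact leaf_inside hl hu (by linarith) (by linarith)
      have b0 : 0 ≤ dZ l.2 w := by
        by_contra hc
        push Not at hc
        exact leaf_inside hl hw (by linarith [show dZ l.1 w > 0 by linarith]) (by linarith)
      have n1 : ¬ (0 < dZ u l.1 ∧ 0 < dZ l.1 w) := fun hh => leaf_inside h hl.2.1 hh.1 hh.2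
      have n2 : ¬ (0 < dZ u l.2 ∧ 0 < dZ l.2 w) := fun hh => leaf_inside h hl.2.2.1 hh.1 hh.2
      have x1 := expand hd l.1
      have x2 := expand hd l.2
      generalize dZ u l.1 = a at *
      generalize dZ l.1 w = p at *
      generalize dZ u l.2 = r at *
      generalize dZ l.2 w = b at *
      have ha : a = 0 := by
        by_contra ha
        have ha' : 0 < a := by omega
        have hp : p ≤ 0 := by by_contra; exact n1 ⟨ha', by omega⟩
        have hb' : 0 < b := by omega
        have hr : r ≤ 0 := by by_contra; exact n2 ⟨by omega, hb'⟩
        nlinarith [mul_nonneg (show 0 ≤ b - (1 - p) by omega) (show 0 ≤ a by omega), mul_nonneg (show 0 ≤ 1 - p by omega) (show 0 ≤ a - (1 - r) by omega)]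
      subst ha
      have hr : 0 < r := by omega
      have hb : b = 0 := by by_contra; exact n2 ⟨hr, by omega⟩
      subst hb
      have hp : 0 < p := by omega
      have : p = 1 ∧ r = 1 := by
        constructor <;> nlinarith
      obtain ⟨rfl, rfl⟩ := this
      ext i
      · simpa using x1 i
      · simpa using x2 i
    · rintro rfl
      refine ⟨h, ?_, ?_⟩
      · have : dZ u (u + w) = dZ u w := by simp only [dZ, Pi.add_apply]; ring
        show 0 < dZ u (u + w)
        rw [this, h.1]; norm_num
      · have : dZ (u + w) w = dZ u w := by simp only [dZ, Pi.add_apply]; ring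
        show 0 < dZ (u + w) w
        rw [this, h.1]; norm_num
  rw [this, Finset.sum_singleton]

/-- unimodular cones -/
lemma SZ_unimod {N : ℤ} (n : ℕ) : ∀ {u w : Fin 2 → ℤ}, dZ u w = 1 → iZ u u ≤ N → iZ w w ≤ N →
    (N - iZ u w).toNat ≤ n → SZ N u w = gZ u w := by
  induction n with
  | zero =>
    intro u w hd hu hw hn
    have : N ≤ iZ u w := by omega
    have pu := iZ_pos (coprime_right (u := -w) (x := u) (by rw [← hd]; simp only [dZ, Pi.neg_apply]; ring))
    have pw := iZ_pos (coprime_right hd)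
    exact SZ_leaf ⟨hd, hu, hw, by simp only [iZ_add]; linarith⟩
  | succ n ih =>
    intro u w hd hu hw hn
    have pu := iZ_pos (coprime_right (u := -w) (x := u) (by rw [← hd]; simp only [dZ, Pi.neg_apply]; ring))
    have pw := iZ_pos (coprime_right hd)
    by_cases h : N < iZ (u + w) (u + w)
    · exact SZ_leaf ⟨hd, hu, hw, h⟩
    · push Not at h
      have d1 : dZ u (u + w) = 1 := by rw [← hd]; simp only [dZ, Pi.add_apply]; ring
      have d2 : dZ (u + w) w = 1 := by rw [← hd]; simp only [dZ, Pi.add_apply]; ring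
      have i1 : iZ u (u + w) = iZ u u + iZ u w := by simp only [iZ, Pi.add_apply]; ring
      have i2 : iZ (u + w) w = iZ w w + iZ u w := by simp only [iZ, Pi.add_apply]; ring
      have px := iZ_pos (coprime_right d1)
      rw [SZ_split (x := u + w) (by omega) (by omega) (by omega) px h,
        ih d1 hu h (by omega), ih d2 h hw (by omega),
        gZ_split (q := 1) (by omega) one_pos pu pw px d1 d2, hd]
      norm_num

lemma exists_pt {u w : Fin 2 → ℤ} (hu : IsCoprime (u 0) (u 1)) (hw : IsCoprime (w 0) (w 1))
    (hd : 1 < dZ u w) : ∃ x : Fin 2 → ℤ, dZ u x = 1 ∧ 0 < dZ x w ∧ dZ x w < dZ u w := by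
  obtain ⟨a, b, hab⟩ := hu
  set z : Fin 2 → ℤ := ![-b, a] with hz
  have z0 : z 0 = -b := rfl
  have z1 : z 1 = a := rfl
  have hz1 : dZ u z = 1 := by simp only [dZ, z0, z1]; linarith
  have hw' := expand hz1 w
  set d := dZ u w with hdd
  set k := dZ w z with hk
  have hnd : ¬ d ∣ k := by
    intro h
    have h0 : d ∣ w 0 := by rw [hw' 0]; exact dvd_add (h.mul_right _) (dvd_mul_right _ _)
    have h1 : d ∣ w 1 := by rw [hw' 1]; exact dvd_add (h.mul_right _) (dvd_mul_right _ _)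
    have := hw.isUnit_of_dvd' h0 h1
    rw [Int.isUnit_iff] at this
    omega
  -- s d - k = (-k) % d
  refine ⟨fun i => (-((-k) / d)) * u i + z i, ?_, ?_⟩
  · rw [← hz1]; simp only [dZ]; ring
  · have e : dZ (fun i => (-((-k) / d)) * u i + z i) w = (-k) % d := by
      have : dZ (fun i => (-((-k) / d)) * u i + z i) w = -((-k) / d) * d - k := by
        simp only [hdd, hk, dZ]; ring
      rw [this]
      have := Int.emod_add_mul_ediv (-k) d
      linarith
    rw [e]
    refine ⟨?_, Int.emod_lt_of_pos _ (by omega)⟩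
    have h1 := Int.emod_nonneg (-k) (show d ≠ 0 by omega)
    have h2 : (-k) % d ≠ 0 := by
      intro h
      exact hnd ((Int.dvd_neg).1 (Int.dvd_of_emod_eq_zero h))
    omega

lemma local_main {N : ℤ} (n : ℕ) : ∀ {u w : Fin 2 → ℤ}, IsCoprime (u 0) (u 1) → IsCoprime (w 0) (w 1) →
    0 < dZ u w → iZ u u ≤ N → iZ w w ≤ N → (dZ u w).toNat ≤ n →
    SZ N u w ≤ gZ u w ∧ (SZ N u w = gZ u w ↔ GorZ u w) := by
  induction n with
  | zero => intro u w _ _ hd _ _ h; omega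
  | succ n ih =>
    intro u w cu cw hd hu hw hn
    by_cases h1 : dZ u w = 1
    · have := SZ_unimod _ h1 hu hw le_rfl
      refine ⟨this.le, iff_of_true this ?_⟩
      intro i; rw [h1]; exact one_dvd _
    · obtain ⟨x, hux, hq, hqd⟩ := exists_pt cu cw (by omega)
      have pu := iZ_pos cu
      have pw := iZ_pos cw
      have px := iZ_pos (coprime_right hux)
      have e : ∀ i, dZ u w * x i = dZ x w * u i + w i := by
        intro i
        have h0 : dZ u w * x 0 = dZ x w * u 0 + w 0 := by
          unfold dZ at *; linear_combination (w 0) * hux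
        have h1 : dZ u w * x 1 = dZ x w * u 1 + w 1 := by
          unfold dZ at *; linear_combination (w 1) * hux
        fin_cases i
        · exact h0
        · exact h1
      have hxN : iZ x x ≤ N := by
        have : dZ u w ^ 2 * iZ x x = dZ x w ^ 2 * iZ u u + iZ w w + 2 * dZ x w * iZ u w := by
          unfold iZ
          calc _ = (dZ u w * x 0) ^ 2 + (dZ u w * x 1) ^ 2 := by ring
            _ = _ := by rw [e 0, e 1]; ring
        have c : 2 * iZ u w ≤ iZ u u + iZ w w := by
          unfold iZ; nlinarith [sq_nonneg (u 0 - w 0), sq_nonneg (u 1 - w 1)]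
        have c' : iZ u w ≤ N := by linarith
        have hN : 0 < N := by linarith
        have : dZ u w ^ 2 * iZ x x ≤ (dZ x w + 1) ^ 2 * N := by
          rw [this]
          nlinarith [mul_le_mul_of_nonneg_left hu (sq_nonneg (dZ x w)), mul_le_mul_of_nonneg_left c' hq.le]
        have h2 : (dZ x w + 1) ^ 2 * N ≤ dZ u w ^ 2 * N := by
          apply mul_le_mul_of_nonneg_right _ hN.le
          apply pow_le_pow_left₀ <;> omega
        have h3 : 0 < dZ u w ^ 2 := by positivity
        exact le_of_mul_le_mul_left (this.trans h2) h3
      have s1 := SZ_unimod _ hux hu hxN le_rfl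
      obtain ⟨s2, s3⟩ := ih (coprime_right hux) cw hq hxN hw (by omega)
      rw [SZ_split hd (by omega) hq px hxN, gZ_split hd hq pu pw px hux rfl, s1]
      have t1 : (0 : ℝ) ≤ ((dZ u w - 1 - dZ x w : ℤ) : ℝ) := by
        exact_mod_cast (by omega : 0 ≤ dZ u w - 1 - dZ x w)
      have t2 : (0 : ℝ) ≤ ((dZ u w - 1 - dZ x w : ℤ) : ℝ) ^ 2 / ((dZ x w : ℝ) * (dZ u w : ℝ)) := by
        have : (0 : ℝ) < dZ x w := by exact_mod_cast hq
        have : (0 : ℝ) < dZ u w := by exact_mod_cast hd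
        positivity
      refine ⟨by linarith, ?_⟩
      constructor
      · intro h
        have z1 : ((dZ u w - 1 - dZ x w : ℤ) : ℝ) = 0 := by linarith
        have z2 : dZ u w - 1 - dZ x w = 0 := by exact_mod_cast z1
        have hg := s3.1 (by linarith)
        intro i
        have ei := e i
        refine ⟨x i - u i, ?_⟩
        have : dZ u w = dZ x w + 1 := by omega
        rw [this] at ei ⊢
        linarith
      · intro h
        obtain ⟨k0, hk0⟩ := h 0
        obtain ⟨k1, hk1⟩ := h 1
        have hdv : dZ u w ∣ 1 + dZ x w := by
          refine ⟨x 0 * k1 - x 1 * k0, ?_⟩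
          have : 1 + dZ x w = x 0 * (w 1 - u 1) - x 1 * (w 0 - u 0) := by
            rw [← hux]; unfold dZ; ring
          rw [this, hk0, hk1]; ring
        have := Int.le_of_dvd (by omega) hdv
        have hd1 : dZ u w = dZ x w + 1 := by omega
        have hg : GorZ x w := by
          intro i
          have ei := e i
          refine ⟨x i - u i, ?_⟩
          rw [hd1] at ei
          linarith
        have := s3.2 hg
        have z : dZ u w - 1 - dZ x w = 0 := by omega
        rw [z, this]; simp

open Classical in
lemma sum_SZ {ι : Type*} {N : ℤ} (E : Finset ι) (a b : ι → Fin 2 → ℤ)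
    (ha : ∀ e ∈ E, IsCoprime (a e 0) (a e 1)) (hb : ∀ e ∈ E, IsCoprime (b e 0) (b e 1))
    (hA : ∀ e ∈ E, iZ (a e) (a e) ≤ N) (hB : ∀ e ∈ E, iZ (b e) (b e) ≤ N)
    (hP : ∀ m : Fin 2 → ℤ, (∀ e ∈ E, dZ (a e) m ≠ 0 ∧ dZ (b e) m ≠ 0) →
      ∃! e, e ∈ E ∧ InZ (a e) (b e) m) :
    ∑ e ∈ E, SZ N (a e) (b e) = ∑ l ∈ leaves N, gZ l.1 l.2 := by
  unfold SZ
  simp_rw [Finset.sum_filter]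
  rw [Finset.sum_comm]
  apply Finset.sum_congr rfl
  intro l hl
  rw [mem_leaves] at hl
  obtain ⟨e, ⟨he, hi⟩, hu⟩ := hP (l.1 + l.2) (fun e he =>
    ⟨leaf_med hl (hA e he) (iZ_pos (ha e he)), leaf_med hl (hB e he) (iZ_pos (hb e he))⟩)
  rw [Finset.sum_eq_single_of_mem e he]
  · rw [if_pos hi]
  · intro e' he' hne
    rw [if_neg]
    intro h
    exact hne (hu e' ⟨he', h⟩)

lemma leaves_total {N : ℤ} (hN : 1 ≤ N) : ∑ l ∈ leaves N, gZ l.1 l.2 = 12 := by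
  classical
  let a : Fin 4 → Fin 2 → ℤ := ![![1, 0], ![0, 1], ![-1, 0], ![0, -1]]
  let b : Fin 4 → Fin 2 → ℤ := ![![0, 1], ![-1, 0], ![0, -1], ![1, 0]]
  rw [← sum_SZ (N := N) Finset.univ a b]
  · have : ∀ e, SZ N (a e) (b e) = 3 := by
      intro e
      rw [SZ_unimod _ _ _ _ le_rfl]
      · fin_cases e <;> norm_num [gZ, dZ, iZ, a, b]
      · fin_cases e <;> norm_num [gZ, dZ, iZ, a, b]
      · fin_cases e <;> simpa [gZ, dZ, iZ, a, b] using hN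
      · fin_cases e <;> simpa [gZ, dZ, iZ, a, b] using hN
    simp [this]; norm_num
  · intro e _; fin_cases e <;> simp [a, Int.isCoprime_iff_gcd_eq_one]
  · intro e _; fin_cases e <;> simp [b, Int.isCoprime_iff_gcd_eq_one]
  · intro e _; fin_cases e <;> simpa [iZ, a] using hN
  · intro e _; fin_cases e <;> simpa [iZ, b] using hN
  · intro m hm
    have h1 := (hm 0 (Finset.mem_univ _)).1
    have h2 := (hm 1 (Finset.mem_univ _)).1
    simp [dZ, a] at h1 h2
    rcases lt_or_gt_of_ne h1 with h1 | h1 <;> rcases lt_or_gt_of_ne h2 with h2 | h2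
    · refine ⟨2, ?_, ?_⟩
      · simp [InZ, dZ, a, b]; omega
      · intro e; fin_cases e <;> simp [InZ, dZ, a, b] <;> omega
    · refine ⟨3, ?_, ?_⟩
      · simp [InZ, dZ, a, b]; omega
      · intro e; fin_cases e <;> simp [InZ, dZ, a, b] <;> omega
    · refine ⟨1, ?_, ?_⟩
      · simp [InZ, dZ, a, b]; omega
      · intro e; fin_cases e <;> simp [InZ, dZ, a, b] <;> omega
    · refine ⟨0, ?_, ?_⟩
      · simp [InZ, dZ, a, b]; omega
      · intro e; fin_cases e <;> simp [InZ, dZ, a, b] <;> omega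

theorem arith_main {ι : Type*} (E : Finset ι) (a b : ι → Fin 2 → ℤ)
    (ha : ∀ e ∈ E, IsCoprime (a e 0) (a e 1)) (hb : ∀ e ∈ E, IsCoprime (b e 0) (b e 1))
    (hd : ∀ e ∈ E, 0 < dZ (a e) (b e))
    (hP : ∀ m : Fin 2 → ℤ, (∀ e ∈ E, dZ (a e) m ≠ 0 ∧ dZ (b e) m ≠ 0) →
      ∃! e, e ∈ E ∧ InZ (a e) (b e) m) :
    12 ≤ ∑ e ∈ E, gZ (a e) (b e) ∧
      (∑ e ∈ E, gZ (a e) (b e) = 12 ↔ ∀ e ∈ E, GorZ (a e) (b e)) := by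
  classical
  set N : ℤ := 1 + ∑ e ∈ E, (iZ (a e) (a e) + iZ (b e) (b e)) with hNdef
  have hle : ∀ e ∈ E, iZ (a e) (a e) + iZ (b e) (b e) ≤ N := by
    intro e he
    have := Finset.single_le_sum (f := fun e => iZ (a e) (a e) + iZ (b e) (b e))
      (fun e _ => add_nonneg (iZ_nonneg (a e)) (iZ_nonneg (b e))) he
    linarith
  have hN : 1 ≤ N := by
    have := Finset.sum_nonneg (s := E) (f := fun e => iZ (a e) (a e) + iZ (b e) (b e))
      (fun e _ => add_nonneg (iZ_nonneg (a e)) (iZ_nonneg (b e)))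
    linarith
  have hA : ∀ e ∈ E, iZ (a e) (a e) ≤ N := fun e he => by
    linarith [hle e he, iZ_nonneg (b e)]
  have hB : ∀ e ∈ E, iZ (b e) (b e) ≤ N := fun e he => by
    linarith [hle e he, iZ_nonneg (a e)]
  have hS := sum_SZ (N := N) E a b ha hb hA hB hP
  rw [leaves_total hN] at hS
  have hL := fun e he => local_main (N := N) _ (ha e he) (hb e he) (hd e he) (hA e he) (hB e he) le_rfl
  rw [← hS]
  refine ⟨Finset.sum_le_sum (fun e he => (hL e he).1), ?_⟩
  rw [eq_comm, Finset.sum_eq_sum_iff_of_le (fun e he => (hL e he).1)]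
  exact forall₂_congr fun e he => (hL e he).2

/-! ### Geometric part -/
/-- determinant of two real vectors -/
def dR (u w : Fin 2 → ℝ) : ℝ := u 0 * w 1 - u 1 * w 0
/-- inner product of two real vectors -/
def iR (u w : Fin 2 → ℝ) : ℝ := u 0 * w 0 + u 1 * w 1

lemma ext2 {x y : Fin 2 → ℝ} (h0 : x 0 = y 0) (h1 : x 1 = y 1) : x = y := by
  ext i; fin_cases i
  · exact h0
  · exact h1

lemma expandR {u w : Fin 2 → ℝ} (h : dR u w ≠ 0) (x : Fin 2 → ℝ) :
    x = (dR x w / dR u w) • u + (dR u x / dR u w) • w := by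
  apply ext2 <;> simp only [Pi.add_apply, Pi.smul_apply, smul_eq_mul] <;> field_simp <;>
    unfold dR <;> ring

/-- `V` is the vertex set of the polygon `Δ` -/
structure VPoly (V : Finset (Fin 2 → ℝ)) (Δ : Set (Fin 2 → ℝ)) : Prop where
  hull : Δ = convexHull ℝ (V : Set (Fin 2 → ℝ))
  ext : ∀ v ∈ V, v ∈ Set.extremePoints ℝ Δ
  zero : (0 : Fin 2 → ℝ) ∈ interior Δ

/-- `(u,w)` is a counterclockwise edge -/
def Ed (V : Finset (Fin 2 → ℝ)) (u w : Fin 2 → ℝ) : Prop :=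
  u ∈ V ∧ w ∈ V ∧ 0 < dR u w ∧ ∀ z ∈ V, dR z w + dR u z ≤ dR u w

section
variable {V : Finset (Fin 2 → ℝ)} {Δ : Set (Fin 2 → ℝ)}

lemma VPoly.mem (h : VPoly V Δ) {v} (hv : v ∈ V) : v ∈ Δ := (h.ext v hv).1

lemma VPoly.convex (h : VPoly V Δ) : Convex ℝ Δ := by
  rw [h.hull]; exact convex_convexHull _ _

lemma VPoly.small (h : VPoly V Δ) (x : Fin 2 → ℝ) : ∃ ε : ℝ, 0 < ε ∧ ε • x ∈ Δ := by
  have h1 : Tendsto (fun t : ℝ => t • x) (nhdsWithin 0 (Set.Ioi 0)) (nhds 0) := by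
    have : Continuous (fun t : ℝ => t • x) := by fun_prop
    have h2 := this.tendsto 0
    simp only [zero_smul] at h2
    exact h2.mono_left nhdsWithin_le_nhds
  have h2 := h1.eventually (mem_interior_iff_mem_nhds.1 h.zero)
  obtain ⟨ε, h3, h4⟩ := (h2.and self_mem_nhdsWithin).exists
  exact ⟨ε, h4, h3⟩

/-- linear functionals bounded on vertices are bounded on the polygon -/
lemma VPoly.le_of (h : VPoly V Δ) (a b c : ℝ) (hV : ∀ z ∈ V, a * z 0 + b * z 1 ≤ c)
    {x : Fin 2 → ℝ} (hx : x ∈ Δ) : a * x 0 + b * x 1 ≤ c := by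
  rw [h.hull] at hx
  have hc : Convex ℝ {x : Fin 2 → ℝ | a * x 0 + b * x 1 ≤ c} := by
    intro x hx y hy s t hs ht hst
    simp only [Set.mem_ofPred_eq, Pi.add_apply, Pi.smul_apply, smul_eq_mul] at *
    have : a * (s * x 0 + t * y 0) + b * (s * x 1 + t * y 1) =
      s * (a * x 0 + b * x 1) + t * (a * y 0 + b * y 1) := by ring
    rw [this]
    have e : c = s * c + t * c := by rw [← add_mul, hst, one_mul]
    rw [e]
    gcongr
  exact convexHull_min (fun z hz => hV z hz) hc hx

lemma VPoly.exists_pos (h : VPoly V Δ) (a b : ℝ) (hab : a ≠ 0 ∨ b ≠ 0) :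
    ∃ z ∈ V, 0 < a * z 0 + b * z 1 := by
  by_contra hc
  push Not at hc
  obtain ⟨ε, he, hm⟩ := h.small ![a, b]
  have := h.le_of a b 0 hc hm
  simp at this
  have h2 : 0 < a * a + b * b := by
    rcases hab with h | h
    · nlinarith [mul_self_pos.2 h, mul_self_nonneg b]
    · nlinarith [mul_self_pos.2 h, mul_self_nonneg a]
  nlinarith

lemma VPoly.ne_zero (h : VPoly V Δ) {v} (hv : v ∈ V) : v ≠ 0 := by
  rintro rfl
  obtain ⟨e1, h1, m1⟩ := h.small ![1, 0]
  obtain ⟨e2, h2, m2⟩ := h.small ![-1, 0]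
  have := (h.ext 0 hv).2 m1 m2 ?_
  · have := congrFun this 0
    simp at this
    linarith
  · refine ⟨e2 / (e1 + e2), e1 / (e1 + e2), by positivity, by positivity, by field_simp; ring, ?_⟩
    apply ext2
    · simp; field_simp; ring
    · simp

lemma VPoly.normpos (h : VPoly V Δ) {v} (hv : v ∈ V) : 0 < iR v v := by
  unfold iR
  by_contra hc
  have h0 : v 0 = 0 := by nlinarith [sq_nonneg (v 0), sq_nonneg (v 1)]
  have h1 : v 1 = 0 := by nlinarith [sq_nonneg (v 0), sq_nonneg (v 1)]
  exact h.ne_zero hv (ext2 h0 h1)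

lemma VPoly.ray (h : VPoly V Δ) {v} (hv : v ∈ V) {a : ℝ} (ha : 1 < a) (hm : a • v ∈ Δ) : False := by
  have := (h.ext v hv).2 (interior_subset h.zero) hm ?_
  · exact h.ne_zero hv this.symm
  · refine ⟨1 - 1 / a, 1 / a, ?_, by positivity, by ring, ?_⟩
    · rw [sub_pos, div_lt_one (by linarith)]; exact ha
    · rw [smul_zero, zero_add, smul_smul, one_div, inv_mul_cancel₀ (by linarith), one_smul]

lemma VPoly.collinear (h : VPoly V Δ) {u w z} (hu : u ∈ V) (hw : w ∈ V) (hz : z ∈ V)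
    (hd : 0 < dR u w) (he : dR z w + dR u z = dR u w) : z = u ∨ z = w := by
  have ex := expandR hd.ne' z
  have hs : dR z w / dR u w + dR u z / dR u w = 1 := by
    rw [← add_div, he, div_self hd.ne']
  generalize dR z w / dR u w = a at *
  generalize dR u z / dR u w = b at *
  rcases lt_trichotomy a 0 with ha | ha | ha
  · -- w between z and u
    right
    have hb : 0 < b := by linarith
    apply (h.ext w hw).2 (h.mem hz) (h.mem hu)
    refine ⟨1 / b, -a / b, by positivity, div_pos (by linarith) hb, by field_simp; linarith, ?_⟩
    rw [ex]
    apply ext2 <;> simp <;> field_simp <;> ring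
  · right
    rw [ex, ha, show b = 1 by linarith]; simp
  · rcases lt_trichotomy b 0 with hb | hb | hb
    · left
      apply (h.ext u hu).2 (h.mem hz) (h.mem hw)
      refine ⟨1 / a, -b / a, by positivity, div_pos (by linarith) ha, by field_simp; linarith, ?_⟩
      rw [ex]
      apply ext2 <;> simp <;> field_simp <;> ring
    · left
      rw [ex, hb, show a = 1 by linarith]; simp
    · left
      exact ((h.ext z hz).2 (h.mem hu) (h.mem hw) ⟨a, b, ha, hb, hs, ex.symm⟩).symm

lemma VPoly.strict (h : VPoly V Δ) {u w z} (he : Ed V u w) (hz : z ∈ V) (h1 : z ≠ u) (h2 : z ≠ w) :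
    dR z w + dR u z < dR u w := by
  refine lt_of_le_of_ne (he.2.2.2 z hz) (fun hc => ?_)
  rcases h.collinear he.1 he.2.1 hz he.2.2.1 hc with h | h
  · exact h1 h
  · exact h2 h

lemma VPoly.exists_nb (h : VPoly V Δ) {v} (hv : v ∈ V) (σ : ℝ) (hσ : σ * σ = 1) :
    ∃ w ∈ V, 0 < σ * dR v w ∧ ∀ z ∈ V, σ * dR v z - σ * dR w z ≤ σ * dR v w := by
  classical
  have hσ0 : σ ≠ 0 := by rintro rfl; simp at hσ
  have hn := h.normpos hv
  obtain ⟨w0, hw0, hp0⟩ := h.exists_pos (-σ * v 1) (σ * v 0) (by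
    by_contra hc
    push Not at hc
    have h1 : v 1 = 0 := by simpa [hσ0] using hc.1
    have h0 : v 0 = 0 := by simpa [hσ0] using hc.2
    exact h.ne_zero hv (ext2 h0 h1))
  have hp0' : 0 < σ * dR v w0 := by unfold dR; linarith
  obtain ⟨w, hw, hmin⟩ := Finset.exists_min_image (V.filter fun z => 0 < σ * dR v z)
    (fun z => (iR v v - iR z v) / (σ * dR v z)) ⟨w0, Finset.mem_filter.2 ⟨hw0, hp0'⟩⟩
  rw [Finset.mem_filter] at hw
  obtain ⟨hwV, hwp⟩ := hw
  refine ⟨w, hwV, hwp, fun z hz => ?_⟩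
  have key : iR w v * dR v z - iR z v * dR v w = iR v v * dR w z := by unfold iR dR; ring
  rcases lt_trichotomy (σ * dR v z) 0 with hb | hb | hb
  · by_contra hc
    push Not at hc
    -- the point on the ray of v
    set B := σ * dR v w with hB
    set b := σ * dR v z with hbdef
    have hsum : 0 < B - b := by linarith
    have hm : (-b / (B - b)) • w + (B / (B - b)) • z ∈ Δ :=
      h.convex (h.mem hwV) (h.mem hz) (div_nonneg (by linarith) hsum.le)
        (div_nonneg hwp.le hsum.le) (by field_simp; ring)
    have ha : 1 < (-b * iR w v + B * iR z v) / ((B - b) * iR v v) := by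
      rw [one_lt_div (by positivity)]
      have : -b * iR w v + B * iR z v = -(σ * (iR v v * dR w z)) := by rw [← key, hB, hbdef]; ring
      rw [this]
      nlinarith
    refine h.ray hv ha ?_
    convert hm using 1
    apply ext2
    · simp only [Pi.add_apply, Pi.smul_apply, smul_eq_mul]
      field_simp
      rw [hB, hbdef]; unfold iR dR; ring
    · simp only [Pi.add_apply, Pi.smul_apply, smul_eq_mul]
      field_simp
      rw [hB, hbdef]; unfold iR dR; ring
  · have hz0 : dR v z = 0 := by simpa [hσ0] using hb
    have hzv : z = (iR z v / iR v v) • v := by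
      apply ext2 <;> simp only [Pi.smul_apply, smul_eq_mul] <;> field_simp
      · unfold dR at hz0; unfold iR; linear_combination (-v 1) * hz0
      · unfold dR at hz0; unfold iR; linear_combination (v 0) * hz0
    have ha : iR z v / iR v v ≤ 1 := by
      by_contra hc
      push Not at hc
      exact h.ray hv hc (hzv ▸ h.mem hz)
    rw [div_le_one hn] at ha
    rw [hz0] at key ⊢
    have : iR v v * (σ * dR w z) = - (iR z v * (σ * dR v w)) := by linear_combination (-σ) * key
    nlinarith
  · have := hmin z (Finset.mem_filter.2 ⟨hz, hb⟩)
    rw [div_le_div_iff₀ hwp hb] at this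
    have k2 : iR v v * (σ * dR w z) = iR w v * (σ * dR v z) - iR z v * (σ * dR v w) := by
      linear_combination (-σ) * key
    nlinarith

lemma VPoly.exists_out (h : VPoly V Δ) {v} (hv : v ∈ V) : ∃ w, Ed V v w := by
  obtain ⟨w, hw, h1, h2⟩ := h.exists_nb hv 1 (by norm_num)
  refine ⟨w, hv, hw, by linarith, fun z hz => ?_⟩
  have := h2 z hz
  have e : dR z w = - dR w z := by unfold dR; ring
  linarith

lemma VPoly.exists_in (h : VPoly V Δ) {v} (hv : v ∈ V) : ∃ w, Ed V w v := by
  obtain ⟨w, hw, h1, h2⟩ := h.exists_nb hv (-1) (by norm_num)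
  have e1 : dR w v = - dR v w := by unfold dR; ring
  refine ⟨w, hw, hv, by linarith, fun z hz => ?_⟩
  have := h2 z hz
  have e : dR z v = - dR v z := by unfold dR; ring
  linarith

lemma dR_self (v : Fin 2 → ℝ) : dR v v = 0 := by unfold dR; ring
lemma dR_swap (v w : Fin 2 → ℝ) : dR v w = - dR w v := by unfold dR; ring

lemma Ed.ne {u w} (h : Ed V u w) : u ≠ w := by
  rintro rfl
  have := h.2.2.1
  rw [dR_self] at this
  exact lt_irrefl _ this

lemma VPoly.out_unique (h : VPoly V Δ) {v w w'} (h1 : Ed V v w) (h2 : Ed V v w') : w = w' := by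
  by_contra hne
  have a := h.strict h1 h2.2.1 h2.ne.symm (Ne.symm hne)
  have b := h2.2.2.2 w h1.2.1
  have := dR_swap w w'
  linarith

lemma VPoly.in_unique (h : VPoly V Δ) {v w w'} (h1 : Ed V w v) (h2 : Ed V w' v) : w = w' := by
  by_contra hne
  have a := h.strict h1 h2.1 (Ne.symm hne) h2.ne
  have b := h2.2.2.2 w h1.1
  have := dR_swap w w'
  linarith

lemma VPoly.nonempty (h : VPoly V Δ) : V.Nonempty := by
  obtain ⟨z, hz, _⟩ := h.exists_pos 1 0 (by simp)
  exact ⟨z, hz⟩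

open Classical in
/-- the set of edges -/
def edges (V : Finset (Fin 2 → ℝ)) : Finset ((Fin 2 → ℝ) × (Fin 2 → ℝ)) :=
  (V ×ˢ V).filter fun e => Ed V e.1 e.2

lemma mem_edges {e} : e ∈ edges V ↔ Ed V e.1 e.2 := by
  simp only [edges, Finset.mem_filter, Finset.mem_product]
  exact ⟨fun h => h.2, fun h => ⟨⟨h.1, h.2.1⟩, h⟩⟩

lemma VPoly.cone_exists (h : VPoly V Δ) (x : Fin 2 → ℝ) :
    ∃ u w, Ed V u w ∧ 0 ≤ dR u x ∧ 0 ≤ dR x w := by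
  obtain ⟨v, hv⟩ := h.nonempty
  obtain ⟨w, hw⟩ := h.exists_out hv
  obtain ⟨⟨u, w⟩, he, hmax⟩ := Finset.exists_max_image (edges V)
    (fun e => (dR x e.2 + dR e.1 x) / dR e.1 e.2) ⟨(v, w), mem_edges.2 hw⟩
  rw [mem_edges] at he
  simp only at he hmax
  refine ⟨u, w, he, ?_, ?_⟩
  · by_contra hc
    push Not at hc
    obtain ⟨t, ht⟩ := h.exists_in he.1
    have := hmax (t, u) (mem_edges.2 ht)
    simp only at this
    rw [div_le_div_iff₀ ht.2.2.1 he.2.2.1] at this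
    have hne : w ≠ t := by
      rintro rfl
      have := ht.2.2.1
      rw [dR_swap] at this
      linarith [he.2.2.1]
    have hs := h.strict ht he.2.1 hne he.ne.symm
    have id : (dR x u + dR t x) * dR u w - (dR x w + dR u x) * dR t u
        = dR u x * (dR w u + dR t w - dR t u) := by unfold dR; ring
    nlinarith
  · by_contra hc
    push Not at hc
    obtain ⟨t, ht⟩ := h.exists_out he.2.1
    have := hmax (w, t) (mem_edges.2 ht)
    simp only at this
    rw [div_le_div_iff₀ ht.2.2.1 he.2.2.1] at this
    have hne : u ≠ t := by
      rintro rfl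
      have := ht.2.2.1
      rw [dR_swap] at this
      linarith [he.2.2.1]
    have hs := h.strict ht he.1 he.ne hne
    have id : (dR x t + dR w x) * dR u w - (dR x w + dR u x) * dR w t
        = dR x w * (dR u t + dR w u - dR w t) := by unfold dR; ring
    nlinarith

lemma VPoly.cone_unique (h : VPoly V Δ) {x u w u' w' : Fin 2 → ℝ} (he : Ed V u w) (he' : Ed V u' w')
    (h1 : 0 < dR u x) (h2 : 0 < dR x w) (h1' : 0 < dR u' x) (h2' : 0 < dR x w') :
    u = u' ∧ w = w' := by
  have id : (dR x w' + dR u' x) * dR u w = dR x w * (dR u w' + dR u' u) + dR u x * (dR w w' + dR u' w) := by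
    unfold dR; ring
  have id' : (dR x w + dR u x) * dR u' w' = dR x w' * (dR u' w + dR u u') + dR u' x * (dR w' w + dR u w') := by
    unfold dR; ring
  have a1 := he'.2.2.2 u he.1
  have a2 := he'.2.2.2 w he.2.1
  have b1 := he.2.2.2 u' he'.1
  have b2 := he.2.2.2 w' he'.2.1
  have up : (dR x w' + dR u' x) * dR u w ≤ (dR x w + dR u x) * dR u' w' := by nlinarith
  have lo : (dR x w + dR u x) * dR u' w' ≤ (dR x w' + dR u' x) * dR u w := by nlinarith
  have c1 : dR u w' + dR u' u = dR u' w' := by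
    by_contra hne
    have := lt_of_le_of_ne a1 hne
    nlinarith
  have c2 : dR w w' + dR u' w = dR u' w' := by
    by_contra hne
    have := lt_of_le_of_ne a2 hne
    nlinarith
  have d := he.2.2.1
  have d' := he'.2.2.1
  rcases h.collinear he'.1 he'.2.1 he.1 d' c1 with rfl | rfl <;>
  rcases h.collinear he'.1 he'.2.1 he.2.1 d' c2 with rfl | rfl
  · exact absurd rfl he.ne
  · exact ⟨rfl, rfl⟩
  · rw [dR_swap] at d'; linarith
  · exact absurd rfl he.ne

end

/-! ### Areas -/
/-- the (partly open) triangle with vertices `0, p, q` -/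
def tri (p q : Fin 2 → ℝ) : Set (Fin 2 → ℝ) :=
  {x | 0 < dR x q ∧ 0 < dR p x ∧ dR x q + dR p x ≤ dR p q}

/-- the standard triangle -/
def tri0 : Set (Fin 2 → ℝ) := {x | 0 < x 0 ∧ 0 < x 1 ∧ x 0 + x 1 ≤ 1}

lemma measurableSet_tri (p q : Fin 2 → ℝ) : MeasurableSet (tri p q) := by
  have h1 : MeasurableSet {x : Fin 2 → ℝ | 0 < dR x q} :=
    measurableSet_lt measurable_const (by unfold dR; fun_prop)
  have h2 : MeasurableSet {x : Fin 2 → ℝ | 0 < dR p x} :=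
    measurableSet_lt measurable_const (by unfold dR; fun_prop)
  have h3 : MeasurableSet {x : Fin 2 → ℝ | dR x q + dR p x ≤ dR p q} :=
    measurableSet_le (by unfold dR; fun_prop) measurable_const
  exact h1.inter (h2.inter h3)

lemma volume_tri0 : volume tri0 = ENNReal.ofReal (1 / 2) := by
  have hmp := (volume_preserving_finTwoArrow ℝ)
  let S : Set (ℝ × ℝ) := {x | 0 < x.1 ∧ 0 < x.2 ∧ x.1 + x.2 ≤ 1}
  have hS : MeasurableSet S := by
    have h1 : MeasurableSet {x : ℝ × ℝ | 0 < x.1} :=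
      measurableSet_lt measurable_const measurable_fst
    have h2 : MeasurableSet {x : ℝ × ℝ | 0 < x.2} :=
      measurableSet_lt measurable_const measurable_snd
    have h3 : MeasurableSet {x : ℝ × ℝ | x.1 + x.2 ≤ 1} :=
      measurableSet_le (measurable_fst.add measurable_snd) measurable_const
    exact h1.inter (h2.inter h3)
  have h1 : tri0 = (MeasurableEquiv.finTwoArrow) ⁻¹' S := by
    ext x; rfl
  rw [h1, hmp.measure_preimage hS.nullMeasurableSet, Measure.volume_eq_prod, Measure.prod_apply hS]
  have h2 : ∀ x : ℝ, volume (Prod.mk x ⁻¹' S) =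
      (Set.Ioc (0 : ℝ) 1).indicator (fun x => ENNReal.ofReal (1 - x)) x := by
    intro x
    by_cases hx : x ∈ Set.Ioc (0 : ℝ) 1
    · rw [Set.indicator_of_mem hx]
      have : Prod.mk x ⁻¹' S = Set.Ioc 0 (1 - x) := by
        ext y
        show (0 < x ∧ 0 < y ∧ x + y ≤ 1) ↔ (0 < y ∧ y ≤ 1 - x)
        constructor
        · rintro ⟨a, b, c⟩; exact ⟨b, by linarith⟩
        · rintro ⟨b, c⟩; exact ⟨hx.1, b, by linarith⟩
      rw [this, Real.volume_Ioc, sub_zero]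
    · rw [Set.indicator_of_notMem hx]
      have : Prod.mk x ⁻¹' S = ∅ := by
        ext y
        show (0 < x ∧ 0 < y ∧ x + y ≤ 1) ↔ False
        constructor
        · rintro ⟨a, b, c⟩; exact hx ⟨a, by linarith⟩
        · exact False.elim
      rw [this, measure_empty]
  simp_rw [h2]
  rw [lintegral_indicator measurableSet_Ioc, ← ofReal_integral_eq_lintegral_ofReal]
  · congr 1
    rw [← intervalIntegral.integral_of_le zero_le_one]
    rw [intervalIntegral.integral_sub (by simp) (by simp)]
    norm_num [integral_id]
  · exact (continuous_const.sub continuous_id).integrableOn_Ioc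
  · rw [EventuallyLE, ae_restrict_iff' measurableSet_Ioc]
    exact Eventually.of_forall fun x hx => by simpa using hx.2

lemma mem_tri {p q : Fin 2 → ℝ} (h : 0 < dR p q) (x : Fin 2 → ℝ) :
    x ∈ tri p q ↔ ∃ s t : ℝ, 0 < s ∧ 0 < t ∧ s + t ≤ 1 ∧ x = s • p + t • q := by
  constructor
  · rintro ⟨h1, h2, h3⟩
    refine ⟨_, _, div_pos h1 h, div_pos h2 h, ?_, expandR h.ne' x⟩
    rw [← add_div, div_le_one h]; exact h3
  · rintro ⟨s, t, hs, ht, hst, rfl⟩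
    have e1 : dR (s • p + t • q) q = s * dR p q := by simp [dR]; ring
    have e2 : dR p (s • p + t • q) = t * dR p q := by simp [dR]; ring
    refine ⟨?_, ?_, ?_⟩
    · rw [e1]; positivity
    · rw [e2]; positivity
    · rw [e1, e2]; nlinarith

lemma volume_tri {p q : Fin 2 → ℝ} (h : 0 < dR p q) :
    volume (tri p q) = ENNReal.ofReal (dR p q / 2) := by
  let M : Matrix (Fin 2) (Fin 2) ℝ := !![p 0, q 0; p 1, q 1]
  have hM : ∀ x : Fin 2 → ℝ, Matrix.toLin' M x = x 0 • p + x 1 • q := by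
    intro x
    apply ext2 <;> simp [M, Matrix.mulVec, dotProduct, Fin.sum_univ_two, mul_comm]
  have : tri p q = Matrix.toLin' M '' tri0 := by
    ext x
    rw [mem_tri h]
    constructor
    · rintro ⟨s, t, hs, ht, hst, rfl⟩
      exact ⟨![s, t], ⟨hs, ht, hst⟩, by rw [hM]; rfl⟩
    · rintro ⟨y, ⟨h1, h2, h3⟩, rfl⟩
      exact ⟨y 0, y 1, h1, h2, h3, hM y⟩
  rw [this, Measure.addHaar_image_linearMap, LinearMap.det_toLin', volume_tri0,
    ← ENNReal.ofReal_mul (abs_nonneg _)]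
  congr 1
  have : M.det = dR p q := by simp [M, Matrix.det_fin_two, dR]; ring
  rw [this, abs_of_pos h]; ring

lemma line_null (a b : ℝ) (h : a ≠ 0 ∨ b ≠ 0) : ∀ᵐ x : Fin 2 → ℝ, a * x 0 + b * x 1 ≠ 0 := by
  let f : (Fin 2 → ℝ) →ₗ[ℝ] ℝ := a • LinearMap.proj 0 + b • LinearMap.proj 1
  have hf : ∀ x, f x = a * x 0 + b * x 1 := fun x => by simp [f]
  have : volume ((LinearMap.ker f : Submodule ℝ (Fin 2 → ℝ)) : Set (Fin 2 → ℝ)) = 0 := by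
    apply Measure.addHaar_submodule
    intro ht
    rw [LinearMap.ker_eq_top] at ht
    rcases h with h | h
    · have := hf ![1, 0]; rw [ht] at this; simp at this; exact h this.symm
    · have := hf ![0, 1]; rw [ht] at this; simp at this; exact h this.symm
  rw [ae_iff]
  convert this using 2
  ext x
  simp [hf]

lemma v2_sum {ι : Type*} (I : Finset ι) (K : Set (Fin 2 → ℝ)) (p q : ι → Fin 2 → ℝ)
    (hd : ∀ i ∈ I, 0 < dR (p i) (q i)) (hsub : ∀ i ∈ I, tri (p i) (q i) ⊆ K)
    (hdis : ∀ i ∈ I, ∀ j ∈ I, ∀ x, x ∈ tri (p i) (q i) → x ∈ tri (p j) (q j) → i = j)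
    (hcov : ∀ᵐ x, x ∈ K → ∃ i ∈ I, x ∈ tri (p i) (q i)) :
    v2 K = ∑ i ∈ I, dR (p i) (q i) := by
  have h1 : volume K = volume (⋃ i ∈ I, tri (p i) (q i)) := by
    apply measure_congr
    apply EventuallyEq.symm
    filter_upwards [hcov] with x hx
    apply propext
    constructor
    · intro hm
      obtain ⟨i, hi, hm⟩ := Set.mem_iUnion₂.1 hm
      exact hsub i hi hm
    · intro hm
      obtain ⟨i, hi, hm⟩ := hx hm
      exact Set.mem_iUnion₂.2 ⟨i, hi, hm⟩
  have h2 : volume K = ENNReal.ofReal (∑ i ∈ I, dR (p i) (q i) / 2) := by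
    rw [h1, measure_biUnion_finset, ENNReal.ofReal_sum_of_nonneg]
    · exact Finset.sum_congr rfl fun i hi => volume_tri (hd i hi)
    · intro i hi; exact (half_pos (hd i hi)).le
    · intro i hi j hj hij
      rw [Function.onFun, Set.disjoint_left]
      intro x hx hx'
      exact hij (hdis i hi j hj x hx hx')
    · intro i _; exact measurableSet_tri _ _
  unfold v2
  rw [h2, ENNReal.toReal_ofReal, ← Finset.sum_div]
  · ring
  · exact Finset.sum_nonneg fun i hi => (half_pos (hd i hi)).le

section
variable {V : Finset (Fin 2 → ℝ)} {Δ : Set (Fin 2 → ℝ)}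

lemma VPoly.ae_generic (h : VPoly V Δ) : ∀ᵐ x : Fin 2 → ℝ, ∀ v ∈ V, dR v x ≠ 0 := by
  rw [Filter.eventually_all_finset]
  intro v hv
  have := line_null (-v 1) (v 0) (by
    by_contra hc
    push Not at hc
    exact h.ne_zero hv (ext2 hc.2 (by simpa using hc.1)))
  filter_upwards [this] with x hx hc
  apply hx
  unfold dR at hc
  linarith

lemma VPoly.area (h : VPoly V Δ) : v2 Δ = ∑ e ∈ edges V, dR e.1 e.2 := by
  apply v2_sum
  · intro e he; exact (mem_edges.1 he).2.2.1
  · intro e he x hx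
    have he := mem_edges.1 he
    obtain ⟨s, t, hs, ht, hst, rfl⟩ := (mem_tri he.2.2.1 x).1 hx
    have h0 : (0 : Fin 2 → ℝ) ∈ Δ := interior_subset h.zero
    rw [h.hull] at *
    have := (convex_convexHull ℝ (V : Set (Fin 2 → ℝ))).sum_mem (t := Finset.univ)
      (w := ![1 - s - t, s, t]) (z := ![0, e.1, e.2]) ?_ ?_ ?_
    · simpa [Fin.sum_univ_three] using this
    · intro i _; fin_cases i <;> simp <;> linarith
    · simp [Fin.sum_univ_three]; ring
    · intro i _; fin_cases i
      · exact h0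
      · exact subset_convexHull _ _ he.1
      · exact subset_convexHull _ _ he.2.1
  · rintro ⟨u, w⟩ he ⟨u', w'⟩ he' x hx hx'
    obtain ⟨rfl, rfl⟩ := h.cone_unique (mem_edges.1 he) (mem_edges.1 he') hx.2.1 hx.1 hx'.2.1 hx'.1
    rfl
  · filter_upwards [h.ae_generic] with x hx hK
    obtain ⟨u, w, he, h1, h2⟩ := h.cone_exists x
    refine ⟨(u, w), mem_edges.2 he, ?_⟩
    have n1 := hx u he.1
    have n2 := hx w he.2.1
    rw [dR_swap] at n2
    refine ⟨lt_of_le_of_ne h2 fun h => n2 (by rw [← h, neg_zero]), lt_of_le_of_ne h1 n1.symm, ?_⟩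
    have := h.le_of (w 1 - u 1) (u 0 - w 0) (dR u w) (fun z hz => by
      have := he.2.2.2 z hz
      unfold dR at *; linarith) hK
    unfold dR at *; linarith

/-- the vertex of the dual polygon corresponding to an edge -/
def dv (u w : Fin 2 → ℝ) : Fin 2 → ℝ := ![(u 1 - w 1) / dR u w, (w 0 - u 0) / dR u w]

lemma iR_dv (u w z : Fin 2 → ℝ) : iR (dv u w) z = - (dR z w + dR u z) / dR u w := by
  simp [iR, dv, dR]; ring

lemma VPoly.mem_dual (h : VPoly V Δ) (y : Fin 2 → ℝ) :
    y ∈ polarDual Δ ↔ ∀ z ∈ V, -1 ≤ iR y z := by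
  unfold polarDual iR
  simp only [Fin.sum_univ_two, Set.mem_ofPred_eq]
  constructor
  · intro hy z hz; exact hy z (h.mem hz)
  · intro hy x hx
    have := h.le_of (-y 0) (-y 1) 1 (fun z hz => by linarith [hy z hz]) hx
    linarith

lemma Ed.dv_ge {u w z} (he : Ed V u w) (hz : z ∈ V) : -1 ≤ iR (dv u w) z := by
  rw [iR_dv, le_div_iff₀ he.2.2.1]
  linarith [he.2.2.2 z hz]

lemma Ed.dv_left {u w} (he : Ed V u w) : iR (dv u w) u = -1 := by
  rw [iR_dv, dR_self, div_eq_iff he.2.2.1.ne']; ring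

lemma Ed.dv_right {u w} (he : Ed V u w) : iR (dv u w) w = -1 := by
  rw [iR_dv, dR_self, div_eq_iff he.2.2.1.ne']; ring

lemma VPoly.dv_gt (h : VPoly V Δ) {u w z} (he : Ed V u w) (hz : z ∈ V) (h1 : z ≠ u) (h2 : z ≠ w) :
    -1 < iR (dv u w) z := by
  rw [iR_dv, lt_div_iff₀ he.2.2.1]
  linarith [h.strict he hz h1 h2]

lemma VPoly.nb_ne (h : VPoly V Δ) {t v w} (h1 : Ed V t v) (h2 : Ed V v w) : t ≠ w := by
  rintro rfl
  have a := h1.2.2.1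
  have b := h2.2.2.1
  rw [dR_swap] at b
  linarith

lemma dR_dv {t v w} (h1 : Ed V t v) (h2 : Ed V v w) :
    dR (dv t v) (dv v w) = (dR t v + dR v w - dR t w) / (dR t v * dR v w) := by
  have a := h1.2.2.1
  have b := h2.2.2.1
  simp only [dR, dv, Matrix.cons_val_zero, Matrix.cons_val_one] at *
  field_simp
  ring

lemma VPoly.dR_dv_pos (h : VPoly V Δ) {t v w} (h1 : Ed V t v) (h2 : Ed V v w) :
    0 < dR (dv t v) (dv v w) := by
  rw [dR_dv h1 h2]
  have a := h1.2.2.1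
  have b := h2.2.2.1
  have := h.strict h2 h1.1 h1.ne (h.nb_ne h1 h2)
  rw [dR_swap v t] at this
  apply div_pos (by linarith) (by positivity)

lemma iR_comb (s t : ℝ) (p q z : Fin 2 → ℝ) : iR (s • p + t • q) z = s * iR p z + t * iR q z := by
  simp [iR]; ring

/-- coordinates in a normal cone -/
lemma VPoly.normal (h : VPoly V Δ) {t v w} (h1 : Ed V t v) (h2 : Ed V v w) (y : Fin 2 → ℝ) :
    ∃ a b : ℝ, y = a • dv t v + b • dv v w ∧ iR y v = -(a + b) ∧
      (iR y v ≤ iR y w → 0 ≤ a) ∧ (iR y v ≤ iR y t → 0 ≤ b) ∧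
      (iR y v < iR y w → 0 < a) ∧ (iR y v < iR y t → 0 < b) := by
  refine ⟨_, _, expandR (h.dR_dv_pos h1 h2).ne' y, ?_⟩
  have ex := expandR (h.dR_dv_pos h1 h2).ne' y
  generalize dR y (dv v w) / dR (dv t v) (dv v w) = a at *
  generalize dR (dv t v) y / dR (dv t v) (dv v w) = b at *
  have g1 := h.dv_gt h1 h2.2.1 (h.nb_ne h1 h2).symm h2.ne.symm
  have g2 := h.dv_gt h2 h1.1 h1.ne (h.nb_ne h1 h2)
  rw [ex, iR_comb, iR_comb, iR_comb, h1.dv_right, h1.dv_left, h2.dv_left, h2.dv_right]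
  refine ⟨by ring, fun hh => ?_, fun hh => ?_, fun hh => ?_, fun hh => ?_⟩ <;> by_contra hc <;> nlinarith

/-- choice of the previous vertex -/
def inn (V : Finset (Fin 2 → ℝ)) (v : Fin 2 → ℝ) : Fin 2 → ℝ := Classical.epsilon fun w => Ed V w v
/-- choice of the next vertex -/
def out (V : Finset (Fin 2 → ℝ)) (v : Fin 2 → ℝ) : Fin 2 → ℝ := Classical.epsilon fun w => Ed V v w

lemma VPoly.inn_spec (h : VPoly V Δ) {v} (hv : v ∈ V) : Ed V (inn V v) v :=
  Classical.epsilon_spec (h.exists_in hv)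
lemma VPoly.out_spec (h : VPoly V Δ) {v} (hv : v ∈ V) : Ed V v (out V v) :=
  Classical.epsilon_spec (h.exists_out hv)

lemma VPoly.tri_dual (h : VPoly V Δ) {v} (hv : v ∈ V) (y : Fin 2 → ℝ) :
    y ∈ tri (dv (inn V v) v) (dv v (out V v)) ↔ (∀ z ∈ V, z ≠ v → iR y v < iR y z) ∧ -1 ≤ iR y v := by
  have h1 := h.inn_spec hv
  have h2 := h.out_spec hv
  rw [mem_tri (h.dR_dv_pos h1 h2)]
  constructor
  · rintro ⟨s, t, hs, ht, hst, rfl⟩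
    simp only [iR_comb, h1.dv_right, h2.dv_left]
    refine ⟨fun z hz hne => ?_, by linarith⟩
    have a1 := h1.dv_ge hz
    have a2 := h2.dv_ge hz
    by_cases hzi : z = inn V v
    · have := h.dv_gt h2 hz hne (by rw [hzi]; exact h.nb_ne h1 h2)
      nlinarith
    · have := h.dv_gt h1 hz hzi hne
      nlinarith
  · rintro ⟨hmin, hge⟩
    obtain ⟨a, b, he, hs, -, -, ha, hb⟩ := h.normal h1 h2 y
    exact ⟨a, b, ha (hmin _ h2.2.1 h2.ne.symm), hb (hmin _ h1.1 h1.ne), by linarith, he⟩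

lemma VPoly.ae_generic' (h : VPoly V Δ) :
    ∀ᵐ y : Fin 2 → ℝ, ∀ v ∈ V, ∀ z ∈ V, z ≠ v → iR y v ≠ iR y z := by
  rw [Filter.eventually_all_finset]
  intro v hv
  rw [Filter.eventually_all_finset]
  intro z hz
  by_cases hne : z = v
  · exact Eventually.of_forall fun _ h => absurd hne h
  have := line_null (v 0 - z 0) (v 1 - z 1) (by
    by_contra hc
    push Not at hc
    exact hne (ext2 (by linarith [hc.1]) (by linarith [hc.2])))
  filter_upwards [this] with y hy _ hc
  apply hy
  unfold iR at hc
  linarith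

lemma VPoly.area_dual (h : VPoly V Δ) :
    v2 (polarDual Δ) = ∑ v ∈ V, dR (dv (inn V v) v) (dv v (out V v)) := by
  apply v2_sum
  · intro v hv; exact h.dR_dv_pos (h.inn_spec hv) (h.out_spec hv)
  · intro v hv y hy
    rw [h.tri_dual hv] at hy
    rw [h.mem_dual]
    intro z hz
    by_cases hzv : z = v
    · rw [hzv]; exact hy.2
    · linarith [hy.1 z hz hzv]
  · intro v hv v' hv' y hy hy'
    rw [h.tri_dual hv] at hy
    rw [h.tri_dual hv'] at hy'
    by_contra hne
    linarith [hy.1 v' hv' (Ne.symm hne), hy'.1 v hv hne]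
  · filter_upwards [h.ae_generic'] with y hy hK
    obtain ⟨v, hv, hmin⟩ := Finset.exists_min_image V (fun z => iR y z) h.nonempty
    refine ⟨v, hv, ?_⟩
    rw [h.tri_dual hv]
    exact ⟨fun z hz hne => lt_of_le_of_ne (hmin z hz) (hy v hv z hz hne), (h.mem_dual y).1 hK v hv⟩

lemma VPoly.sum_out (h : VPoly V Δ) (f : (Fin 2 → ℝ) → (Fin 2 → ℝ) → ℝ) :
    ∑ v ∈ V, f v (out V v) = ∑ e ∈ edges V, f e.1 e.2 := by
  refine Finset.sum_bij' (fun v _ => (v, out V v)) (fun e _ => e.1) ?_ ?_ ?_ ?_ ?_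
  · intro v hv; exact mem_edges.2 (h.out_spec hv)
  · intro e he; exact (mem_edges.1 he).1
  · intro v _; rfl
  · intro e he
    have := mem_edges.1 he
    exact Prod.ext rfl (h.out_unique (h.out_spec this.1) this)
  · intro v _; rfl

lemma VPoly.sum_inn (h : VPoly V Δ) (f : (Fin 2 → ℝ) → (Fin 2 → ℝ) → ℝ) :
    ∑ v ∈ V, f (inn V v) v = ∑ e ∈ edges V, f e.1 e.2 := by
  refine Finset.sum_bij' (fun v _ => (inn V v, v)) (fun e _ => e.2) ?_ ?_ ?_ ?_ ?_
  · intro v hv; exact mem_edges.2 (h.inn_spec hv)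
  · intro e he; exact (mem_edges.1 he).2.1
  · intro v _; rfl
  · intro e he
    have := mem_edges.1 he
    exact Prod.ext (h.in_unique (h.inn_spec this.2.1) this) rfl
  · intro v _; rfl

/-- real version of the cone contribution -/
def gR (u w : Fin 2 → ℝ) : ℝ :=
  dR u w + 2 / dR u w - iR u w / dR u w * (1 / iR u u + 1 / iR w w)

lemma VPoly.total (h : VPoly V Δ) :
    v2 Δ + v2 (polarDual Δ) = ∑ e ∈ edges V, gR e.1 e.2 := by
  have e : ∀ v ∈ V, dR (dv (inn V v) v) (dv v (out V v)) =
      (1 / dR (inn V v) v - iR (inn V v) v / dR (inn V v) v * (1 / iR v v)) +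
      (1 / dR v (out V v) - iR v (out V v) / dR v (out V v) * (1 / iR v v)) := by
    intro v hv
    have h1 := h.inn_spec hv
    have h2 := h.out_spec hv
    have hn := h.normpos hv
    rw [dR_dv h1 h2]
    have a := h1.2.2.1
    have b := h2.2.2.1
    generalize inn V v = t at *
    generalize out V v = w at *
    have key : iR v v * dR t w = iR t v * dR v w + iR v w * dR t v := by unfold iR dR; ring
    field_simp
    linear_combination (-1 : ℝ) * key
  rw [h.area, h.area_dual, Finset.sum_congr rfl e, Finset.sum_add_distrib,
    h.sum_inn (fun u w => 1 / dR u w - iR u w / dR u w * (1 / iR w w)),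
    h.sum_out (fun u w => 1 / dR u w - iR u w / dR u w * (1 / iR u u)),
    ← Finset.sum_add_distrib, ← Finset.sum_add_distrib]
  apply Finset.sum_congr rfl
  intro e _
  unfold gR; ring

/-- the dual polygon is the hull of the dual vertices -/
lemma VPoly.dual_hull (h : VPoly V Δ) :
    polarDual Δ = convexHull ℝ ((fun e : (Fin 2 → ℝ) × (Fin 2 → ℝ) => dv e.1 e.2) '' (edges V : Set _)) := by
  apply Set.Subset.antisymm
  · set H := convexHull ℝ ((fun e : (Fin 2 → ℝ) × (Fin 2 → ℝ) => dv e.1 e.2) '' (edges V : Set _)) with hH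
    have hconv : Convex ℝ H := convex_convexHull _ _
    have key : ∀ y : Fin 2 → ℝ, y ≠ 0 → ∃ c : ℝ, 0 < c ∧ c • y ∈ H ∧ (y ∈ polarDual Δ → 1 ≤ c) := by
      intro y hy
      obtain ⟨v, hv, hmin⟩ := Finset.exists_min_image V (fun z => iR y z) h.nonempty
      have h1 := h.inn_spec hv
      have h2 := h.out_spec hv
      obtain ⟨a, b, he, hs, ha, hb, -, -⟩ := h.normal h1 h2 y
      have ha := ha (hmin _ h2.2.1)
      have hb := hb (hmin _ h1.1)
      have hab : 0 < a + b := by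
        by_contra hc
        have ha0 : a = 0 := by linarith
        have hb0 : b = 0 := by linarith
        rw [ha0, hb0] at he
        exact hy (by simpa using he)
      refine ⟨1 / (a + b), by positivity, ?_, ?_⟩
      · have m1 : dv (inn V v) v ∈ H := subset_convexHull _ _ ⟨(inn V v, v), mem_edges.2 h1, rfl⟩
        have m2 : dv v (out V v) ∈ H := subset_convexHull _ _ ⟨(v, out V v), mem_edges.2 h2, rfl⟩
        have := hconv m1 m2 (div_nonneg ha hab.le) (div_nonneg hb hab.le) (by field_simp)
        convert this using 1
        rw [he, smul_add, smul_smul, smul_smul]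
        congr 2 <;> ring
      · intro hm
        have := (h.mem_dual y).1 hm v hv
        rw [le_div_iff₀ hab]
        linarith
    have h0 : (0 : Fin 2 → ℝ) ∈ H := by
      have hne : (![1, 0] : Fin 2 → ℝ) ≠ 0 := fun hc => by simpa using congrFun hc 0
      obtain ⟨c, hc, hm, -⟩ := key _ hne
      obtain ⟨c', hc', hm', -⟩ := key _ (neg_ne_zero.2 hne)
      have := hconv hm hm' (show 0 ≤ c' / (c + c') by positivity) (show 0 ≤ c / (c + c') by positivity)
        (by field_simp; ring)
      convert this using 1
      rw [smul_smul, smul_smul, smul_neg, ← sub_eq_add_neg, ← sub_smul]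
      rw [show c' / (c + c') * c - c / (c + c') * c' = 0 by ring, zero_smul]
    intro y hy
    by_cases hy0 : y = 0
    · rw [hy0]; exact h0
    · obtain ⟨c, hc, hm, h1⟩ := key y hy0
      have h1 := h1 hy
      have := hconv hm h0 (show 0 ≤ 1 / c by positivity) (show 0 ≤ 1 - 1 / c by
        rw [sub_nonneg, div_le_one hc]; exact h1) (by ring)
      convert this using 1
      rw [smul_zero, add_zero, smul_smul, one_div, inv_mul_cancel₀ hc.ne', one_smul]
  · apply convexHull_min
    · rintro _ ⟨e, he, rfl⟩
      rw [h.mem_dual]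
      intro z hz
      exact (mem_edges.1 he).dv_ge hz
    · intro x hx y hy a b ha hb hab
      rw [h.mem_dual] at *
      intro z hz
      rw [iR_comb]
      nlinarith [hx z hz, hy z hz]

/-- a vertex of the dual polygon must be among any generators -/
lemma VPoly.dv_mem (h : VPoly V Δ) {S : Set (Fin 2 → ℝ)} (hS : polarDual Δ = convexHull ℝ S)
    {u w} (he : Ed V u w) : dv u w ∈ S := by
  have hmem : dv u w ∈ polarDual Δ := (h.mem_dual _).2 fun z hz => he.dv_ge hz
  have hext : dv u w ∈ Set.extremePoints ℝ (polarDual Δ) := by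
    refine ⟨hmem, ?_⟩
    rintro x hx y hy ⟨a, b, ha, hb, hab, hxy⟩
    rw [h.mem_dual] at hx hy
    have e1 := he.dv_left
    have e2 := he.dv_right
    rw [← hxy, iR_comb] at e1 e2
    have x1 : iR x u = -1 := by nlinarith [hx u he.1, hy u he.1]
    have x2 : iR x w = -1 := by nlinarith [hx w he.2.1, hy w he.2.1]
    have d := he.2.2.1
    apply ext2
    · simp only [dv, Matrix.cons_val_zero]
      rw [eq_div_iff d.ne']
      unfold iR at x1 x2; unfold dR
      linear_combination w 1 * x1 - u 1 * x2
    · show x 1 = (w 0 - u 0) / dR u w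
      rw [eq_div_iff d.ne']
      unfold iR at x1 x2; unfold dR
      linear_combination u 0 * x2 - w 0 * x1
  rw [hS] at hext
  exact extremePoints_convexHull_subset hext

end

/-! ### Final assembly -/

lemma exists_VPoly {Δ : Set (Fin 2 → ℝ)} (hΔ : IsLDP Δ) : ∃ V : Finset (Fin 2 → ℝ), VPoly V Δ := by
  obtain ⟨⟨W, hW⟩, -, h0, -⟩ := hΔ
  have hfin : (coeLat '' (W : Set (Fin 2 → ℤ))).Finite := W.finite_toSet.image _
  have hsub : Set.extremePoints ℝ Δ ⊆ coeLat '' (W : Set (Fin 2 → ℤ)) := by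
    rw [hW]; exact extremePoints_convexHull_subset
  have hE : (Set.extremePoints ℝ Δ).Finite := hfin.subset hsub
  have hcomp : IsCompact Δ := by rw [hW]; exact hfin.isCompact_convexHull ℝ
  have hconv : Convex ℝ Δ := by rw [hW]; exact convex_convexHull _ _
  refine ⟨hE.toFinset, ?_, ?_, h0⟩
  · rw [Set.Finite.coe_toFinset]
    have h1 := closure_convexHull_extremePoints hcomp hconv
    rw [(hE.isCompact_convexHull ℝ).isClosed.closure_eq] at h1
    exact h1.symm
  · intro v hv; exact hE.mem_toFinset.1 hv

/-- coordinatewise floor -/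
def flo (x : Fin 2 → ℝ) : Fin 2 → ℤ := fun i => ⌊x i⌋

lemma flo_coe (n : Fin 2 → ℤ) : flo (coeLat n) = n := by
  funext i; simp [flo, coeLat]

lemma dR_coe (m n : Fin 2 → ℤ) : dR (coeLat m) (coeLat n) = (dZ m n : ℝ) := by
  simp [dR, dZ, coeLat]

lemma iR_coe (m n : Fin 2 → ℤ) : iR (coeLat m) (coeLat n) = (iZ m n : ℝ) := by
  simp [iR, iZ, coeLat]

lemma GorZ_iff {m n : Fin 2 → ℤ} (h : 0 < dZ m n) :
    GorZ m n ↔ ∃ k : Fin 2 → ℤ, coeLat k = dv (coeLat m) (coeLat n) := by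
  have hR : (dZ m n : ℝ) ≠ 0 := by exact_mod_cast h.ne'
  constructor
  · intro hG
    obtain ⟨k0, hk0⟩ := hG 0
    obtain ⟨k1, hk1⟩ := hG 1
    have hk0' : (n 0 - m 0 : ℝ) = dZ m n * k0 := by exact_mod_cast hk0
    have hk1' : (n 1 - m 1 : ℝ) = dZ m n * k1 := by exact_mod_cast hk1
    refine ⟨![-k1, k0], ?_⟩
    apply ext2
    · show ((-k1 : ℤ) : ℝ) = ((m 1 : ℝ) - (n 1 : ℝ)) / dR (coeLat m) (coeLat n)
      rw [dR_coe, eq_div_iff hR]; push_cast; linarith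
    · show (k0 : ℝ) = ((n 0 : ℝ) - (m 0 : ℝ)) / dR (coeLat m) (coeLat n)
      rw [dR_coe, eq_div_iff hR]; linarith
  · rintro ⟨k, hk⟩
    have h0 : (k 0 : ℝ) = ((m 1 : ℝ) - (n 1 : ℝ)) / dR (coeLat m) (coeLat n) := congrFun hk 0
    have h1 : (k 1 : ℝ) = ((n 0 : ℝ) - (m 0 : ℝ)) / dR (coeLat m) (coeLat n) := congrFun hk 1
    rw [dR_coe, eq_div_iff hR] at h0 h1
    have h0' : k 0 * dZ m n = m 1 - n 1 := by exact_mod_cast h0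
    have h1' : k 1 * dZ m n = n 0 - m 0 := by exact_mod_cast h1
    intro i
    fin_cases i
    · refine ⟨k 1, ?_⟩
      show n 0 - m 0 = _
      linarith
    · refine ⟨- k 0, ?_⟩
      show n 1 - m 1 = _
      linarith

theorem LDP_twelve_ineq (Δ : Set (Fin 2 → ℝ)) (hΔ : IsLDP Δ) :
    12 ≤ v2 Δ + v2 (polarDual Δ) ∧
      (v2 Δ + v2 (polarDual Δ) = 12 ↔ IsReflexive Δ) := by
  obtain ⟨V, hV⟩ := exists_VPoly hΔ
  have hprim : ∀ v ∈ V, coeLat (flo v) = v ∧ IsCoprime (flo v 0) (flo v 1) := by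
    intro v hv
    obtain ⟨n, rfl, hn⟩ := hΔ.2.2.2 v (hV.ext v hv)
    rw [flo_coe]
    exact ⟨rfl, Int.isCoprime_iff_gcd_eq_one.2 hn⟩
  have hc : ∀ v ∈ V, coeLat (flo v) = v := fun v hv => (hprim v hv).1
  have hdd : ∀ v ∈ V, ∀ m : Fin 2 → ℤ, dR v (coeLat m) = (dZ (flo v) m : ℝ) := by
    intro v hv m
    rw [← dR_coe, hc v hv]
  have hdd' : ∀ v ∈ V, ∀ m : Fin 2 → ℤ, dR (coeLat m) v = (dZ m (flo v) : ℝ) := by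
    intro v hv m
    rw [← dR_coe, hc v hv]
  have hd : ∀ e ∈ edges V, 0 < dZ (flo e.1) (flo e.2) := by
    intro e he
    have he := mem_edges.1 he
    have h1 := he.2.2.1
    rw [← hc _ he.1, ← hc _ he.2.1, dR_coe] at h1
    exact_mod_cast h1
  have main := arith_main (edges V) (fun e => flo e.1) (fun e => flo e.2)
    (fun e he => (hprim _ (mem_edges.1 he).1).2) (fun e he => (hprim _ (mem_edges.1 he).2.1).2)
    hd (by
      intro m hm
      obtain ⟨u, w, he, h1, h2⟩ := hV.cone_exists (coeLat m)
      have hne := hm (u, w) (mem_edges.2 he)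
      rw [hdd u he.1] at h1
      rw [hdd' w he.2.1] at h2
      have h1 : 0 ≤ dZ (flo u) m := by exact_mod_cast h1
      have h2 : 0 ≤ dZ m (flo w) := by exact_mod_cast h2
      have sw : dZ m (flo w) = - dZ (flo w) m := by unfold dZ; ring
      refine ⟨(u, w), ⟨mem_edges.2 he, lt_of_le_of_ne h1 (Ne.symm hne.1),
        lt_of_le_of_ne h2 ?_⟩, ?_⟩
      · intro h0
        apply hne.2
        show dZ (flo w) m = 0
        have h0 : 0 = dZ m (flo w) := h0
        linarith
      · rintro ⟨u', w'⟩ ⟨he', h1', h2'⟩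
        have he' : Ed V u' w' := mem_edges.1 he'
        have k1 : 0 < dZ (flo u) m := lt_of_le_of_ne h1 (Ne.symm hne.1)
        have k2 : 0 < dZ m (flo w) := by
          refine lt_of_le_of_ne h2 ?_
          intro h0
          apply hne.2
          show dZ (flo w) m = 0
          linarith
        have h1' : 0 < dZ (flo u') m := h1'
        have h2' : 0 < dZ m (flo w') := h2'
        obtain ⟨r1, r2⟩ := hV.cone_unique (x := coeLat m) he' he
          (by rw [hdd _ he'.1]; exact_mod_cast h1') (by rw [hdd' _ he'.2.1]; exact_mod_cast h2')
          (by rw [hdd _ he.1]; exact_mod_cast k1) (by rw [hdd' _ he.2.1]; exact_mod_cast k2)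
        rw [r1, r2])
  have hsum : v2 Δ + v2 (polarDual Δ) = ∑ e ∈ edges V, gZ (flo e.1) (flo e.2) := by
    rw [hV.total]
    refine Finset.sum_congr rfl fun e he => ?_
    have he := mem_edges.1 he
    unfold gZ
    rw [← dR_coe, ← iR_coe, ← iR_coe, ← iR_coe, hc _ he.1, hc _ he.2.1]
    rfl
  have hG : ∀ e ∈ edges V, (GorZ (flo e.1) (flo e.2) ↔ ∃ k, coeLat k = dv e.1 e.2) := by
    intro e he
    have he' := mem_edges.1 he
    rw [GorZ_iff (hd e he), hc _ he'.1, hc _ he'.2.1]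
  have hR : IsReflexive Δ ↔ ∀ e ∈ edges V, GorZ (flo e.1) (flo e.2) := by
    constructor
    · rintro ⟨-, -, W, hW⟩ e he
      rw [hG e he]
      obtain ⟨k, -, hk⟩ := hV.dv_mem hW (mem_edges.1 he)
      exact ⟨k, hk⟩
    · intro h
      refine ⟨hΔ.1, hΔ.2.2.1, (edges V).image (fun e => flo (dv e.1 e.2)), ?_⟩
      rw [hV.dual_hull, Finset.coe_image, Set.image_image]
      congr 1
      refine Set.image_congr fun e he => ?_
      obtain ⟨k, hk⟩ := (hG e he).1 (h e he)
      rw [← hk, flo_coe]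
  rw [hsum, hR]
  exact main

end
end
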